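/- Let F be a totally real number field and D a quaternion algebra over F which is a division ring and is totally indefinite, i.e. for every real embedding σ : F → ℝ the ℝ-algebra D ⊗_{F,σ} ℝ is isomorphic to the algebra of 2×2 real matrices. Let * be a positive involution of D (as a ℚ-algebra) fixing F pointwise. Then for any nonzero finite-dimensional right D-module V and any two positive definite (D,*)-Hermitian forms ψ₁, ψ₂ on V, the forms ψ₁^⊕4 and ψ₂^⊕4 are isometric. (This is the Albert type II case of the fourth-power Hermitian form theorem.) -/

import Mathlib

/-!
Choosing an orthogonal basis for a positive definite form `ψ` (Gram–Schmidt) reduces the theorem to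
rank one: if `d = ψ(v, v)`, the form `⟨d, d, d, d⟩` should be isometric to `⟨1, 1, 1, 1⟩`. Then both
`ψ₁^⊕4` and `ψ₂^⊕4` are isometric to the standard form `∑ x* y` in `4 dim V` variables.

The element `d` is symmetric and generates a field `K = ℚ(d)` of symmetric elements of `D`. Positivity
of the involution and of `x ↦ x* d x`, restricted to `K`, says that the forms `Tr(μz²)` and
`Tr(μθz²)` on `K` are positive definite for some `μ`, where `θ` corresponds to `d`. By weak
approximation at the archimedean places, `K` is then totally real and `θ` totally positive
(`exists_real_and_pos_of_trace`). By the four-square theorem in number fields (`isFourSq_of_pos`),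
`θ = a² + b² + c² + e²` in `K`, and left multiplication by the quaternion with coordinates
`a, b, c, e` gives a matrix `M` with symmetric commuting entries and `Mᵀ M = d`. The argument thus
only uses that `D` is a finite-dimensional division algebra with positive involution.

The four-square theorem (Hilbert, Siegel) is proved without local-global theorems for quadratic
forms. Working in the semilocal principal ideal domain obtained from the ring of integers by inverting
everything prime to `2`, and using the form `x² + xy + y² + 2z²`, whose values are sums of four
squares, one finds a nonzero sum of four squares `n` with `dn = 1 + 4a` and `a` integral
(`fourSqMod_of_ne_zero`). For `c = 1 + 4a` totally positive, `c` is a sum of three squares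
(`three_squares`): apart from trivial cases, `L = K(√-c)` is totally complex, and `E = L(i) = L(√c)` is
unramified over `L` at all primes, as `c` is a square modulo `4`. If `-1` is a norm from `E` to `L`,
then `-1` is a sum of two squares in `L = K(√-c)`, and comparing coordinates writes `c` as a sum of three
squares in `K`.

That `-1` is a norm in an unramified quadratic extension `E / L` of totally complex fields
(`neg_one_isNorm`) combines two inequalities for the index `h` of the group of norms of ideal classes
in the class group of `L`.

* Counting ambiguous classes, with Hilbert 90 and a Herbrand quotient estimate for the units of `E`,
  gives `2 [U_L : U_L ∩ N E^×] ≤ h` (`two_mul_relIndex_le`).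
* Analytically `h ≤ 2` (`index_range_norm_le`). If not, there are two distinct nontrivial quadratic
  characters of the class group trivial on norms, and Euler products show
  `ζ_E² ≤ ζ_L L(χ₁) L(χ₂) L(χ₁ χ₂)` on `s > 1`. The `L`-functions of nontrivial class group characters
  are bounded near `1` (`exists_char_bound`), which contradicts the pole of `ζ_E`.

Hence `[U_L : U_L ∩ N E^×] = 1`, and in particular `-1` is a norm.

The boundedness of the `L`-functions follows once the partial zeta functions of all ideal classes agree
up to bounded functions near `1`. Each is rewritten as a sum over an ideal `J` of a Lipschitz weight
(`weight`) whose translates under the units sum to a constant. The weight, times `|N x| ^ (-s)`, varies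
slowly, so that sums over `J` and over its cosets differ by a bounded amount (`exists_compare`).
-/


open MulOpposite TensorProduct

/-- The trace of left multiplication by `x` on the finite-dimensional `ℚ`-algebra `A`. -/
noncomputable def algTraceQ (A : Type*) [Ring A] [Algebra ℚ A] (x : A) : ℚ :=
  LinearMap.trace ℚ A (LinearMap.mulLeft ℚ x)

/-- `st` is an involution of the `ℚ`-algebra `D`. -/
def IsInvolutionQ (D : Type*) [Ring D] [Algebra ℚ D] (st : D → D) : Prop :=
  (∀ x y : D, st (x + y) = st x + st y) ∧
  (∀ x y : D, st (x * y) = st y * st x) ∧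
  (∀ x : D, st (st x) = x) ∧
  (∀ r : ℚ, st (algebraMap ℚ D r) = algebraMap ℚ D r)

/-- `st` is a positive involution of the `ℚ`-algebra `D`. -/
def IsPositiveInvolutionQ (D : Type*) [Ring D] [Algebra ℚ D] (st : D → D) : Prop :=
  IsInvolutionQ D st ∧ ∀ d : D, d ≠ 0 → 0 < algTraceQ D (st d * d)

/-- `ψ` is a `(D,*)`-Hermitian form on the right `D`-module `V`. -/
def IsHermitianForm (D : Type*) [Ring D] [Algebra ℚ D] (V : Type*) [AddCommGroup V]
    [Module Dᵐᵒᵖ V] (st : D → D) (ψ : V → V → D) : Prop :=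
  (∀ v v' w : V, ψ (v + v') w = ψ v w + ψ v' w) ∧
  (∀ v w w' : V, ψ v (w + w') = ψ v w + ψ v w') ∧
  (∀ (a : D) (v w : V), ψ (op a • v) w = st a * ψ v w) ∧
  (∀ (b : D) (v w : V), ψ v (op b • w) = ψ v w * b) ∧
  (∀ v w : V, ψ w v = st (ψ v w))

/-- `ψ` is a positive definite `(D,*)`-Hermitian form on the right `D`-module `V`. -/
def IsPosDefHermitianForm (D : Type*) [Ring D] [Algebra ℚ D] (V : Type*) [AddCommGroup V]
    [Module Dᵐᵒᵖ V] (st : D → D) (ψ : V → V → D) : Prop :=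
  IsHermitianForm D V st ψ ∧ ∀ v : V, v ≠ 0 → 0 < algTraceQ D (ψ v v)

/-! ### Partitions of unity by tent functions -/

namespace FourthPower

/-- The tent function `t ↦ max (0, 1 - |t|)`; its integer translates sum to `1`. -/
noncomputable def hat (t : ℝ) : ℝ := max 0 (1 - |t|)

lemma hat_nonneg (t : ℝ) : 0 ≤ hat t := le_max_left _ _

lemma hat_le_one (t : ℝ) : hat t ≤ 1 := by
  unfold hat
  have := abs_nonneg t
  exact max_le (by norm_num) (by linarith)

lemma abs_hat_sub_le (s t : ℝ) : |hat s - hat t| ≤ |s - t| := by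
  unfold hat
  calc |max 0 (1 - |s|) - max 0 (1 - |t|)| ≤ max |0 - 0| |(1 - |s|) - (1 - |t|)| :=
        abs_max_sub_max_le_max _ _ _ _
    _ ≤ |s - t| := by
        rw [sub_self, abs_zero, max_eq_right (abs_nonneg _)]
        rw [show (1 - |s|) - (1 - |t|) = |t| - |s| by ring, abs_sub_comm s t]
        exact abs_abs_sub_abs_le_abs_sub _ _

lemma abs_le_one_of_hat_ne_zero {t : ℝ} (h : hat t ≠ 0) : |t| ≤ 1 := by
  by_contra! h'
  exact h (max_eq_left (by linarith))

lemma hat_int_eq_zero (t : ℝ) (k : ℤ) (hk : k ∉ ({-⌊t⌋, -⌊t⌋ - 1} : Finset ℤ)) :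
    hat (k + t) = 0 := by
  by_contra h
  have h1 := abs_le_one_of_hat_ne_zero h
  have h3 : |(k : ℝ) + t| < 1 := by
    by_contra! h4
    exact h (max_eq_left (by linarith))
  rw [abs_lt] at h3
  have hf := Int.floor_le t
  have hf2 := Int.lt_floor_add_one t
  have a : (-2 : ℝ) < k + ⌊t⌋ := by linarith
  have b : (k : ℝ) + ⌊t⌋ < 1 := by linarith
  have a' : -2 < k + ⌊t⌋ := by exact_mod_cast a
  have b' : k + ⌊t⌋ < 1 := by exact_mod_cast b
  simp only [Finset.mem_insert, Finset.mem_singleton, not_or] at hk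
  omega

lemma sum_hat (t : ℝ) : ∑ k ∈ ({-⌊t⌋, -⌊t⌋ - 1} : Finset ℤ), hat (k + t) = 1 := by
  rw [Finset.sum_pair (by omega)]
  have hf := Int.floor_le t
  have hf2 := Int.lt_floor_add_one t
  unfold hat
  push_cast
  rw [abs_of_nonneg (by linarith : (0 : ℝ) ≤ -⌊t⌋ + t),
    abs_of_nonpos (by linarith : -(⌊t⌋ : ℝ) - 1 + t ≤ 0), max_eq_right (by linarith),
    max_eq_right (by linarith)]
  ring

/-- The integer translates of the product of tent functions form a partition of unity. -/
lemma hasSum_prod_hat {r : ℕ} (t : Fin r → ℝ) :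
    HasSum (fun k : Fin r → ℤ ↦ ∏ i, hat (k i + t i)) 1 := by
  classical
  have h := Finset.prod_univ_sum (fun i : Fin r ↦ ({-⌊t i⌋, -⌊t i⌋ - 1} : Finset ℤ))
    (fun i k ↦ hat (k + t i))
  simp only [sum_hat, Finset.prod_const_one] at h
  rw [h]
  apply hasSum_sum_of_ne_finset_zero
  intro k hk
  rw [Fintype.mem_piFinset] at hk
  push Not at hk
  obtain ⟨i, hi⟩ := hk
  exact Finset.prod_eq_zero (Finset.mem_univ i) (hat_int_eq_zero _ _ hi)

lemma abs_prod_sub_prod_le {ι : Type*} (s : Finset ι) (f g : ι → ℝ)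
    (hf : ∀ i, 0 ≤ f i ∧ f i ≤ 1) (hg : ∀ i, 0 ≤ g i ∧ g i ≤ 1) :
    |∏ i ∈ s, f i - ∏ i ∈ s, g i| ≤ ∑ i ∈ s, |f i - g i| := by
  classical
  induction s using Finset.induction_on with
  | empty => simp
  | insert a s ha ih =>
    rw [Finset.prod_insert ha, Finset.prod_insert ha, Finset.sum_insert ha]
    have h1 : |∏ i ∈ s, g i| ≤ 1 := by
      rw [abs_of_nonneg (Finset.prod_nonneg fun i _ ↦ (hg i).1)]
      exact Finset.prod_le_one (fun i _ ↦ (hg i).1) (fun i _ ↦ (hg i).2)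
    have h2 : |f a| ≤ 1 := by rw [abs_of_nonneg (hf a).1]; exact (hf a).2
    calc |f a * ∏ i ∈ s, f i - g a * ∏ i ∈ s, g i|
        = |(f a - g a) * ∏ i ∈ s, g i + f a * (∏ i ∈ s, f i - ∏ i ∈ s, g i)| := by ring_nf
      _ ≤ |f a - g a| * |∏ i ∈ s, g i| + |f a| * |∏ i ∈ s, f i - ∏ i ∈ s, g i| := by
          rw [← abs_mul, ← abs_mul]; exact abs_add_le _ _
      _ ≤ |f a - g a| * 1 + 1 * |∏ i ∈ s, f i - ∏ i ∈ s, g i| := by gcongr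
      _ ≤ _ := by linarith

end FourthPower

/-! ### A weight on the mixed space, equivariant under units -/

namespace FourthPower

open NumberField NumberField.mixedEmbedding NumberField.InfinitePlace NumberField.Units
  NumberField.Units.dirichletUnitTheorem Module
open scoped Classical

section Weight

variable (K : Type*) [Field K] [NumberField K]

/-- The basis of the logarithmic space given by a basis of the unit lattice. -/
noncomputable def logBasis : Basis (Fin (rank K)) ℝ (logSpace K) :=
  (basisUnitLattice K).ofZLatticeBasis ℝ (unitLattice K)

variable {K}

/-- A weight on the mixed space, invariant under scaling by nonzero reals, whose translates under
the unit group sum to the order of the group of roots of unity. It is a continuous substitute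
for the indicator function of the fundamental cone. -/
noncomputable def weight (y : mixedSpace K) : ℝ :=
  ∏ i, hat ((logBasis K).repr (logMap y) i)

/-- The smoothed summand `weight(y) * |N y| ^ (-s)`. It vanishes at points of norm `0` when
`s ≠ 0`, because `0 ^ (-s) = 0`. -/
noncomputable def wf (s : ℝ) (y : mixedSpace K) : ℝ :=
  weight y * mixedEmbedding.norm y ^ (-s)

lemma weight_nonneg (y : mixedSpace K) : 0 ≤ weight y :=
  Finset.prod_nonneg fun _ _ ↦ hat_nonneg _

lemma weight_le_one (y : mixedSpace K) : weight y ≤ 1 :=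
  Finset.prod_le_one (fun _ _ ↦ hat_nonneg _) fun _ _ ↦ hat_le_one _

lemma wf_nonneg (s : ℝ) (y : mixedSpace K) : 0 ≤ wf s y :=
  mul_nonneg (weight_nonneg y) (Real.rpow_nonneg (mixedEmbedding.norm_nonneg y) _)

lemma wf_eq_zero_of_norm {s : ℝ} (hs : s ≠ 0) {y : mixedSpace K}
    (hy : mixedEmbedding.norm y = 0) : wf s y = 0 := by
  rw [wf, hy, Real.zero_rpow (neg_ne_zero.mpr hs), mul_zero]

variable (K) in
lemma exists_repr_le : ∃ A : ℝ, 0 < A ∧ ∀ (v : logSpace K) (i : Fin (rank K)),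
    |(logBasis K).repr v i| ≤ A * ‖v‖ := by
  let e := (logBasis K).equivFunL
  refine ⟨‖(e : logSpace K →L[ℝ] (Fin (rank K) → ℝ))‖ + 1, by positivity, fun v i ↦ ?_⟩
  have h1 : |(logBasis K).repr v i| ≤ ‖e v‖ := norm_le_pi_norm (e v) i
  have h2 : ‖e v‖ ≤ ‖(e : logSpace K →L[ℝ] (Fin (rank K) → ℝ))‖ * ‖v‖ :=
    (e : logSpace K →L[ℝ] (Fin (rank K) → ℝ)).le_opNorm v
  nlinarith [norm_nonneg v]

variable (K) in
lemma exists_le_of_repr_le : ∃ A : ℝ, 0 < A ∧ ∀ (v : logSpace K),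
    (∀ i, |(logBasis K).repr v i| ≤ 1) → ‖v‖ ≤ A := by
  let e := (logBasis K).equivFunL
  refine ⟨‖(e.symm : (Fin (rank K) → ℝ) →L[ℝ] logSpace K)‖ + 1, by positivity, fun v hv ↦ ?_⟩
  have h1 : ‖e v‖ ≤ 1 := (pi_norm_le_iff_of_nonneg zero_le_one).mpr hv
  have h2 : ‖e.symm (e v)‖ ≤ ‖(e.symm : (Fin (rank K) → ℝ) →L[ℝ] logSpace K)‖ * ‖e v‖ :=
    (e.symm : (Fin (rank K) → ℝ) →L[ℝ] logSpace K).le_opNorm _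
  rw [e.symm_apply_apply] at h2
  nlinarith [norm_nonneg (e.symm : (Fin (rank K) → ℝ) →L[ℝ] logSpace K)]

lemma log_norm_eq {y : mixedSpace K} (hy : mixedEmbedding.norm y ≠ 0) :
    Real.log (mixedEmbedding.norm y) = ∑ w, (mult w : ℝ) * Real.log (normAtPlace w y) := by
  rw [mixedEmbedding.norm_apply, Real.log_prod]
  · simp [Real.log_pow]
  · intro w _
    exact pow_ne_zero _ (mixedEmbedding.norm_ne_zero_iff.mp hy w)

lemma normAtPlace_le_norm (w : InfinitePlace K) (y : mixedSpace K) : normAtPlace w y ≤ ‖y‖ := by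

  rw [norm_eq_sup'_normAtPlace]
  exact Finset.le_sup' (fun w ↦ normAtPlace w y) (Finset.mem_univ w)

lemma exists_norm_eq (y : mixedSpace K) : ∃ w : InfinitePlace K, ‖y‖ = normAtPlace w y := by
  rw [norm_eq_sup'_normAtPlace]
  obtain ⟨w, -, hw⟩ := Finset.exists_mem_eq_sup' (Finset.univ_nonempty (α := InfinitePlace K))
    fun w ↦ normAtPlace w y
  exact ⟨w, hw⟩

omit [NumberField K] in
lemma one_le_mult (w : InfinitePlace K) : (1 : ℝ) ≤ mult w := by
  exact_mod_cast Nat.one_le_iff_ne_zero.mpr mult_ne_zero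

variable (K) in
/-- On the support of the weight all absolute values of a point are comparable to its norm. -/
lemma exists_cone_bound : ∃ c : ℝ, 0 < c ∧ c ≤ 1 ∧ ∀ y : mixedSpace K,
    mixedEmbedding.norm y ≠ 0 → weight y ≠ 0 → ∀ w, c * ‖y‖ ≤ normAtPlace w y := by

  obtain ⟨A, hA, h⟩ := exists_le_of_repr_le K
  set m : ℝ := (Fintype.card (InfinitePlace K) : ℝ)
  have hm : 0 ≤ m := Nat.cast_nonneg _
  set A' : ℝ := A + m * A with hA'
  have hA'0 : 0 ≤ A' := by positivity
  refine ⟨Real.exp (-(2 * A')), Real.exp_pos _, by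
    rw [Real.exp_le_one_iff]; linarith, fun y hy hw w ↦ ?_⟩
  have hv : ‖logMap y‖ ≤ A := h _ fun i ↦ abs_le_one_of_hat_ne_zero fun hi ↦
    hw (Finset.prod_eq_zero (Finset.mem_univ i) hi)
  set lam := Real.log (mixedEmbedding.norm y) * (finrank ℚ K : ℝ)⁻¹ with hlam
  have hn : (finrank ℚ K : ℝ) ≠ 0 := by exact_mod_cast (finrank_pos (R := ℚ) (M := K)).ne'
  have h1 : ∀ w : {w : InfinitePlace K // w ≠ w₀},
      |(mult w.val : ℝ) * (Real.log (normAtPlace w.val y) - lam)| ≤ A := fun w ↦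
    (norm_le_pi_norm (logMap y) w).trans hv
  have hsum : ∑ w : InfinitePlace K, (mult w : ℝ) * (Real.log (normAtPlace w y) - lam) = 0 := by
    simp_rw [mul_sub]
    rw [Finset.sum_sub_distrib, ← log_norm_eq hy, ← Finset.sum_mul]
    have : (∑ w : InfinitePlace K, (mult w : ℝ)) = finrank ℚ K := by
      exact_mod_cast sum_mult_eq (K := K)
    rw [this, hlam]
    field_simp
    ring
  have h2 : ∀ w : InfinitePlace K,
      |(mult w : ℝ) * (Real.log (normAtPlace w y) - lam)| ≤ A' := by
    intro w
    by_cases hw0 : w = w₀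
    · subst hw0
      rw [← Finset.add_sum_erase _ _ (Finset.mem_univ w₀)] at hsum
      rw [eq_neg_of_add_eq_zero_left hsum, abs_neg]
      calc _ ≤ ∑ w ∈ Finset.univ.erase (w₀ : InfinitePlace K),
            |(mult w : ℝ) * (Real.log (normAtPlace w y) - lam)| := Finset.abs_sum_le_sum_abs _ _
        _ ≤ ∑ w ∈ Finset.univ.erase (w₀ : InfinitePlace K), A :=
            Finset.sum_le_sum fun w hw ↦ h1 ⟨w, Finset.ne_of_mem_erase hw⟩
        _ ≤ ∑ w : InfinitePlace K, A :=
            Finset.sum_le_sum_of_subset_of_nonneg (Finset.erase_subset _ _) fun _ _ _ ↦ hA.le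
        _ = m * A := by simp [m]
        _ ≤ A' := by linarith
    · exact (h1 ⟨w, hw0⟩).trans (by rw [hA']; nlinarith)
  have h3 : ∀ w : InfinitePlace K, |Real.log (normAtPlace w y) - lam| ≤ A' := by
    intro w
    refine le_trans ?_ (h2 w)
    rw [abs_mul, abs_of_nonneg (zero_le_one.trans (one_le_mult w))]
    nlinarith [one_le_mult w, abs_nonneg (Real.log (normAtPlace w y) - lam)]
  obtain ⟨v, hvn⟩ := exists_norm_eq y
  have hpos : ∀ w, 0 < normAtPlace w y := fun w ↦
    lt_of_le_of_ne (normAtPlace_nonneg _ _) (mixedEmbedding.norm_ne_zero_iff.mp hy w).symm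
  rw [hvn, ← Real.exp_log (hpos v), ← Real.exp_log (hpos w), ← Real.exp_add, Real.exp_le_exp]
  have := abs_le.mp (h3 v)
  have := abs_le.mp (h3 w)
  linarith

lemma pow_le_norm {c : ℝ} (hc : 0 ≤ c) {y : mixedSpace K} (h : ∀ w, c ≤ normAtPlace w y) :
    c ^ finrank ℚ K ≤ mixedEmbedding.norm y := by
  rw [mixedEmbedding.norm_apply, ← sum_mult_eq, ← Finset.prod_pow_eq_pow_sum]
  exact Finset.prod_le_prod (fun _ _ ↦ by positivity) fun w _ ↦ pow_le_pow_left₀ hc (h w) _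

lemma abs_log_sub_log_le {a b e c : ℝ} (hc : 0 < c) (ha : c ≤ a) (hb : c ≤ b)
    (h : |a - b| ≤ e) : |Real.log a - Real.log b| ≤ e / c := by
  have key : ∀ a b : ℝ, c ≤ a → c ≤ b → |a - b| ≤ e → Real.log a - Real.log b ≤ e / c := by
    intro a b ha hb h
    have ha0 := hc.trans_le ha
    have hb0 := hc.trans_le hb
    rw [← Real.log_div ha0.ne' hb0.ne']
    refine (Real.log_le_sub_one_of_pos (by positivity)).trans ?_
    have : a / b - 1 = (a - b) / b := by field_simp
    rw [this]
    exact div_le_div₀ ((abs_nonneg _).trans h) ((le_abs_self _).trans h) hc hb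
  rw [abs_le]
  exact ⟨by linarith [key b a hb ha (by rwa [abs_sub_comm])], key a b ha hb h⟩

/-- If all absolute values of `x` and `y` are at least `c`, then the logarithmic coordinates are
Lipschitz at scale `c`. -/
lemma abs_log_norm_sub_le {x y : mixedSpace K} {c e : ℝ} (hc : 0 < c)
    (hx : ∀ w, c ≤ normAtPlace w x) (hy : ∀ w, c ≤ normAtPlace w y) (h : ‖x - y‖ ≤ e) :
    (∀ w, |Real.log (normAtPlace w x) - Real.log (normAtPlace w y)| ≤ e / c) ∧
    |Real.log (mixedEmbedding.norm x) - Real.log (mixedEmbedding.norm y)|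
      ≤ finrank ℚ K * (e / c) := by
  have h1 : ∀ w, |Real.log (normAtPlace w x) - Real.log (normAtPlace w y)| ≤ e / c := by
    intro w
    refine abs_log_sub_log_le hc (hx w) (hy w) (le_trans ?_ h)
    refine le_trans ?_ (normAtPlace_le_norm w (x - y))
    rw [abs_le]
    have a1 := normAtPlace_add_le w (x - y) y
    have a2 := normAtPlace_add_le w (y - x) x
    have a3 := normAtPlace_neg w (x - y)
    rw [neg_sub] at a3
    rw [sub_add_cancel] at a1 a2
    constructor <;> linarith
  refine ⟨h1, ?_⟩
  have nx : mixedEmbedding.norm x ≠ 0 :=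
    mixedEmbedding.norm_ne_zero_iff.mpr fun w ↦ (hc.trans_le (hx w)).ne'
  have ny : mixedEmbedding.norm y ≠ 0 :=
    mixedEmbedding.norm_ne_zero_iff.mpr fun w ↦ (hc.trans_le (hy w)).ne'
  rw [log_norm_eq nx, log_norm_eq ny, ← Finset.sum_sub_distrib]
  calc _ ≤ ∑ w : InfinitePlace K, |(mult w : ℝ) * Real.log (normAtPlace w x) -
          mult w * Real.log (normAtPlace w y)| := Finset.abs_sum_le_sum_abs _ _
    _ ≤ ∑ w : InfinitePlace K, (mult w : ℝ) * (e / c) := by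
        refine Finset.sum_le_sum fun w _ ↦ ?_
        rw [← mul_sub, abs_mul, abs_of_nonneg (zero_le_one.trans (one_le_mult w))]
        exact mul_le_mul_of_nonneg_left (h1 w) (zero_le_one.trans (one_le_mult w))
    _ = _ := by
        rw [← Finset.sum_mul]
        congr 1
        exact_mod_cast sum_mult_eq (K := K)

lemma abs_exp_sub_le {a b M : ℝ} (ha : a ≤ M) (hb : b ≤ M) :
    |Real.exp a - Real.exp b| ≤ Real.exp M * |a - b| := by
  have key : ∀ a b : ℝ, a ≤ M → b ≤ M → Real.exp a - Real.exp b ≤ Real.exp M * |a - b| := by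
    intro a b ha hb
    have h1 : Real.exp a - Real.exp b = Real.exp a * (1 - Real.exp (b - a)) := by
      rw [mul_sub, ← Real.exp_add]; ring_nf
    have h2 : 1 - Real.exp (b - a) ≤ |a - b| := by
      have := Real.add_one_le_exp (b - a)
      linarith [le_abs_self (a - b)]
    rw [h1]
    calc _ ≤ Real.exp a * |a - b| := mul_le_mul_of_nonneg_left h2 (Real.exp_pos _).le
      _ ≤ _ := mul_le_mul_of_nonneg_right (Real.exp_le_exp.mpr ha) (abs_nonneg _)
  rw [abs_le]
  exact ⟨by have := key b a hb ha; rw [abs_sub_comm] at this; linarith, key a b ha hb⟩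

variable (K) in
/-- The weight is Lipschitz at scale `c` on points whose absolute values are at least `c`. -/
lemma exists_weight_lipschitz : ∃ A : ℝ, 0 < A ∧ ∀ (x y : mixedSpace K) (c e : ℝ), 0 < c →
    (∀ w, c ≤ normAtPlace w x) → (∀ w, c ≤ normAtPlace w y) → ‖x - y‖ ≤ e →
    |weight x - weight y| ≤ A * (e / c) := by
  obtain ⟨A, hA, h⟩ := exists_repr_le K
  refine ⟨(rank K + 1) * (A * (2 * finrank ℚ K + 2)), by positivity, ?_⟩
  intro x y c e hc hx hy hxy
  obtain ⟨h1, h2⟩ := abs_log_norm_sub_le hc hx hy hxy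
  have hd : 0 ≤ e / c := div_nonneg ((norm_nonneg _).trans hxy) hc.le
  have hn : (1 : ℝ) ≤ finrank ℚ K := by exact_mod_cast (finrank_pos (R := ℚ) (M := K))
  have h3 : ‖logMap x - logMap y‖ ≤ (2 * finrank ℚ K + 2) * (e / c) := by
    refine (pi_norm_le_iff_of_nonneg (by positivity)).mpr fun w ↦ ?_
    have hmult : (mult w.val : ℝ) ≤ 2 := by
      rw [mult]; split_ifs <;> norm_num
    have : (logMap x - logMap y) w = mult w.val * ((Real.log (normAtPlace w.val x) -
        Real.log (normAtPlace w.val y)) - (Real.log (mixedEmbedding.norm x) -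
        Real.log (mixedEmbedding.norm y)) * (finrank ℚ K : ℝ)⁻¹) := by
      rw [Pi.sub_apply, mixedEmbedding.logMap_apply,
        mixedEmbedding.logMap_apply]
      ring
    rw [this, Real.norm_eq_abs, abs_mul, abs_of_nonneg (zero_le_one.trans (one_le_mult w.val))]
    have h4 : |(Real.log (mixedEmbedding.norm x) -
        Real.log (mixedEmbedding.norm y)) * (finrank ℚ K : ℝ)⁻¹| ≤ e / c := by
      rw [abs_mul, abs_of_nonneg (by positivity : (0 : ℝ) ≤ (finrank ℚ K : ℝ)⁻¹),
        mul_inv_le_iff₀ (by linarith)]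
      linarith
    have h5 := (abs_sub (Real.log (normAtPlace w.val x) - Real.log (normAtPlace w.val y))
      ((Real.log (mixedEmbedding.norm x) - Real.log (mixedEmbedding.norm y)) *
        (finrank ℚ K : ℝ)⁻¹)).trans (add_le_add (h1 w.val) h4)
    calc _ ≤ 2 * (e / c + e / c) := by gcongr
      _ ≤ _ := by nlinarith
  calc |weight x - weight y|
      ≤ ∑ i, |hat ((logBasis K).repr (logMap x) i) - hat ((logBasis K).repr (logMap y) i)| :=
        abs_prod_sub_prod_le _ _ _ (fun _ ↦ ⟨hat_nonneg _, hat_le_one _⟩)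
          fun _ ↦ ⟨hat_nonneg _, hat_le_one _⟩
    _ ≤ ∑ i : Fin (rank K), A * ((2 * finrank ℚ K + 2) * (e / c)) := by
        refine Finset.sum_le_sum fun i _ ↦ (abs_hat_sub_le _ _).trans ?_
        rw [← Finsupp.sub_apply, ← map_sub]
        exact (h _ i).trans (mul_le_mul_of_nonneg_left h3 hA.le)
    _ = rank K * (A * ((2 * finrank ℚ K + 2) * (e / c))) := by simp
    _ ≤ _ := by
        have : 0 ≤ A * ((2 * finrank ℚ K + 2) * (e / c)) := by positivity
        nlinarith

end Weight

end FourthPower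

namespace FourthPower

open NumberField NumberField.mixedEmbedding NumberField.InfinitePlace NumberField.Units
  NumberField.Units.dirichletUnitTheorem Module
open scoped Classical

section WeightSum

variable (K : Type*) [Field K] [NumberField K]

lemma exists_wf_le : ∃ c : ℝ, 0 < c ∧ ∀ s : ℝ, 1 < s → ∀ y : mixedSpace K,
    wf s y ≤ (c * ‖y‖) ^ (-(finrank ℚ K * s)) := by
  obtain ⟨c, hc, -, h⟩ := exists_cone_bound K
  refine ⟨c, hc, fun s hs y ↦ ?_⟩
  by_cases hy : mixedEmbedding.norm y = 0
  · rw [wf_eq_zero_of_norm (by linarith) hy]; positivity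
  by_cases hw : weight y = 0
  · rw [wf, hw, zero_mul]; positivity
  have h0 : 0 < ‖y‖ := norm_pos_iff.mpr fun h ↦ hy (by rw [h, map_zero])
  calc wf s y ≤ 1 * mixedEmbedding.norm y ^ (-s) :=
        mul_le_mul_of_nonneg_right (weight_le_one y)
          (Real.rpow_nonneg (mixedEmbedding.norm_nonneg y) _)
    _ ≤ ((c * ‖y‖) ^ finrank ℚ K) ^ (-s) := by
        rw [one_mul]
        exact Real.rpow_le_rpow_of_nonpos (by positivity)
          (pow_le_norm (by positivity) (h y hy hw)) (by linarith)
    _ = _ := by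
        rw [← Real.rpow_natCast, ← Real.rpow_mul (by positivity)]
        ring_nf

/-- Near a point of the support of the weight, the smoothed summand varies slowly: on the support all
absolute values of `x` are comparable to `‖x‖`, so a shift by `ρ` changes both factors by a relative
error of order `ρ / ‖x‖`. -/
lemma exists_wf_sub_le_aux : ∃ B : ℝ, 0 < B ∧ ∀ ρ : ℝ, 0 ≤ ρ → ∃ R : ℝ, 0 < R ∧
    ∀ s : ℝ, 1 < s → s ≤ 2 → ∀ x y : mixedSpace K, ‖x - y‖ ≤ ρ → R ≤ ‖x‖ →
      mixedEmbedding.norm x ≠ 0 → weight x ≠ 0 →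
      |wf s x - wf s y| ≤ B * ρ * (‖x‖⁻¹) ^ (finrank ℚ K + 1) := by
  obtain ⟨c, hc, -, h⟩ := exists_cone_bound K
  obtain ⟨A, hA, hlip⟩ := exists_weight_lipschitz K
  set n := finrank ℚ K with hn
  refine ⟨(A + 2 * n) * ((c / 2)⁻¹) ^ (n + 1), by positivity, fun ρ hρ ↦
    ⟨2 * ρ / c + 2 / c, by positivity, fun s hs1 hs2 x y hxy hR hx hw ↦ ?_⟩⟩
  set c' := c * ‖x‖ / 2 with hc'
  have hR' : 2 * ρ + 2 ≤ c * ‖x‖ := by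
    rw [← add_div, div_le_iff₀ hc] at hR; linarith
  have hc'1 : 1 ≤ c' := by rw [hc']; linarith
  have hc'0 : 0 < c' := by linarith
  have hxw : ∀ w, c' ≤ normAtPlace w x := fun w ↦ by
    have := h x hx hw w
    rw [hc']; linarith
  have hyw : ∀ w, c' ≤ normAtPlace w y := fun w ↦ by
    have h1 := h x hx hw w
    have h2 := normAtPlace_add_le w (x - y) y
    rw [sub_add_cancel] at h2
    have h3 := (normAtPlace_le_norm w (x - y)).trans hxy
    rw [hc']; linarith
  have hy : mixedEmbedding.norm y ≠ 0 :=
    mixedEmbedding.norm_ne_zero_iff.mpr fun w ↦ (hc'0.trans_le (hyw w)).ne'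
  have hw1 := hlip x y c' ρ hc'0 hxw hyw hxy
  have hl := (abs_log_norm_sub_le hc'0 hxw hyw hxy).2
  have hpos : ∀ z : mixedSpace K, mixedEmbedding.norm z ≠ 0 → 0 < mixedEmbedding.norm z :=
    fun z hz ↦ lt_of_le_of_ne (mixedEmbedding.norm_nonneg z) hz.symm
  have hM : ∀ z : mixedSpace K, mixedEmbedding.norm z ≠ 0 → (∀ w, c' ≤ normAtPlace w z) →
      Real.log (mixedEmbedding.norm z) * (-s) ≤ -(n * Real.log c') := by
    intro z hz hzw
    have h1 := Real.log_le_log (by positivity) (pow_le_norm hc'0.le hzw)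
    rw [Real.log_pow] at h1
    have h2 : 0 ≤ (n : ℝ) * Real.log c' := mul_nonneg (Nat.cast_nonneg _) (Real.log_nonneg hc'1)
    nlinarith
  have hexp : Real.exp (-(n * Real.log c')) = (c'⁻¹) ^ n := by
    rw [Real.exp_neg, Real.exp_nat_mul, Real.exp_log hc'0, inv_pow]
  have e1 : ∀ z : mixedSpace K, mixedEmbedding.norm z ≠ 0 → mixedEmbedding.norm z ^ (-s) =
      Real.exp (Real.log (mixedEmbedding.norm z) * (-s)) := fun z hz ↦
    Real.rpow_def_of_pos (hpos z hz) _
  have hNx : mixedEmbedding.norm x ^ (-s) ≤ (c'⁻¹) ^ n := by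
    rw [e1 x hx, ← hexp]
    exact Real.exp_le_exp.mpr (hM x hx hxw)
  have hNxy : |mixedEmbedding.norm x ^ (-s) - mixedEmbedding.norm y ^ (-s)| ≤
      (c'⁻¹) ^ n * (2 * (n * (ρ / c'))) := by
    rw [e1 x hx, e1 y hy, ← hexp]
    refine (abs_exp_sub_le (hM x hx hxw) (hM y hy hyw)).trans ?_
    refine mul_le_mul_of_nonneg_left ?_ (Real.exp_pos _).le
    rw [← sub_mul, abs_mul, abs_neg, abs_of_pos (by linarith : 0 < s), mul_comm]
    exact mul_le_mul hs2 hl (abs_nonneg _) (by norm_num)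
  have hfin : |wf s x - wf s y| ≤ A * (ρ / c') * (c'⁻¹) ^ n +
      1 * ((c'⁻¹) ^ n * (2 * (n * (ρ / c')))) := by
    have : wf s x - wf s y = (weight x - weight y) * mixedEmbedding.norm x ^ (-s) +
        weight y * (mixedEmbedding.norm x ^ (-s) - mixedEmbedding.norm y ^ (-s)) := by
      rw [wf, wf]; ring
    rw [this]
    refine (abs_add_le _ _).trans (add_le_add ?_ ?_)
    · rw [abs_mul, abs_of_nonneg (Real.rpow_nonneg (mixedEmbedding.norm_nonneg x) _)]
      exact mul_le_mul hw1 hNx (Real.rpow_nonneg (mixedEmbedding.norm_nonneg x) _) (by positivity)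
    · rw [abs_mul, abs_of_nonneg (weight_nonneg y)]
      exact mul_le_mul (weight_le_one y) hNxy (abs_nonneg _) zero_le_one
  refine hfin.trans (le_of_eq ?_)
  have : c'⁻¹ = (c / 2)⁻¹ * ‖x‖⁻¹ := by rw [hc', ← mul_inv]; ring_nf
  rw [div_eq_mul_inv, this]
  ring

lemma exists_wf_sub_le (r : mixedSpace K) : ∃ C R : ℝ, 0 < C ∧ 0 < R ∧
    ∀ s : ℝ, 1 < s → s ≤ 2 → ∀ x : mixedSpace K, R ≤ ‖x‖ →
      |wf s (x + r) - wf s x| ≤ C * (‖x‖⁻¹) ^ (finrank ℚ K + 1) := by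
  obtain ⟨B, hB, h⟩ := exists_wf_sub_le_aux K
  obtain ⟨R, hR, h⟩ := h ‖r‖ (norm_nonneg r)
  set n := finrank ℚ K with hn
  refine ⟨B * ‖r‖ * 2 ^ (n + 1) + 1, 2 * R + 2 * ‖r‖, by positivity, by positivity,
    fun s hs1 hs2 x hx ↦ ?_⟩
  have hx0 : 0 < ‖x‖ := by linarith [norm_nonneg r]
  have zero : ∀ z : mixedSpace K, ¬ (mixedEmbedding.norm z ≠ 0 ∧ weight z ≠ 0) → wf s z = 0 := by
    intro z hz
    by_cases h1 : mixedEmbedding.norm z = 0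
    · exact wf_eq_zero_of_norm (by linarith) h1
    · have : weight z = 0 := by tauto
      rw [wf, this, zero_mul]
  have hp : 0 ≤ (‖x‖⁻¹) ^ (n + 1) := by positivity
  by_cases h1 : mixedEmbedding.norm x ≠ 0 ∧ weight x ≠ 0
  · rw [abs_sub_comm]
    refine (h s hs1 hs2 x (x + r) (by simp) (by linarith [norm_nonneg r]) h1.1 h1.2).trans ?_
    have h2 : (1 : ℝ) ≤ 2 ^ (n + 1) := one_le_pow₀ (by norm_num)
    refine mul_le_mul_of_nonneg_right ?_ hp
    nlinarith [mul_nonneg hB.le (norm_nonneg r)]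
  by_cases h2 : mixedEmbedding.norm (x + r) ≠ 0 ∧ weight (x + r) ≠ 0
  · have h3 : ‖x‖ / 2 ≤ ‖x + r‖ := by
      have := norm_sub_le (x + r) r
      rw [add_sub_cancel_right] at this
      linarith
    refine (h s hs1 hs2 (x + r) x (by simp) (by linarith [norm_nonneg r]) h2.1 h2.2).trans ?_
    have h4 : (‖x + r‖⁻¹) ^ (n + 1) ≤ 2 ^ (n + 1) * (‖x‖⁻¹) ^ (n + 1) := by
      rw [← mul_pow]
      refine pow_le_pow_left₀ (by positivity) ?_ _
      calc ‖x + r‖⁻¹ ≤ (‖x‖ / 2)⁻¹ := inv_anti₀ (by positivity) h3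
        _ = 2 * ‖x‖⁻¹ := by rw [inv_div, div_eq_mul_inv]
    calc _ ≤ B * ‖r‖ * (2 ^ (n + 1) * (‖x‖⁻¹) ^ (n + 1)) := by gcongr
      _ ≤ _ := by nlinarith
  · rw [zero x h1, zero _ h2, sub_zero, abs_zero]
    positivity

lemma norm_eq_zero_or_one_le (x : 𝓞 K) :
    x = 0 ∨ 1 ≤ mixedEmbedding.norm (mixedEmbedding K (x : K)) := by
  by_cases hx : x = 0
  · exact Or.inl hx
  right
  rw [norm_eq_norm, ← Algebra.coe_norm_int]
  have : Algebra.norm ℤ x ≠ 0 := Algebra.norm_ne_zero_iff.mpr hx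
  have := Int.one_le_abs this
  exact_mod_cast this

lemma wf_int_le_one {s : ℝ} (hs : 1 < s) (x : 𝓞 K) : wf s (mixedEmbedding K (x : K)) ≤ 1 := by
  rcases norm_eq_zero_or_one_le K x with rfl | h
  · rw [wf_eq_zero_of_norm (by linarith) (by simp)]; exact zero_le_one
  · exact mul_le_one₀ (weight_le_one _) (by positivity)
      (Real.rpow_le_one_of_one_le_of_nonpos h (by linarith))

lemma summable_norm_int (r : ℝ) (hr : r < -(finrank ℚ K : ℝ)) :
    Summable fun x : 𝓞 K ↦ ‖mixedEmbedding K (x : K)‖ ^ r := by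
  have hrank : finrank ℤ (mixedEmbedding.integerLattice K) = finrank ℚ K := by
    rw [ZLattice.rank ℝ, mixedEmbedding.finrank]
  have h := ZLattice.summable_norm_rpow (mixedEmbedding.integerLattice K) r (by rwa [hrank])
  have hmem : ∀ x : 𝓞 K, mixedEmbedding K (x : K) ∈ mixedEmbedding.integerLattice K := fun x ↦ by
    rw [LinearMap.mem_range]
    exact ⟨x, by simp⟩
  have hg : Function.Injective
      fun x : 𝓞 K ↦ (⟨_, hmem x⟩ : mixedEmbedding.integerLattice K) := fun x y hxy ↦
    RingOfIntegers.ext (mixedEmbedding_injective K (Subtype.ext_iff.mp hxy))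
  have h2 := h.comp_injective hg
  simpa only [Function.comp_def, Submodule.coe_norm] using h2

lemma summable_wf {s : ℝ} (hs : 1 < s) :
    Summable fun x : 𝓞 K ↦ wf s (mixedEmbedding K (x : K)) := by
  obtain ⟨c, hc, h⟩ := exists_wf_le K
  have hn : (1 : ℝ) ≤ finrank ℚ K := by exact_mod_cast (finrank_pos (R := ℚ) (M := K))
  refine Summable.of_nonneg_of_le (fun x ↦ wf_nonneg _ _) (fun x ↦ h s hs _) ?_
  simp_rw [Real.mul_rpow hc.le (norm_nonneg _)]
  exact (summable_norm_int K _ (by nlinarith)).mul_left _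

/-- Translating by a fixed integer changes the smoothed sum over a set of integers by a
bounded amount, uniformly for `s` near `1`. -/
lemma exists_translate_bound (r : 𝓞 K) : ∃ g : 𝓞 K → ℝ, Summable g ∧ ∀ s : ℝ, 1 < s → s ≤ 2 →
    ∀ x : 𝓞 K, |wf s (mixedEmbedding K ((x + r : 𝓞 K) : K)) - wf s (mixedEmbedding K (x : K))|
      ≤ g x := by
  obtain ⟨C, R, hC, hR, h⟩ := exists_wf_sub_le K (mixedEmbedding K (r : K))
  set n := finrank ℚ K with hn
  have hsum : Summable fun x : 𝓞 K ↦ (‖mixedEmbedding K (x : K)‖⁻¹) ^ (n + 1) := by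
    refine (summable_norm_int K (-((n + 1 : ℕ) : ℝ)) (by push_cast; linarith)).congr fun x ↦ ?_
    rw [Real.rpow_neg (norm_nonneg _), Real.rpow_natCast, inv_pow]
  refine ⟨fun x ↦ (C + 2 * R ^ (n + 1)) * (‖mixedEmbedding K (x : K)‖⁻¹) ^ (n + 1) +
    if x = 0 then 2 else 0, (hsum.mul_left _).add (summable_of_ne_finset_zero (s := {0})
      fun x hx ↦ if_neg (by simpa using hx)), fun s hs1 hs2 x ↦ ?_⟩
  have hp : 0 ≤ (‖mixedEmbedding K (x : K)‖⁻¹) ^ (n + 1) := by positivity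
  have htriv : |wf s (mixedEmbedding K ((x + r : 𝓞 K) : K)) - wf s (mixedEmbedding K (x : K))|
      ≤ 2 := by
    have a1 := wf_int_le_one K hs1 x
    have a2 := wf_int_le_one K hs1 (x + r)
    have a3 := wf_nonneg s (mixedEmbedding K (x : K))
    have a4 := wf_nonneg s (mixedEmbedding K ((x + r : 𝓞 K) : K))
    rw [abs_le]; constructor <;> linarith
  by_cases hx : x = 0
  · beta_reduce
    rw [if_pos hx]
    have : 0 ≤ (C + 2 * R ^ (n + 1)) * (‖mixedEmbedding K (x : K)‖⁻¹) ^ (n + 1) := by positivity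
    linarith
  beta_reduce
  rw [if_neg hx, add_zero]
  have hx0 : 0 < ‖mixedEmbedding K (x : K)‖ := norm_pos_iff.mpr fun h0 ↦ hx <| by
    rw [map_eq_zero] at h0
    exact_mod_cast h0
  by_cases hxR : R ≤ ‖mixedEmbedding K (x : K)‖
  · have h1 := h s hs1 hs2 _ hxR
    rw [← map_add] at h1
    push_cast
    refine h1.trans ?_
    have : 0 ≤ R ^ (n + 1) := by positivity
    nlinarith
  · refine htriv.trans ?_
    push Not at hxR
    have h1 : 1 ≤ (R * ‖mixedEmbedding K (x : K)‖⁻¹) ^ (n + 1) := by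
      refine one_le_pow₀ ?_
      rw [← div_eq_mul_inv, one_le_div hx0]; exact hxR.le
    rw [mul_pow] at h1
    nlinarith [mul_nonneg hC.le hp]

end WeightSum

end FourthPower

/-! ### Partial zeta functions as smoothed sums over ideals -/

namespace FourthPower

open NumberField NumberField.mixedEmbedding NumberField.InfinitePlace NumberField.Units
  NumberField.Units.dirichletUnitTheorem Module nonZeroDivisors
open scoped Classical

section ClassSum

variable {K : Type*} [Field K] [NumberField K]

lemma repr_logEmbedding (ζ : torsion K) (e : Fin (rank K) → ℤ) (i : Fin (rank K)) :
    (logBasis K).repr (logEmbedding K (Additive.ofMul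
      ((ζ : (𝓞 K)ˣ) * ∏ j, (fundSystem K j) ^ (e j)))) i = e i := by
  have h1 : logEmbedding K (Additive.ofMul ((ζ : (𝓞 K)ˣ) * ∏ j, (fundSystem K j) ^ (e j))) =
      ∑ j, (e j : ℝ) • logBasis K j := by
    rw [ofMul_mul, map_add, logEmbedding_eq_zero_iff.mpr ζ.2, zero_add, ofMul_prod, map_sum]
    refine Finset.sum_congr rfl fun j _ ↦ ?_
    rw [ofMul_zpow, map_zsmul, logEmbedding_fundSystem, logBasis, Basis.ofZLatticeBasis_apply,
      Int.cast_smul_eq_zsmul]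
  rw [h1, map_sum, Finset.sum_apply']
  simp [Finsupp.single_apply]

lemma hasSum_congr_fun {α : Type*} {f g : α → ℝ} {a : ℝ} (hf : HasSum f a)
    (h : ∀ x, g x = f x) : HasSum g a := by
  rwa [show g = f from funext h]

lemma bijective_torsion_mul :
    Function.Bijective fun p : torsion K × (Fin (rank K) → ℤ) ↦
      (p.1 : (𝓞 K)ˣ) * ∏ j, (fundSystem K j) ^ (p.2 j) := by
  rw [Function.bijective_iff_existsUnique]
  intro x
  obtain ⟨p, hp, hu⟩ := exist_unique_eq_mul_prod K x
  exact ⟨p, hp.symm, fun q hq ↦ hu q hq.symm⟩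

lemma hasSum_one_mul {α β : Type*} [Finite α] {f : β → ℝ} (hf : HasSum f 1) (h0 : ∀ b, 0 ≤ f b) :
    HasSum (fun p : α × β ↦ f p.2) (Nat.card α) := by
  have : Fintype α := Fintype.ofFinite _
  have h1 : HasSum (fun _ : α ↦ (1 : ℝ)) (Nat.card α) := by
    have := hasSum_fintype (fun _ : α ↦ (1 : ℝ))
    simpa [Nat.card_eq_fintype_card] using this
  have h3 := h1.mul hf (h1.summable.mul_of_nonneg hf.summable (fun _ ↦ zero_le_one) h0)
  simpa using h3

/-- The translates of the weight under the unit group sum to the number of roots of unity. -/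
lemma hasSum_weight_unit_smul {y : mixedSpace K} (hy : mixedEmbedding.norm y ≠ 0) :
    HasSum (fun u : (𝓞 K)ˣ ↦ weight (u • y)) (torsionOrder K) := by
  refine (Equiv.ofBijective _ (bijective_torsion_mul (K := K))).hasSum_iff.mp ?_
  have h3 := hasSum_one_mul (α := torsion K)
    (hasSum_prod_hat (fun i ↦ (logBasis K).repr (logMap y) i))
    (fun _ ↦ Finset.prod_nonneg fun _ _ ↦ hat_nonneg _)
  refine hasSum_congr_fun h3 ?_
  rintro ⟨ζ, e⟩
  simp only [Function.comp_apply, Equiv.ofBijective_apply, weight]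
  refine Finset.prod_congr rfl fun i _ ↦ ?_
  rw [logMap_unit_smul _ hy, map_add, Finsupp.add_apply, repr_logEmbedding]

/-- Ideals in a given class. -/
abbrev InClass (C : ClassGroup (𝓞 K)) := {I : (Ideal (𝓞 K))⁰ // ClassGroup.mk0 I = C}

lemma exists_gen (J : (Ideal (𝓞 K))⁰) (I : InClass (ClassGroup.mk0 J)⁻¹) :
    ∃ g : 𝓞 K, Ideal.span {g} = (I.1 * J : Ideal (𝓞 K)) := by
  have h : ClassGroup.mk0 (I.1 * J) = 1 := by rw [map_mul, I.2, inv_mul_cancel]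
  rw [ClassGroup.mk0_eq_one_iff] at h
  obtain ⟨g, hg⟩ := h
  exact ⟨g, by rw [← Ideal.submodule_span_eq]; exact hg.symm⟩

/-- A generator of `I * J`. -/
noncomputable def gen (J : (Ideal (𝓞 K))⁰) (I : InClass (ClassGroup.mk0 J)⁻¹) : 𝓞 K :=
  (exists_gen J I).choose

lemma span_gen (J : (Ideal (𝓞 K))⁰) (I : InClass (ClassGroup.mk0 J)⁻¹) :
    Ideal.span {gen J I} = (I.1 * J : Ideal (𝓞 K)) := (exists_gen J I).choose_spec

lemma gen_ne_zero (J : (Ideal (𝓞 K))⁰) (I : InClass (ClassGroup.mk0 J)⁻¹) : gen J I ≠ 0 := by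
  intro h
  have h1 := span_gen J I
  rw [h, Ideal.span_singleton_eq_bot.mpr rfl] at h1
  exact nonZeroDivisors.ne_zero (I.1 * J).2 h1.symm

lemma mul_gen_mem (J : (Ideal (𝓞 K))⁰) (I : InClass (ClassGroup.mk0 J)⁻¹) (u : (𝓞 K)ˣ) :
    (u : 𝓞 K) * gen J I ∈ (J : Ideal (𝓞 K)) := by
  refine Ideal.mul_mem_left _ _ ?_
  have h2 : gen J I ∈ (I.1 * J : Ideal (𝓞 K)) := by
    rw [← span_gen J I]; exact Ideal.mem_span_singleton_self _
  exact Ideal.mul_le_right h2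

lemma mul_gen_injective (J : (Ideal (𝓞 K))⁰) {I I' : InClass (ClassGroup.mk0 J)⁻¹}
    {u u' : (𝓞 K)ˣ} (h1 : (u : 𝓞 K) * gen J I = u' * gen J I') : I = I' ∧ u = u' := by
  have h2 : Ideal.span {gen J I} = Ideal.span {gen J I'} := by
    rw [Ideal.span_singleton_eq_span_singleton]
    exact ⟨u * u'⁻¹, by
      rw [Units.val_mul, ← mul_assoc, mul_comm (gen J I), h1, mul_comm (u' : 𝓞 K),
        mul_assoc, Units.mul_inv, mul_one]⟩
  rw [span_gen, span_gen] at h2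
  have h3 : I = I' := Subtype.ext (Subtype.ext
    (mul_right_cancel₀ (nonZeroDivisors.ne_zero J.2) h2))
  subst h3
  exact ⟨rfl, Units.ext (mul_right_cancel₀ (gen_ne_zero J I) h1)⟩

lemma exists_mul_gen (J : (Ideal (𝓞 K))⁰) {x : 𝓞 K} (hxJ : x ∈ (J : Ideal (𝓞 K))) (hx0 : x ≠ 0) :
    ∃ (I : InClass (ClassGroup.mk0 J)⁻¹) (u : (𝓞 K)ˣ), (u : 𝓞 K) * gen J I = x := by
  have hdvd : (J : Ideal (𝓞 K)) ∣ Ideal.span {x} :=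
    Ideal.dvd_iff_le.mpr ((Ideal.span_singleton_le_iff_mem _).mpr hxJ)
  obtain ⟨I, hI⟩ := hdvd
  have hsx : Ideal.span {x} ≠ ⊥ := by rwa [ne_eq, Ideal.span_singleton_eq_bot]
  have hI0 : I ≠ ⊥ := by rintro rfl; exact hsx (by rw [hI]; exact Ideal.mul_bot _)
  have hcl : ClassGroup.mk0 ⟨I, mem_nonZeroDivisors_of_ne_zero hI0⟩ = (ClassGroup.mk0 J)⁻¹ := by
    rw [eq_inv_iff_mul_eq_one, ← map_mul, ClassGroup.mk0_eq_one_iff]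
    refine ⟨x, ?_⟩
    rw [Ideal.submodule_span_eq, hI, mul_comm]
    rfl
  have h1 := span_gen J ⟨⟨I, mem_nonZeroDivisors_of_ne_zero hI0⟩, hcl⟩
  have h2 : Ideal.span {gen J ⟨⟨I, mem_nonZeroDivisors_of_ne_zero hI0⟩, hcl⟩} =
      Ideal.span {x} := by
    rw [h1, hI, mul_comm]
  rw [Ideal.span_singleton_eq_span_singleton] at h2
  obtain ⟨u, hu⟩ := h2
  exact ⟨_, u, by rw [mul_comm]; exact hu⟩

/-- The product of a unit with the chosen generator of `I * J`, a nonzero element of `J`. -/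
noncomputable def classMap (J : (Ideal (𝓞 K))⁰) (p : InClass (ClassGroup.mk0 J)⁻¹ × (𝓞 K)ˣ) :
    {x : (J : Ideal (𝓞 K)) // x ≠ 0} :=
  ⟨⟨p.2 * gen J p.1, mul_gen_mem J p.1 p.2⟩, fun h ↦
    mul_ne_zero p.2.ne_zero (gen_ne_zero J p.1) (congrArg Subtype.val h)⟩

lemma classMap_val (J : (Ideal (𝓞 K))⁰) (p : InClass (ClassGroup.mk0 J)⁻¹ × (𝓞 K)ˣ) :
    ((classMap J p : (J : Ideal (𝓞 K))) : 𝓞 K) = p.2 * gen J p.1 := rfl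

lemma classMap_bijective (J : (Ideal (𝓞 K))⁰) : Function.Bijective (classMap J) := by
  constructor
  · rintro ⟨I, u⟩ ⟨I', u'⟩ h
    have h1 := congrArg (fun z ↦ (z.1.1 : 𝓞 K)) h
    obtain ⟨rfl, rfl⟩ := mul_gen_injective J h1
    rfl
  · rintro ⟨⟨x, hxJ⟩, hx⟩
    obtain ⟨I, u, h⟩ := exists_mul_gen J hxJ fun h0 ↦ hx (Subtype.ext h0)
    exact ⟨(I, u), Subtype.ext (Subtype.ext h)⟩

/-- Ideals `I` in the class inverse to that of `J`, together with a unit, correspond to nonzero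
elements of `J`. -/
noncomputable def classEquiv (J : (Ideal (𝓞 K))⁰) :
    InClass (ClassGroup.mk0 J)⁻¹ × (𝓞 K)ˣ ≃ {x : (J : Ideal (𝓞 K)) // x ≠ 0} :=
  Equiv.ofBijective (classMap J) (classMap_bijective J)

lemma classEquiv_val (J : (Ideal (𝓞 K))⁰) (p : InClass (ClassGroup.mk0 J)⁻¹ × (𝓞 K)ˣ) :
    ((classEquiv J p : (J : Ideal (𝓞 K))) : 𝓞 K) = p.2 * gen J p.1 := rfl

lemma norm_mixedEmbedding_int (x : 𝓞 K) :
    mixedEmbedding.norm (mixedEmbedding K (x : K)) = Ideal.absNorm (Ideal.span {x}) := by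
  rw [norm_eq_norm, ← Algebra.coe_norm_int, Ideal.absNorm_span_singleton, Nat.cast_natAbs]
  push_cast
  rfl

lemma wf_classEquiv (J : (Ideal (𝓞 K))⁰) (s : ℝ) (p : InClass (ClassGroup.mk0 J)⁻¹ × (𝓞 K)ˣ) :
    wf s (mixedEmbedding K (((classEquiv J p : (J : Ideal (𝓞 K))) : 𝓞 K) : K)) =
      weight (p.2 • mixedEmbedding K (gen J p.1 : K)) *
      ((Ideal.absNorm (p.1.1 : Ideal (𝓞 K)) : ℝ) * Ideal.absNorm (J : Ideal (𝓞 K))) ^ (-s) := by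
  have h1 : mixedEmbedding K (((classEquiv J p : (J : Ideal (𝓞 K))) : 𝓞 K) : K) =
      p.2 • mixedEmbedding K (gen J p.1 : K) := by
    rw [unitSMul_smul, ← map_mul, classEquiv_val]
    rfl
  rw [h1, wf, norm_unit_smul, norm_mixedEmbedding_int, span_gen, map_mul, Nat.cast_mul]

/-- The partial zeta function of a class as a smoothed sum over an ideal. -/
lemma hasSum_class (J : (Ideal (𝓞 K))⁰) {s : ℝ} (hs : 1 < s) :
    HasSum (fun I : InClass (ClassGroup.mk0 J)⁻¹ ↦ (Ideal.absNorm (I.1 : Ideal (𝓞 K)) : ℝ) ^ (-s))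
      ((Ideal.absNorm (J : Ideal (𝓞 K)) : ℝ) ^ s / torsionOrder K *
        ∑' x : (J : Ideal (𝓞 K)), wf s (mixedEmbedding K ((x : 𝓞 K) : K))) := by
  have hsum : Summable fun x : (J : Ideal (𝓞 K)) ↦ wf s (mixedEmbedding K ((x : 𝓞 K) : K)) :=
    (summable_wf K hs).comp_injective Subtype.val_injective
  have h1 := hsum.hasSum
  rw [← hasSum_subtype_iff_of_support_subset (s := {x | x ≠ 0}) (by
    intro x hx h0
    refine hx ?_
    rw [h0]
    exact wf_eq_zero_of_norm (by linarith) (by simp))] at h1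
  have h2 := (classEquiv J).hasSum_iff.mpr h1
  have h3 := h2.prod_fiberwise (g := fun I ↦ (torsionOrder K : ℝ) *
    ((Ideal.absNorm (I.1 : Ideal (𝓞 K)) : ℝ) * Ideal.absNorm (J : Ideal (𝓞 K))) ^ (-s)) (by
    intro I
    have hg : mixedEmbedding.norm (mixedEmbedding K (gen J I : K)) ≠ 0 := by
      rw [norm_mixedEmbedding_int, Nat.cast_ne_zero, ne_eq, Ideal.absNorm_eq_zero_iff,
        Ideal.span_singleton_eq_bot]
      exact gen_ne_zero J I
    refine hasSum_congr_fun ((hasSum_weight_unit_smul hg).mul_right _) ?_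
    intro u
    exact wf_classEquiv J s (I, u))
  have hJ : (Ideal.absNorm (J : Ideal (𝓞 K)) : ℝ) ≠ 0 := by
    rw [Nat.cast_ne_zero, ne_eq, Ideal.absNorm_eq_zero_iff]
    exact nonZeroDivisors.ne_zero J.2
  have hJ' : 0 < (Ideal.absNorm (J : Ideal (𝓞 K)) : ℝ) :=
    lt_of_le_of_ne (Nat.cast_nonneg _) hJ.symm
  have ht : (torsionOrder K : ℝ) ≠ 0 := by exact_mod_cast (torsionOrder_pos K).ne'
  have h4 := h3.mul_left ((Ideal.absNorm (J : Ideal (𝓞 K)) : ℝ) ^ s / torsionOrder K)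
  refine hasSum_congr_fun h4 ?_
  intro I
  rw [Real.mul_rpow (Nat.cast_nonneg _) (Nat.cast_nonneg _), Real.rpow_neg hJ'.le s]
  have := (Real.rpow_pos_of_pos hJ' s).ne'
  field_simp

end ClassSum
end FourthPower

namespace FourthPower

open NumberField NumberField.mixedEmbedding NumberField.InfinitePlace NumberField.Units
  NumberField.Units.dirichletUnitTheorem Module nonZeroDivisors
open scoped Classical

section Compare

/-- Translates by representatives identify the ring with copies of an ideal. -/
noncomputable def cosetEquiv {R : Type*} [CommRing R] (J : Ideal R) : (R ⧸ J) × J ≃ R where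
  toFun p := p.2 + Quotient.out p.1
  invFun x := (Ideal.Quotient.mk J x, ⟨x - Quotient.out (Ideal.Quotient.mk J x), by
    rw [← Ideal.Quotient.eq]; exact (Quotient.out_eq _).symm⟩)
  left_inv := by
    rintro ⟨q, x, hx⟩
    have hq : Ideal.Quotient.mk J (Quotient.out q) = q := Quotient.out_eq q
    have : Ideal.Quotient.mk J (x + Quotient.out q) = q := by
      rw [map_add, hq, Ideal.Quotient.eq_zero_iff_mem.mpr hx, zero_add]
    refine Prod.ext this (Subtype.ext ?_)
    simp only [this]
    ring
  right_inv x := by simp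

lemma abs_tsum_sub_card_mul_le {R : Type*} [CommRing R] (J : Ideal R) [Finite (R ⧸ J)]
    [Fintype (R ⧸ J)]
    {f : R → ℝ} (hf : Summable f) {g : R → R → ℝ} (hg : ∀ r, Summable (g r))
    (hfg : ∀ r x, |f (x + r) - f x| ≤ g r x) :
    |∑' x, f x - Nat.card (R ⧸ J) * ∑' x : J, f x| ≤
      ∑ q : R ⧸ J, ∑' x : J, g (Quotient.out q) x := by
  have hsumJ : Summable fun x : J ↦ f x := hf.comp_injective Subtype.val_injective
  have hsumq : ∀ q : R ⧸ J, Summable fun x : J ↦ f (x + Quotient.out q) := fun q ↦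
    hf.comp_injective (i := fun x : J ↦ (x : R) + Quotient.out q)
      fun x y h ↦ Subtype.ext (add_right_cancel h)
  have h1 : ∑' x, f x = ∑ q : R ⧸ J, ∑' x : J, f (x + Quotient.out q) := by
    refine ((cosetEquiv J).tsum_eq f).symm.trans ?_
    refine (Summable.tsum_prod' (f := fun p ↦ f (cosetEquiv J p))
      ((cosetEquiv J).summable_iff.mpr hf) hsumq).trans ?_
    rw [tsum_fintype]
    rfl
  have h2 : (Nat.card (R ⧸ J) : ℝ) * ∑' x : J, f x = ∑ _q : R ⧸ J, ∑' x : J, f x := by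
    rw [Finset.sum_const, nsmul_eq_mul, Finset.card_univ, Nat.card_eq_fintype_card]
  rw [h1, h2, ← Finset.sum_sub_distrib]
  refine (Finset.abs_sum_le_sum_abs _ _).trans (Finset.sum_le_sum fun q _ ↦ ?_)
  rw [← Summable.tsum_sub (hsumq q) hsumJ]
  have hgJ : Summable fun x : J ↦ g (Quotient.out q) x :=
    (hg (Quotient.out q)).comp_injective Subtype.val_injective
  rw [← Real.norm_eq_abs]
  exact tsum_of_norm_bounded hgJ.hasSum (fun x : J ↦ hfg (Quotient.out q) x)

variable {K : Type*} [Field K] [NumberField K]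

/-- The smoothed sum over an ideal is, up to a bounded error, the fraction `1 / N J` of the
smoothed sum over all integers. -/
lemma exists_compare (J : (Ideal (𝓞 K))⁰) : ∃ B : ℝ, ∀ s : ℝ, 1 < s → s ≤ 2 →
    |∑' x : 𝓞 K, wf s (mixedEmbedding K (x : K)) - Ideal.absNorm (J : Ideal (𝓞 K)) *
      ∑' x : (J : Ideal (𝓞 K)), wf s (mixedEmbedding K ((x : 𝓞 K) : K))| ≤ B := by
  have hJ : (J : Ideal (𝓞 K)) ≠ ⊥ := nonZeroDivisors.ne_zero J.2
  have : Finite (𝓞 K ⧸ (J : Ideal (𝓞 K))) := Ideal.finiteQuotientOfFreeOfNeBot _ hJ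
  have : Fintype (𝓞 K ⧸ (J : Ideal (𝓞 K))) := Fintype.ofFinite _
  choose g hg hgb using exists_translate_bound K
  refine ⟨∑ q : 𝓞 K ⧸ (J : Ideal (𝓞 K)), ∑' x : (J : Ideal (𝓞 K)), g (Quotient.out q) x, fun s hs1 hs2 ↦ ?_⟩
  exact abs_tsum_sub_card_mul_le (J : Ideal (𝓞 K)) (summable_wf K hs1) hg
    (fun r x ↦ hgb r s hs1 hs2 x)

end Compare

end FourthPower

/-! ### Boundedness at `1` of class group `L`-functions -/

namespace FourthPower

open NumberField NumberField.mixedEmbedding NumberField.InfinitePlace NumberField.Units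
  NumberField.Units.dirichletUnitTheorem Module nonZeroDivisors Filter Topology
open scoped Classical

section IdealZeta

variable {K : Type*} [Field K] [NumberField K]

/-- The summand `N I ^ (-s)` of the Dedekind zeta function. -/
noncomputable def nrm (s : ℝ) (I : (Ideal (𝓞 K))⁰) : ℝ :=
  (Ideal.absNorm (I : Ideal (𝓞 K)) : ℝ) ^ (-s)

lemma one_le_absNorm (I : (Ideal (𝓞 K))⁰) : (1 : ℝ) ≤ Ideal.absNorm (I : Ideal (𝓞 K)) := by
  rw [Nat.one_le_cast, Nat.one_le_iff_ne_zero, ne_eq, Ideal.absNorm_eq_zero_iff]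
  exact nonZeroDivisors.ne_zero I.2

lemma nrm_nonneg (s : ℝ) (I : (Ideal (𝓞 K))⁰) : 0 ≤ nrm s I := Real.rpow_nonneg (by positivity) _

lemma summable_class (C : ClassGroup (𝓞 K)) {s : ℝ} (hs : 1 < s) :
    Summable fun I : InClass C ↦ nrm s I.1 := by
  obtain ⟨J, hJ⟩ := ClassGroup.mk0_surjective C⁻¹
  obtain rfl : C = (ClassGroup.mk0 J)⁻¹ := by rw [hJ, inv_inv]
  exact (hasSum_class J hs).summable

lemma summable_nrm {s : ℝ} (hs : 1 < s) : Summable (nrm (K := K) s) := by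
  rw [← (Equiv.sigmaFiberEquiv (ClassGroup.mk0 (R := 𝓞 K))).summable_iff]
  refine (summable_sigma_of_nonneg fun _ ↦ nrm_nonneg _ _).mpr ?_
  exact ⟨fun C ↦ summable_class C hs, Summable.of_finite⟩

lemma tsum_char (χ : ClassGroup (𝓞 K) → ℝ) {s : ℝ} (hs : 1 < s) :
    Summable (fun I ↦ χ (ClassGroup.mk0 I) * nrm s I) ∧
    ∑' I, χ (ClassGroup.mk0 I) * nrm s I = ∑ C, χ C * ∑' I : InClass C, nrm s I.1 := by
  have hsum : Summable fun I ↦ χ (ClassGroup.mk0 I) * nrm s I := by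
    refine Summable.of_norm_bounded ((summable_nrm (K := K) hs).mul_left (∑ C, |χ C|)) fun I ↦ ?_
    rw [norm_mul, Real.norm_eq_abs, Real.norm_eq_abs, abs_of_nonneg (nrm_nonneg s I)]
    exact mul_le_mul_of_nonneg_right
      (Finset.single_le_sum (f := fun C ↦ |χ C|) (fun _ _ ↦ abs_nonneg _) (Finset.mem_univ _))
      (nrm_nonneg s I)
  refine ⟨hsum, ?_⟩
  have h2 := (Equiv.sigmaFiberEquiv (ClassGroup.mk0 (R := 𝓞 K))).summable_iff.mpr hsum
  rw [← (Equiv.sigmaFiberEquiv (ClassGroup.mk0 (R := 𝓞 K))).tsum_eq]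
  refine (Summable.tsum_sigma h2).trans ?_
  rw [tsum_fintype]
  refine Finset.sum_congr rfl fun C _ ↦ ?_
  rw [← tsum_mul_left]
  refine tsum_congr fun I ↦ ?_
  simp only [Function.comp_apply, Equiv.sigmaFiberEquiv_apply]
  rw [I.2]

lemma tsum_nrm_eq {s : ℝ} (hs : 1 < s) :
    ((∑' I, nrm (K := K) s I : ℝ) : ℂ) = dedekindZeta K s := by
  have hs0 : -s ≠ 0 := by linarith
  have h0 : HasSum (fun I : Ideal (𝓞 K) ↦ (Ideal.absNorm I : ℝ) ^ (-s)) (∑' I, nrm (K := K) s I) := by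
    refine (hasSum_subtype_iff_of_support_subset
      (s := (((Ideal (𝓞 K))⁰ : Submonoid _) : Set (Ideal (𝓞 K)))) ?_).mp (summable_nrm hs).hasSum
    intro I hI
    refine mem_nonZeroDivisors_of_ne_zero ?_
    rintro rfl
    refine hI ?_
    simp [Real.zero_rpow hs0]
  have h1 := h0.tsum_fiberwise Ideal.absNorm
  have h2 : HasSum (fun n : ℕ ↦ (((∑' I : Ideal.absNorm (S := 𝓞 K) ⁻¹' {n},
      (Ideal.absNorm (I : Ideal (𝓞 K)) : ℝ) ^ (-s) : ℝ)) : ℂ))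
      ((∑' I, nrm (K := K) s I : ℝ) : ℂ) := by exact_mod_cast h1
  rw [← h2.tsum_eq, dedekindZeta, LSeries]
  refine tsum_congr fun n ↦ ?_
  have h3 : ∑' I : Ideal.absNorm (S := 𝓞 K) ⁻¹' {n}, (Ideal.absNorm (I : Ideal (𝓞 K)) : ℝ) ^ (-s) =
      Nat.card {I : Ideal (𝓞 K) // Ideal.absNorm I = n} * (n : ℝ) ^ (-s) := by
    rw [tsum_congr (g := fun _ ↦ (n : ℝ) ^ (-s)) (fun I ↦ by rw [I.2]), tsum_const, nsmul_eq_mul]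
    rfl
  rw [h3, LSeries.term_def]
  split_ifs with hn
  · simp [hn, Real.zero_rpow hs0]
  · rw [Real.rpow_neg (by positivity), Complex.ofReal_mul, Complex.ofReal_inv,
      Complex.ofReal_cpow (by positivity)]
    simp [div_eq_mul_inv]

variable (K) in
lemma tendsto_tsum_nrm :
    Tendsto (fun s : ℝ ↦ (s - 1) * ∑' I, nrm (K := K) s I) (𝓝[>] 1) (𝓝 (dedekindZeta_residue K)) := by
  have h := tendsto_sub_one_mul_dedekindZeta_nhdsGT K
  have h2 : Tendsto (fun s : ℝ ↦ (((s - 1) * ∑' I, nrm (K := K) s I : ℝ) : ℂ)) (𝓝[>] 1)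
      (𝓝 ((dedekindZeta_residue K : ℝ) : ℂ)) := by
    refine h.congr' ?_
    filter_upwards [self_mem_nhdsWithin] with s hs
    rw [Complex.ofReal_mul, tsum_nrm_eq hs]
    simp
  exact (Complex.continuous_re.tendsto _).comp h2

variable (K) in
/-- The smoothed sum has at most a simple pole at `1`. -/
lemma exists_smooth_bound : ∃ A : ℝ, 0 ≤ A ∧ ∀ᶠ s : ℝ in 𝓝[>] 1,
    |(s - 1) * ∑' x : 𝓞 K, wf s (mixedEmbedding K (x : K))| ≤ A := by
  obtain ⟨B, hB⟩ := exists_compare (K := K) 1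
  set w : ℝ := (torsionOrder K : ℝ) with hw
  have hw0 : 0 < w := Nat.cast_pos.mpr (torsionOrder_pos K)
  have hB0 : 0 ≤ B := (abs_nonneg _).trans (hB 2 (by norm_num) le_rfl)
  have hr := dedekindZeta_residue_pos K
  refine ⟨w * (dedekindZeta_residue K + 1) + B, by positivity, ?_⟩
  have h1 := (tendsto_tsum_nrm K).eventually_lt_const (lt_add_one _)
  have h2 : ∀ᶠ s : ℝ in 𝓝[>] 1, s ≤ 2 :=
    mem_nhdsWithin_of_mem_nhds (Iic_mem_nhds (by norm_num))
  filter_upwards [h1, h2, self_mem_nhdsWithin] with s hs1 hs2 hs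
  have hs : 1 < s := hs
  have hc : ∑' I : InClass (ClassGroup.mk0 (1 : (Ideal (𝓞 K))⁰))⁻¹, nrm s I.1 = _ :=
    (hasSum_class (K := K) 1 hs).tsum_eq
  have hle : ∑' I : InClass (ClassGroup.mk0 (1 : (Ideal (𝓞 K))⁰))⁻¹, nrm s I.1 ≤
      ∑' I, nrm (K := K) s I :=
    Summable.tsum_subtype_le (nrm (K := K) s) _ (nrm_nonneg s) (summable_nrm hs)
  rw [hc] at hle
  have hB := hB s hs hs2
  simp only [OneMemClass.coe_one, map_one, Nat.cast_one, Real.one_rpow, one_mul] at hle hB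
  simp only [nrm] at hle hs1
  set T := ∑' x : ((1 : Ideal (𝓞 K))), wf s (mixedEmbedding K ((x : 𝓞 K) : K))
  set S := ∑' x : 𝓞 K, wf s (mixedEmbedding K (x : K))
  have hS0 : 0 ≤ S := tsum_nonneg fun _ ↦ wf_nonneg _ _
  have hs' : 0 < s - 1 := by linarith
  rw [abs_of_nonneg (by positivity)]
  have hST : S ≤ T + B := by linarith [(abs_le.mp hB).2]
  have hT : T ≤ w * ∑' I : (Ideal (𝓞 K))⁰, (Ideal.absNorm (I : Ideal (𝓞 K)) : ℝ) ^ (-s) := by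
    have := mul_le_mul_of_nonneg_left hle hw0.le
    calc T = w * (1 / w * T) := by field_simp
      _ ≤ _ := this
  calc (s - 1) * S ≤ (s - 1) * (w * ∑' I : (Ideal (𝓞 K))⁰,
        (Ideal.absNorm (I : Ideal (𝓞 K)) : ℝ) ^ (-s) + B) := by gcongr; linarith
    _ = w * ((s - 1) * ∑' I : (Ideal (𝓞 K))⁰,
        (Ideal.absNorm (I : Ideal (𝓞 K)) : ℝ) ^ (-s)) + (s - 1) * B := by ring
    _ ≤ w * (dedekindZeta_residue K + 1) + B := by
        have : (s - 1) * B ≤ B := by nlinarith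
        have := mul_le_mul_of_nonneg_left hs1.le hw0.le
        linarith

/-- The partial zeta functions of all classes agree up to bounded functions near `1`. -/
lemma exists_class_bound (C : ClassGroup (𝓞 K)) : ∃ B : ℝ, ∀ᶠ s : ℝ in 𝓝[>] 1,
    |∑' I : InClass C, nrm s I.1 -
      (∑' x : 𝓞 K, wf s (mixedEmbedding K (x : K))) / torsionOrder K| ≤ B := by
  obtain ⟨J, hJ⟩ := ClassGroup.mk0_surjective C⁻¹
  obtain rfl : C = (ClassGroup.mk0 J)⁻¹ := by rw [hJ, inv_inv]
  obtain ⟨B, hB⟩ := exists_compare J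
  obtain ⟨A, hA0, hA⟩ := exists_smooth_bound K
  set w : ℝ := (torsionOrder K : ℝ) with hw
  have hw0 : 0 < w := Nat.cast_pos.mpr (torsionOrder_pos K)
  set N : ℝ := (Ideal.absNorm (J : Ideal (𝓞 K)) : ℝ) with hN
  have hN1 : 1 ≤ N := one_le_absNorm J
  have hlog : 0 ≤ Real.log N := Real.log_nonneg hN1
  have hN0 : 0 < N := by linarith
  have hB0 : 0 ≤ B := (abs_nonneg _).trans (hB 2 (by norm_num) le_rfl)
  refine ⟨N * B / w + N * Real.log N * A / w, ?_⟩
  have h2 : ∀ᶠ s : ℝ in 𝓝[>] 1, s ≤ 2 :=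
    mem_nhdsWithin_of_mem_nhds (Iic_mem_nhds (by norm_num))
  filter_upwards [hA, h2, self_mem_nhdsWithin] with s hsA hs2 hs
  have hs : 1 < s := hs
  have hc := (hasSum_class J hs).tsum_eq
  have hB := hB s hs hs2
  simp only [nrm]
  rw [hc]
  simp only [← hw, ← hN] at hB ⊢
  set T := ∑' x : (J : Ideal (𝓞 K)), wf s (mixedEmbedding K ((x : 𝓞 K) : K))
  set S := ∑' x : 𝓞 K, wf s (mixedEmbedding K (x : K))
  have hS0 : 0 ≤ S := tsum_nonneg fun _ ↦ wf_nonneg _ _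
  have hs' : 0 < s - 1 := by linarith
  have hNs : N ^ s = N ^ (s - 1) * N := by
    rw [← Real.rpow_add_one hN0.ne', sub_add_cancel]
  have hle : N ^ (s - 1) ≤ N := by
    calc N ^ (s - 1) ≤ N ^ (1 : ℝ) := Real.rpow_le_rpow_of_exponent_le hN1 (by linarith)
      _ = N := Real.rpow_one N
  have hd : |N ^ (s - 1) - 1| ≤ N * Real.log N * (s - 1) := by
    have h := abs_exp_sub_le (a := Real.log N * (s - 1)) (b := 0) (M := Real.log N)
      (by nlinarith) hlog
    rw [Real.exp_zero, Real.exp_log hN0, ← Real.rpow_def_of_pos hN0, sub_zero,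
      abs_of_nonneg (by positivity : 0 ≤ Real.log N * (s - 1))] at h
    linarith
  have e : N ^ s / w * T - S / w = (N ^ (s - 1) * (N * T - S) + (N ^ (s - 1) - 1) * S) / w := by
    rw [hNs]; field_simp; ring
  rw [e, abs_div, abs_of_pos hw0, ← add_div]
  refine div_le_div_of_nonneg_right ((abs_add_le _ _).trans (add_le_add ?_ ?_)) hw0.le
  · rw [abs_mul, abs_of_nonneg (Real.rpow_nonneg hN0.le _)]
    refine mul_le_mul hle ?_ (abs_nonneg _) hN0.le
    rwa [abs_sub_comm]
  · rw [abs_mul, abs_of_nonneg hS0]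
    rw [abs_of_nonneg (by positivity)] at hsA
    calc |N ^ (s - 1) - 1| * S ≤ N * Real.log N * (s - 1) * S := by gcongr
      _ = N * Real.log N * ((s - 1) * S) := by ring
      _ ≤ N * Real.log N * A := by gcongr

/-- The `L`-function of a nontrivial character of the class group is bounded near `1`. -/
theorem exists_char_bound {χ : ClassGroup (𝓞 K) →* ℝ} (hχ : χ ≠ 1) : ∃ B : ℝ,
    ∀ᶠ s : ℝ in 𝓝[>] 1, |∑' I, χ (ClassGroup.mk0 I) * nrm s I| ≤ B := by
  choose B hB using exists_class_bound (K := K)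
  refine ⟨∑ C, |χ C| * B C, ?_⟩
  filter_upwards [eventually_all.mpr hB, self_mem_nhdsWithin] with s hs hs1
  rw [(tsum_char (fun C ↦ χ C) hs1).2]
  have h0 : ∑ C, χ C = 0 := sum_hom_units_eq_zero χ hχ
  set S := (∑' x : 𝓞 K, wf s (mixedEmbedding K (x : K))) / torsionOrder K
  have e : ∑ C, χ C * ∑' I : InClass C, nrm s I.1 =
      ∑ C, χ C * (∑' I : InClass C, nrm s I.1 - S) := by
    simp_rw [mul_sub, Finset.sum_sub_distrib, ← Finset.sum_mul, h0, zero_mul, sub_zero]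
  rw [e]
  refine (Finset.abs_sum_le_sum_abs _ _).trans (Finset.sum_le_sum fun C _ ↦ ?_)
  rw [abs_mul]
  exact mul_le_mul_of_nonneg_left (hs C) (abs_nonneg _)

end IdealZeta

end FourthPower

/-! ### Primes in unramified quadratic extensions -/

namespace FourthPower

set_option linter.unusedSectionVars false

open NumberField Module

section Splitting

variable {L E : Type*} [Field L] [NumberField L] [Field E] [NumberField E] [Algebra L E]

/-- The action of an automorphism on the ring of integers. -/
noncomputable abbrev sg (σ : E ≃ₐ[L] E) : 𝓞 E ≃ₐ[𝓞 L] 𝓞 E := RingOfIntegers.mapAlgEquiv σ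

/-- The extension of an ideal of the base to the top field. -/
noncomputable abbrev ext (E : Type*) [Field E] [NumberField E] [Algebra L E] (I : Ideal (𝓞 L)) :
    Ideal (𝓞 E) := I.map (algebraMap (𝓞 L) (𝓞 E))

lemma mem_map_sg (σ : E ≃ₐ[L] E) (I : Ideal (𝓞 E)) (x : 𝓞 E) : sg σ x ∈ I.map (sg σ) ↔ x ∈ I := by
  constructor
  · intro h
    have := (Ideal.mem_map_of_equiv (sg σ) _).mp h
    obtain ⟨y, hy, hxy⟩ := this
    rwa [← (sg σ).injective hxy]
  · exact Ideal.mem_map_of_mem _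

lemma ext_map_sg (σ : E ≃ₐ[L] E) (I : Ideal (𝓞 L)) : (ext E I).map (sg σ) = ext E I := by
  change Ideal.map ((sg σ : 𝓞 E ≃ₐ[𝓞 L] 𝓞 E) : 𝓞 E →+* 𝓞 E) (ext E I) = _
  rw [Ideal.map_map]
  congr 1
  ext x
  exact congrArg _ ((sg σ).commutes x)

lemma absNorm_ext (h2 : finrank L E = 2) (I : Ideal (𝓞 L)) :
    Ideal.absNorm (ext E I) = Ideal.absNorm I ^ 2 := by
  rw [Ideal.absNorm_algebraMap, ← IsFractionRing.finrank_eq (𝓞 L) L (𝓞 E) E, h2]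

lemma absNorm_relNorm' (I : Ideal (𝓞 E)) :
    Ideal.absNorm (Ideal.relNorm (𝓞 L) I) = Ideal.absNorm I :=
  Ideal.absNorm_relNorm (𝓞 L) (𝓞 E) I

lemma absNorm_map_sg (σ : E ≃ₐ[L] E) (I : Ideal (𝓞 E)) :
    Ideal.absNorm (I.map (sg σ)) = Ideal.absNorm I := by
  rw [← absNorm_relNorm' (L := L), Ideal.relNorm_map_algEquiv, absNorm_relNorm']

/-- An ideal dividing another of the same nonzero norm equals it. -/
lemma eq_of_le_of_absNorm {K : Type*} [Field K] [NumberField K] {I J : Ideal (𝓞 K)} (h : I ≤ J)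
    (hn : Ideal.absNorm I = Ideal.absNorm J) (h0 : I ≠ ⊥) : I = J := by
  obtain ⟨Q, rfl⟩ := Ideal.dvd_iff_le.mpr h
  have hJ : Ideal.absNorm J ≠ 0 := by
    rw [ne_eq, Ideal.absNorm_eq_zero_iff]
    rintro rfl
    exact h0 (Ideal.bot_mul _)
  rw [map_mul] at hn
  have hQ : Ideal.absNorm Q = 1 := by
    have : Ideal.absNorm J * Ideal.absNorm Q = Ideal.absNorm J * 1 := by rw [hn, mul_one]
    exact Nat.eq_of_mul_eq_mul_left (Nat.pos_of_ne_zero hJ) this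
  rw [Ideal.absNorm_eq_one_iff.mp hQ, Ideal.mul_top]

variable (L) in
/-- The prime below. -/
noncomputable abbrev below (P : Ideal (𝓞 E)) : Ideal (𝓞 L) := P.under (𝓞 L)

lemma sg_sub_mem_of_absNorm_eq (σ : E ≃ₐ[L] E) {P : Ideal (𝓞 E)} [P.IsMaximal] (hP : P ≠ ⊥)
    (hσP : P.map (sg σ) = P) (hN : Ideal.absNorm P = Ideal.absNorm (below L P)) (z : 𝓞 E) :
    sg σ z - z ∈ P := by
  have hfin : Finite (𝓞 E ⧸ P) := Ideal.finiteQuotientOfFreeOfNeBot _ hP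
  have hp : below L P ≠ ⊥ := Ideal.under_ne_bot _ hP
  have hfin' : Finite (𝓞 L ⧸ below L P) := Ideal.finiteQuotientOfFreeOfNeBot _ hp
  have hinj : Function.Injective (algebraMap (𝓞 L ⧸ below L P) (𝓞 E ⧸ P)) :=
    Ideal.algebraMap_quotient_injective
  have hcard : Nat.card (𝓞 L ⧸ below L P) = Nat.card (𝓞 E ⧸ P) := by
    rw [← Submodule.cardQuot_apply, ← Submodule.cardQuot_apply, ← Ideal.absNorm_apply,
      ← Ideal.absNorm_apply, hN]
  have hsurj : Function.Surjective (algebraMap (𝓞 L ⧸ below L P) (𝓞 E ⧸ P)) :=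
    ((Nat.bijective_iff_injective_and_card _).mpr ⟨hinj, hcard⟩).2
  obtain ⟨a, ha⟩ := hsurj (Ideal.Quotient.mk P z)
  obtain ⟨a, rfl⟩ := Ideal.Quotient.mk_surjective a
  have h1 : z - algebraMap (𝓞 L) (𝓞 E) a ∈ P := by
    rw [← Ideal.Quotient.eq, ← ha]
    rfl
  have h2 : sg σ z - algebraMap (𝓞 L) (𝓞 E) a ∈ P := by
    have := (mem_map_sg σ P _).mpr h1
    rwa [hσP, map_sub, (sg σ).commutes] at this
  have := P.sub_mem h2 h1
  rwa [sub_sub_sub_cancel_right] at this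

/-- Decomposition of primes in an unramified quadratic extension: a prime is either moved by `σ` and
has residue degree `1`, or is stable, is the extension of the prime below and has residue degree `2`. -/
theorem splitting (h2 : finrank L E = 2) (σ : E ≃ₐ[L] E) {P : Ideal (𝓞 E)} [hPm : P.IsMaximal]
    (hP : P ≠ ⊥) (hun : ∃ z : 𝓞 E, sg σ z - z ∉ P) :
    (P.map (sg σ) ≠ P ∧ Ideal.relNorm (𝓞 L) P = below L P ∧
      Ideal.absNorm P = Ideal.absNorm (below L P) ∧ ext E (below L P) = P * P.map (sg σ)) ∨
    (P.map (sg σ) = P ∧ Ideal.absNorm P = Ideal.absNorm (below L P) ^ 2 ∧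
      ext E (below L P) = P) := by
  have hp : below L P ≠ ⊥ := Ideal.under_ne_bot _ hP
  have hpm : (below L P).IsMaximal := Ideal.IsMaximal.under _ P
  obtain hf : Ideal.relNorm (𝓞 L) P = below L P ^ P.inertiaDeg (𝓞 L) :=
    Ideal.relNorm_eq_pow_of_isMaximal P (below L P)
  set f := P.inertiaDeg (𝓞 L) with hfdef
  set q := Ideal.absNorm (below L P) with hq
  have hNP : Ideal.absNorm P = q ^ f := by rw [← absNorm_relNorm' (L := L), hf, map_pow]
  have hq1 : q ≠ 1 := by
    rw [hq, ne_eq, Ideal.absNorm_eq_one_iff]; exact hpm.ne_top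
  have hq0 : q ≠ 0 := by
    rw [hq, ne_eq, Ideal.absNorm_eq_zero_iff]; exact hp
  have hq2 : 1 < q := by omega
  have hf0 : f ≠ 0 := by
    intro h
    rw [h, pow_zero, Ideal.absNorm_eq_one_iff] at hNP
    exact hPm.ne_top hNP
  have hle : ext E (below L P) ≤ P := Ideal.map_comap_le
  have hext0 : ext E (below L P) ≠ ⊥ := by
    rw [ne_eq, ← Ideal.absNorm_eq_zero_iff, absNorm_ext h2]
    positivity
  by_cases hσ : P.map (sg σ) = P
  · right
    have hf2 : f ≤ 2 := by
      have := Ideal.absNorm_dvd_absNorm_of_le hle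
      rw [absNorm_ext h2, hNP] at this
      exact (Nat.pow_dvd_pow_iff_le_right hq2).mp this
    have hf1 : f ≠ 1 := by
      intro h1
      obtain ⟨z, hz⟩ := hun
      exact hz (sg_sub_mem_of_absNorm_eq σ hP hσ (by rw [hNP, h1, pow_one]) z)
    have hf2 : f = 2 := by omega
    refine ⟨hσ, by rw [hNP, hf2], eq_of_le_of_absNorm hle ?_ hext0⟩
    rw [absNorm_ext h2, hNP, hf2]
  · left
    have hPp : Prime P := Ideal.prime_of_isPrime hP hPm.isPrime
    have hσm : (P.map (sg σ)).IsPrime := Ideal.map_isPrime_of_equiv (sg σ)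
    have hσ0 : P.map (sg σ) ≠ ⊥ := by
      rw [ne_eq, ← Ideal.absNorm_eq_zero_iff, absNorm_map_sg, Ideal.absNorm_eq_zero_iff]
      exact hP
    have hσp : Prime (P.map (sg σ)) := Ideal.prime_of_isPrime hσ0 hσm
    have hle2 : ext E (below L P) ≤ P.map (sg σ) := by
      rw [← ext_map_sg σ]
      exact Ideal.map_mono hle
    have hdvd : P * P.map (sg σ) ∣ ext E (below L P) := by
      obtain ⟨Q, hQ⟩ := Ideal.dvd_iff_le.mpr hle
      have h1 : P.map (sg σ) ∣ P * Q := by rw [← hQ]; exact Ideal.dvd_iff_le.mpr hle2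
      rcases hσp.dvd_or_dvd h1 with h | h
      · have := Ideal.dvd_iff_le.mp h
        have hmax : (P : Ideal (𝓞 E)) = P.map (sg σ) := hPm.eq_of_le hσm.ne_top this
        exact absurd hmax.symm hσ
      · rw [hQ]; exact mul_dvd_mul_left _ h
    have hle3 := Ideal.dvd_iff_le.mp hdvd
    have hf1 : f = 1 := by
      have := Ideal.absNorm_dvd_absNorm_of_le hle3
      rw [absNorm_ext h2, map_mul, absNorm_map_sg, hNP, ← pow_add] at this
      have := (Nat.pow_dvd_pow_iff_le_right hq2).mp this
      omega
    refine ⟨hσ, by rw [hf, hf1, pow_one], by rw [hNP, hf1, pow_one],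
      eq_of_le_of_absNorm hle3 ?_ hext0⟩
    rw [absNorm_ext h2, map_mul, absNorm_map_sg, hNP, hf1, ← pow_add]

end Splitting

end FourthPower

/-! ### A Herbrand quotient estimate -/

namespace FourthPower

set_option linter.unusedSectionVars false

section Squares

open Module

lemma index_nsmul_prod {A B : Type*} [AddCommGroup A] [AddCommGroup B] :
    (nsmulAddMonoidHom (α := A × B) 2).range.index =
      (nsmulAddMonoidHom (α := A) 2).range.index * (nsmulAddMonoidHom (α := B) 2).range.index := by
  rw [← AddSubgroup.index_prod]
  congr 1
  ext ⟨a, b⟩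
  simp [AddSubgroup.mem_prod, AddMonoidHom.mem_range, Prod.ext_iff]

lemma finrank_range_add_ker {A B : Type*} [AddCommGroup A] [AddCommGroup B] [Module.Finite ℤ A]
    (f : A →ₗ[ℤ] B) : finrank ℤ (LinearMap.range f) + finrank ℤ (LinearMap.ker f) = finrank ℤ A := by
  rw [← f.quotKerEquivRange.finrank_eq, Submodule.finrank_quotient_add_finrank]

lemma finrank_finite (T : Type*) [AddCommGroup T] [Finite T] : finrank ℤ T = 0 := by
  rw [Module.finrank_eq_zero_iff_isTorsion]
  intro x
  have : (addOrderOf x : ℤ) ≠ 0 := by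
    exact_mod_cast (addOrderOf_pos x).ne'
  exact ⟨⟨addOrderOf x, mem_nonZeroDivisors_of_ne_zero this⟩, by
    change (addOrderOf x : ℤ) • x = 0
    rw [natCast_zsmul, addOrderOf_nsmul_eq_zero]⟩

lemma index_two_nsmul_aux {A F T : Type*} [AddCommGroup A] [Module.Finite ℤ A] [AddCommGroup F]
    [Module.Finite ℤ F] [Free ℤ F] [AddCommGroup T] [Finite T] (f : A ≃+ F × T) :
    (nsmulAddMonoidHom (α := A) 2).range.index =
      2 ^ finrank ℤ A * Nat.card (nsmulAddMonoidHom (α := A) 2).ker := by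
  have h1 : (nsmulAddMonoidHom (α := A) 2).range.index =
      (nsmulAddMonoidHom (α := F × T) 2).range.index := by
    rw [← AddSubgroup.index_map_equiv _ f]
    congr 1
    ext x
    constructor
    · rintro ⟨_, ⟨y, rfl⟩, rfl⟩
      exact ⟨f y, by simp⟩
    · rintro ⟨y, rfl⟩
      exact ⟨2 • f.symm y, ⟨f.symm y, rfl⟩, by simp⟩
  have h2 : finrank ℤ A = finrank ℤ F := by
    rw [f.toIntLinearEquiv.finrank_eq, ← finrank_range_add_ker (LinearMap.fst ℤ F T),
      Submodule.range_fst, finrank_top]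
    have e := LinearEquiv.ofInjective (LinearMap.inr ℤ F T) LinearMap.inr_injective
    rw [LinearMap.range_inr] at e
    rw [← e.finrank_eq, finrank_finite T, add_zero]
  have h3 : Nat.card (nsmulAddMonoidHom (α := A) 2).ker =
      Nat.card (nsmulAddMonoidHom (α := T) 2).ker := by
    symm
    refine Nat.card_congr (Equiv.ofBijective
      (fun t => ⟨f.symm (0, t.1), ?_⟩) ⟨?_, ?_⟩)
    · have := t.2
      rw [AddMonoidHom.mem_ker, nsmulAddMonoidHom_apply] at this ⊢
      rw [← map_nsmul]
      simp [this]
    · rintro ⟨a, ha⟩ ⟨b, hb⟩ h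
      simpa using h
    · rintro ⟨a, ha⟩
      rw [AddMonoidHom.mem_ker, nsmulAddMonoidHom_apply] at ha
      have h : 2 • f a = 0 := by rw [← map_nsmul, ha, map_zero]
      have h1 : 2 • (f a).1 = 0 := congrArg Prod.fst h
      have h2 : 2 • (f a).2 = 0 := congrArg Prod.snd h
      have h3 : (f a).1 = 0 := by
        have : IsTorsionFree ℤ F := inferInstance
        have := smul_eq_zero (r := (2 : ℤ)) (m := (f a).1)
        rw [ofNat_zsmul] at this
        exact (this.mp h1).resolve_left (by norm_num)
      refine ⟨⟨(f a).2, h2⟩, ?_⟩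
      apply Subtype.ext
      change f.symm (0, (f a).2) = a
      rw [← h3]
      exact f.symm_apply_apply a
  rw [h1, index_nsmul_prod, AddSubgroup.index_range_nsmul, h2, h3, AddSubgroup.index_range]

/-- In a finitely generated abelian group, the index of `2A` is `2 ^ rank A` times the number of
elements killed by `2`. -/
lemma index_two_nsmul (A : Type*) [AddCommGroup A] [Module.Finite ℤ A] :
    (nsmulAddMonoidHom (α := A) 2).range.index =
      2 ^ finrank ℤ A * Nat.card (nsmulAddMonoidHom (α := A) 2).ker := by
  classical
  have : AddGroup.FG A := Module.Finite.iff_addGroup_fg.mp inferInstance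
  obtain ⟨n, ι, _, p, hp, e, ⟨f⟩⟩ := AddCommGroup.equiv_free_prod_directSum_zmod A
  have hfin : Finite (DirectSum ι fun i => ZMod (p i ^ e i)) := by
    have : ∀ i, NeZero (p i ^ e i) := fun i => ⟨pow_ne_zero _ (hp i).ne_zero⟩
    exact Finite.of_equiv _ (DFinsupp.equivFunOnFintype (ι := ι)
      (β := fun i => ZMod (p i ^ e i))).symm
  exact index_two_nsmul_aux f

lemma relIndex_two_nsmul {M : Type*} [AddCommGroup M] [Module.Finite ℤ M] (N : Submodule ℤ M) :
    (N.toAddSubgroup.map (nsmulAddMonoidHom 2)).relIndex N.toAddSubgroup =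
      2 ^ finrank ℤ N * Nat.card (nsmulAddMonoidHom (α := N) 2).ker := by
  rw [← index_two_nsmul, AddSubgroup.relIndex,
    AddSubgroup.addSubgroupOf_map_nsmulAddMonoidHom_eq_range]

lemma map_toAddSubgroup_relIndex {M : Type*} [AddCommGroup M] (f : M →ₗ[ℤ] M)
    (N : Submodule ℤ M) (hN : ∀ x ∈ N, f x = 2 • x ∨ f (-x) = 2 • x) :
    (N.toAddSubgroup.map (nsmulAddMonoidHom 2)).relIndex (LinearMap.range f).toAddSubgroup =
      (N ⊔ LinearMap.ker f).toAddSubgroup.index := by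
  have h1 : N.toAddSubgroup.map (nsmulAddMonoidHom 2) = N.toAddSubgroup.map f.toAddMonoidHom := by
    ext y
    simp only [AddSubgroup.mem_map]
    constructor
    · rintro ⟨x, hx, rfl⟩
      rcases hN x hx with h | h
      · exact ⟨x, hx, h⟩
      · exact ⟨-x, N.neg_mem hx, h⟩
    · rintro ⟨x, hx, rfl⟩
      rcases hN x hx with h | h
      · exact ⟨x, hx, h.symm⟩
      · refine ⟨-x, N.neg_mem hx, ?_⟩
        change 2 • (-x) = f x
        rw [smul_neg, ← h, map_neg, neg_neg]
  have h2 : (LinearMap.range f).toAddSubgroup = (⊤ : AddSubgroup M).map f.toAddMonoidHom := by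
    ext y
    simp
  rw [h1, h2, AddSubgroup.relIndex_map_map, top_sup_eq, AddSubgroup.relIndex_top_right]
  congr 1
  ext y
  simp only [AddSubgroup.mem_sup, Submodule.mem_toAddSubgroup, Submodule.mem_sup]
  rfl

/-- A Herbrand-quotient estimate for an involution `σ` of a finitely generated abelian group `M`
(written additively): if `M` has rank `2r - 1`, its invariants rank `r - 1`, and `σ` fixes
the elements killed by `2`, then
`2 [ker (σ - 1) : im (σ + 1)] ≤ [ker (σ + 1) : im (σ - 1)]`. Both `2 ker (σ - 1)` and
`2 ker (σ + 1)` are images under `σ ± 1`, with the same index in the respective range. -/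
lemma herbrand {M : Type*} [AddCommGroup M] [Module.Finite ℤ M] (σ : M →ₗ[ℤ] M)
    (hσ : ∀ x, σ (σ x) = x) (r : ℕ) (hM : finrank ℤ M + 1 = 2 * r)
    (hr : finrank ℤ (LinearMap.ker (σ - 1)) + 1 = r)
    (htor : ∀ x, x + x = 0 → σ x = x) (hfin : Finite {x : M // 2 • x = 0}) :
    2 * (LinearMap.range (σ + 1)).toAddSubgroup.relIndex (LinearMap.ker (σ - 1)).toAddSubgroup ≤
      (LinearMap.range (σ - 1)).toAddSubgroup.relIndex (LinearMap.ker (σ + 1)).toAddSubgroup ∧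
    (LinearMap.range (σ + 1)).toAddSubgroup.relIndex (LinearMap.ker (σ - 1)).toAddSubgroup ≠ 0 := by
  set P := LinearMap.ker (σ - 1)
  set K := LinearMap.ker (σ + 1)
  set V := LinearMap.range (σ + 1)
  set B := LinearMap.range (σ - 1)
  have mP : ∀ x, x ∈ P ↔ σ x = x := fun x => by
    simp [P, LinearMap.mem_ker, sub_eq_zero]
  have mK : ∀ x, x ∈ K ↔ σ x = -x := fun x => by
    simp [K, LinearMap.mem_ker, add_eq_zero_iff_eq_neg]
  have hVP : V ≤ P := by
    rintro _ ⟨x, rfl⟩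
    simp [mP, hσ, add_comm]
  have hBK : B ≤ K := by
    rintro _ ⟨x, rfl⟩
    simp [mK, hσ]
  have e1 := map_toAddSubgroup_relIndex (σ + 1) P (fun x hx => Or.inl (by
    simp [(mP x).mp hx, two_nsmul]))
  have e2 := map_toAddSubgroup_relIndex (σ - 1) K (fun x hx => Or.inr (by
    simp [(mK x).mp hx, two_nsmul]))
  change _ = (P ⊔ K).toAddSubgroup.index at e1
  change _ = (K ⊔ P).toAddSubgroup.index at e2
  rw [sup_comm] at e2
  set m := (P ⊔ K).toAddSubgroup.index
  have l1 : P.toAddSubgroup.map (nsmulAddMonoidHom 2) ≤ V.toAddSubgroup := by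
    rintro _ ⟨x, hx, rfl⟩
    exact ⟨x, by simp [(mP x).mp hx, two_nsmul]⟩
  have l2 : K.toAddSubgroup.map (nsmulAddMonoidHom 2) ≤ B.toAddSubgroup := by
    rintro _ ⟨x, hx, rfl⟩
    exact ⟨-x, by simp [(mK x).mp hx, two_nsmul]⟩
  have r1 := AddSubgroup.relIndex_mul_relIndex _ _ P.toAddSubgroup l1 hVP
  have r2 := AddSubgroup.relIndex_mul_relIndex _ _ K.toAddSubgroup l2 hBK
  rw [e1, relIndex_two_nsmul] at r1
  rw [e2, relIndex_two_nsmul] at r2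
  have htors : Nat.card (nsmulAddMonoidHom (α := P) 2).ker =
      Nat.card (nsmulAddMonoidHom (α := K) 2).ker := by
    have key : ∀ x : M, 2 • x = 0 → x ∈ P ∧ x ∈ K := fun x hx => by
      rw [two_nsmul] at hx
      exact ⟨(mP x).mpr (htor x hx), (mK x).mpr (by rw [htor x hx]; exact eq_neg_of_add_eq_zero_left hx)⟩
    have e : ∀ N : Submodule ℤ M, (∀ x : M, 2 • x = 0 → x ∈ N) →
        Nat.card (nsmulAddMonoidHom (α := N) 2).ker = Nat.card {x : M // 2 • x = 0} := by
      intro N hN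
      refine Nat.card_congr ⟨fun x => ⟨x.1.1, congrArg Subtype.val x.2⟩,
        fun x => ⟨⟨x.1, hN _ x.2⟩, Subtype.ext x.2⟩, fun x => rfl, fun x => rfl⟩
    rw [e P fun x hx => (key x hx).1, e K fun x hx => (key x hx).2]
  have hrank : finrank ℤ P + 1 ≤ finrank ℤ K := by
    have := finrank_range_add_ker (σ + 1)
    have h2 : finrank ℤ V ≤ finrank ℤ P := Submodule.finrank_mono hVP
    change finrank ℤ V + finrank ℤ K = _ at this
    omega
  have hpos : 0 < Nat.card (nsmulAddMonoidHom (α := P) 2).ker := by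
    have : Finite (nsmulAddMonoidHom (α := P) 2).ker := by
      exact Finite.of_injective (β := {x : M // 2 • x = 0})
        (fun x => ⟨x.1.1, congrArg Subtype.val x.2⟩)
        (fun x y h => Subtype.ext (Subtype.ext (Subtype.mk.inj h)))
    exact Nat.card_pos
  rw [← htors] at r2
  set t := Nat.card (nsmulAddMonoidHom (α := P) 2).ker
  have hle : 2 * (2 ^ finrank ℤ P * t) ≤ 2 ^ finrank ℤ K * t := by
    calc _ = 2 ^ (finrank ℤ P + 1) * t := by ring
      _ ≤ _ := Nat.mul_le_mul_right _ (Nat.pow_le_pow_right (by norm_num) hrank)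
  have hm : 0 < m := by
    rcases Nat.eq_zero_or_pos m with h | h
    · rw [h, zero_mul] at r1
      have : 0 < 2 ^ finrank ℤ P * t := by positivity
      omega
    · exact h
  refine ⟨?_, fun h => ?_⟩
  swap
  · rw [h, mul_zero] at r1
    have : 0 < 2 ^ finrank ℤ P * t := by positivity
    omega
  rw [← r1, ← r2, ← mul_assoc, mul_comm 2 m, mul_assoc] at hle
  exact Nat.le_of_mul_le_mul_left hle hm

end Squares
end FourthPower

/-! ### Maps between class groups -/

namespace FourthPower

set_option linter.unusedSectionVars false

section ClassMaps

open NumberField Module nonZeroDivisors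

section General

variable {A B : Type*} [CommRing A] [IsDedekindDomain A] [CommRing B] [IsDedekindDomain B]

/-- The ideal class of a nonzero ideal. -/
noncomputable def cls (I : Ideal A) (hI : I ≠ ⊥) : ClassGroup A :=
  ClassGroup.mk0 ⟨I, mem_nonZeroDivisors_iff_ne_zero.mpr hI⟩

lemma mk0_eq_cls (I : (Ideal A)⁰) :
    ClassGroup.mk0 I = cls (I : Ideal A) (mem_nonZeroDivisors_iff_ne_zero.mp I.2) := rfl

lemma cls_surjective (C : ClassGroup A) : ∃ I : Ideal A, ∃ h : I ≠ ⊥, cls I h = C := by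
  obtain ⟨I, rfl⟩ := ClassGroup.mk0_surjective C
  exact ⟨I, mem_nonZeroDivisors_iff_ne_zero.mp I.2, rfl⟩

lemma mul_ne_bot' {I J : Ideal A} (hI : I ≠ ⊥) (hJ : J ≠ ⊥) : I * J ≠ ⊥ :=
  mul_ne_zero hI hJ

lemma span_ne_bot {x : A} (hx : x ≠ 0) : Ideal.span {x} ≠ ⊥ := by
  rwa [ne_eq, Ideal.span_singleton_eq_bot]

lemma cls_mul {I J : Ideal A} (hI : I ≠ ⊥) (hJ : J ≠ ⊥) :
    cls (I * J) (mul_ne_bot' hI hJ) = cls I hI * cls J hJ := by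
  rw [cls, cls, cls, ← map_mul]; rfl

lemma cls_eq_iff {I J : Ideal A} (hI : I ≠ ⊥) (hJ : J ≠ ⊥) :
    cls I hI = cls J hJ ↔ ∃ x y : A, x ≠ 0 ∧ y ≠ 0 ∧ Ideal.span {x} * I = Ideal.span {y} * J :=
  (ClassGroup.mk0_eq_mk0_iff).trans (by
    constructor
    · rintro ⟨x, y, hx, hy, h⟩; exact ⟨x, y, hx, hy, h⟩
    · rintro ⟨x, y, hx, hy, h⟩; exact ⟨x, y, hx, hy, h⟩)

lemma cls_one : cls (⊤ : Ideal A) top_ne_bot = 1 := by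
  have := cls_mul (A := A) (I := ⊤) (J := ⊤) top_ne_bot top_ne_bot
  simpa using this

lemma cls_span {x : A} (hx : x ≠ 0) : cls (Ideal.span {x}) (span_ne_bot hx) = 1 := by
  rw [← cls_one, cls_eq_iff]
  exact ⟨1, x, one_ne_zero, hx, by simp⟩

lemma cls_eq_one {I : Ideal A} (hI : I ≠ ⊥) (h : cls I hI = 1) :
    ∃ x : A, x ≠ 0 ∧ I = Ideal.span {x} := by
  have := ClassGroup.mk0_eq_one_iff (I := I) (mem_nonZeroDivisors_iff_ne_zero.mpr hI) |>.mp h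
  obtain ⟨x, hx⟩ := this.principal
  rw [Ideal.submodule_span_eq] at hx
  refine ⟨x, ?_, hx⟩
  rintro rfl
  exact hI (by simpa using hx)

/-- A multiplicative map on nonzero ideals which sends principal ideals to principal ideals induces
a homomorphism of class groups. -/
lemma exists_classLift (φ : Ideal A →* Ideal B) (h0 : ∀ I, I ≠ ⊥ → φ I ≠ ⊥)
    (h1 : ∀ x : A, ∃ y, φ (Ideal.span {x}) = Ideal.span {y}) :
    ∃ f : ClassGroup A →* ClassGroup B, ∀ (I : Ideal A) (hI : I ≠ ⊥), f (cls I hI) =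
      cls (φ I) (h0 I hI) := by
  have h1' : ∀ x : A, ∀ hx : x ≠ 0, cls _ (h0 _ (span_ne_bot hx)) = 1 := by
    intro x hx
    obtain ⟨y, hy⟩ := h1 x
    have hy0 : y ≠ 0 := by
      rintro rfl
      exact h0 _ (span_ne_bot hx) (by simpa using hy)
    rw [← cls_span hy0]
    congr 1
  choose r hr hr' using cls_surjective (A := A)
  have key : ∀ (I J : Ideal A) (hI : I ≠ ⊥) (hJ : J ≠ ⊥), cls I hI = cls J hJ →
      cls (φ I) (h0 I hI) = cls (φ J) (h0 J hJ) := by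
    intro I J hI hJ h
    obtain ⟨x, y, hx, hy, hxy⟩ := (cls_eq_iff hI hJ).mp h
    have e1 := cls_mul (h0 _ (span_ne_bot hx)) (h0 I hI)
    have e2 := cls_mul (h0 _ (span_ne_bot hy)) (h0 J hJ)
    rw [h1' x hx, one_mul] at e1
    rw [h1' y hy, one_mul] at e2
    rw [← e1, ← e2]
    congr 1
    rw [← map_mul, ← map_mul, hxy]
  refine ⟨MonoidHom.mk' (fun C => cls (φ (r C)) (h0 _ (hr C))) ?_, ?_⟩
  · intro C C'
    rw [← cls_mul]
    have : cls (r (C * C')) (hr _) = cls (r C * r C') (mul_ne_bot' (hr _) (hr _)) := by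
      rw [cls_mul (hr _) (hr _), hr', hr', hr']
    rw [key _ _ _ _ this]
    congr 1
    rw [map_mul]
  · intro I hI
    exact key _ _ _ _ (hr' _)

end General

variable {L E : Type*} [Field L] [NumberField L] [Field E] [NumberField E] [Algebra L E]

lemma ext_ne_bot {I : Ideal (𝓞 L)} (hI : I ≠ ⊥) : ext E I ≠ ⊥ :=
  (Ideal.map_eq_bot_iff_of_injective (FaithfulSMul.algebraMap_injective (𝓞 L) (𝓞 E))).not.mpr hI

lemma map_sg_ne_bot (σ : E ≃ₐ[L] E) {I : Ideal (𝓞 E)} (hI : I ≠ ⊥) : I.map (sg σ) ≠ ⊥ := by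
  rw [ne_eq, ← Ideal.absNorm_eq_zero_iff, absNorm_map_sg, Ideal.absNorm_eq_zero_iff]
  exact hI

lemma map_sg_span (σ : E ≃ₐ[L] E) (x : 𝓞 E) :
    (Ideal.span {x}).map (sg σ) = Ideal.span {sg σ x} := by
  rw [Ideal.map_span, Set.image_singleton]

lemma ext_span (x : 𝓞 L) : ext E (Ideal.span {x}) = Ideal.span {algebraMap (𝓞 L) (𝓞 E) x} := by
  rw [ext, Ideal.map_span, Set.image_singleton]

lemma exists_extHom (L E : Type*) [Field L] [NumberField L] [Field E] [NumberField E]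
    [Algebra L E] : ∃ j : ClassGroup (𝓞 L) →* ClassGroup (𝓞 E),
    ∀ (I : Ideal (𝓞 L)) (hI : I ≠ ⊥), j (cls I hI) = cls (ext E I) (ext_ne_bot hI) :=
  exists_classLift (Ideal.mapHom (algebraMap (𝓞 L) (𝓞 E))).toMonoidHom (fun _ h => ext_ne_bot h)
    (fun x => ⟨_, ext_span x⟩)

lemma exists_sgHom (σ : E ≃ₐ[L] E) : ∃ s : ClassGroup (𝓞 E) →* ClassGroup (𝓞 E),
    ∀ (I : Ideal (𝓞 E)) (hI : I ≠ ⊥), s (cls I hI) = cls (I.map (sg σ)) (map_sg_ne_bot σ hI) :=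
  exists_classLift (Ideal.mapHom (sg σ : 𝓞 E →+* 𝓞 E)).toMonoidHom (fun _ h => map_sg_ne_bot σ h)
    (fun x => ⟨_, map_sg_span σ x⟩)

lemma exists_normHom (L E : Type*) [Field L] [NumberField L] [Field E] [NumberField E]
    [Algebra L E] : ∃ N : ClassGroup (𝓞 E) →* ClassGroup (𝓞 L),
    ∀ (I : Ideal (𝓞 E)) (hI : I ≠ ⊥), N (cls I hI) =
      cls (Ideal.relNorm (𝓞 L) I) (Ideal.relNorm_eq_bot_iff.not.mpr hI) :=
  exists_classLift (Ideal.relNorm (𝓞 L) : Ideal (𝓞 E) →*₀ Ideal (𝓞 L)).toMonoidHom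
    (fun _ h => Ideal.relNorm_eq_bot_iff.not.mpr h)
    (fun x => ⟨_, Ideal.relNorm_singleton (𝓞 L) x⟩)

/-- In an unramified quadratic extension, an invariant ideal comes from the base field. -/
lemma exists_ext_of_invariant (h2 : finrank L E = 2) (σ : E ≃ₐ[L] E)
    (hun : ∀ P : Ideal (𝓞 E), P.IsMaximal → P ≠ ⊥ → ∃ z : 𝓞 E, sg σ z - z ∉ P)
    (I : Ideal (𝓞 E)) (hI : I ≠ ⊥) (hσ : I.map (sg σ) = I) :
    ∃ J : Ideal (𝓞 L), J ≠ ⊥ ∧ I = ext E J := by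
  induction hn : Ideal.absNorm I using Nat.strong_induction_on generalizing I with
  | _ n ih =>
  by_cases htop : I = ⊤
  · exact ⟨⊤, top_ne_bot, by rw [htop, ext, Ideal.map_top]⟩
  obtain ⟨P, hPm, hIP⟩ := Ideal.exists_le_maximal I htop
  have hP0 : P ≠ ⊥ := fun h => hI (le_bot_iff.mp (h ▸ hIP))
  have hp0 : below L P ≠ ⊥ := Ideal.under_ne_bot _ hP0
  have hdvd : ext E (below L P) ∣ I := by
    rcases splitting h2 σ hP0 (hun P hPm hP0) with ⟨hne, -, -, he⟩ | ⟨-, -, he⟩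
    · have hσP : I ≤ P.map (sg σ) := by
        rw [← hσ]; exact Ideal.map_mono hIP
      have hPp : Prime P := Ideal.prime_of_isPrime hP0 hPm.isPrime
      have hσm : (P.map (sg σ)).IsPrime := Ideal.map_isPrime_of_equiv (sg σ)
      have hσp : Prime (P.map (sg σ)) := Ideal.prime_of_isPrime (map_sg_ne_bot σ hP0) hσm
      rw [he]
      obtain ⟨Q, hQ⟩ := Ideal.dvd_iff_le.mpr hIP
      have h1 : P.map (sg σ) ∣ P * Q := by rw [← hQ]; exact Ideal.dvd_iff_le.mpr hσP
      rcases hσp.dvd_or_dvd h1 with h | h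
      · exact absurd (hPm.eq_of_le hσm.ne_top (Ideal.dvd_iff_le.mp h)).symm hne
      · rw [hQ]; exact mul_dvd_mul_left _ h
    · rw [he]; exact Ideal.dvd_iff_le.mpr hIP
  obtain ⟨Q, hQ⟩ := hdvd
  have he0 := ext_ne_bot (E := E) hp0
  have hQ0 : Q ≠ ⊥ := by
    rintro rfl
    exact hI (by rw [hQ, Ideal.mul_bot])
  have hQσ : Q.map (sg σ) = Q := by
    have h1 : ext E (below L P) * Q.map (sg σ) = ext E (below L P) * Q := by
      rw [← hQ]
      conv_rhs => rw [← hσ, hQ, Ideal.map_mul, ext_map_sg]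
    exact mul_left_cancel₀ he0 h1
  have hlt : Ideal.absNorm Q < n := by
    have hQn : Ideal.absNorm Q ≠ 0 := by rwa [ne_eq, Ideal.absNorm_eq_zero_iff]
    have hpn : Ideal.absNorm (ext E (below L P)) ≠ 0 := by rwa [ne_eq, Ideal.absNorm_eq_zero_iff]
    have hpn1 : Ideal.absNorm (ext E (below L P)) ≠ 1 := by
      rw [ne_eq, Ideal.absNorm_eq_one_iff]
      intro h
      have : ext E (below L P) ≤ P := Ideal.map_comap_le
      rw [h] at this
      exact hPm.ne_top (top_le_iff.mp this)
    have : n = Ideal.absNorm (ext E (below L P)) * Ideal.absNorm Q := by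
      rw [← hn, ← map_mul, ← hQ]
    rw [this]
    exact lt_mul_left (Nat.pos_of_ne_zero hQn) (by omega)
  obtain ⟨J, hJ0, hJ⟩ := ih _ hlt Q hQ0 hQσ rfl
  refine ⟨below L P * J, mul_ne_bot' hp0 hJ0, ?_⟩
  rw [hQ, hJ, ext, ext, ext, Ideal.map_mul]

end ClassMaps
end FourthPower

/-! ### Hilbert 90 and ambiguous ideals -/

namespace FourthPower

set_option linter.unusedSectionVars false

section Ambiguous

open NumberField Module nonZeroDivisors

variable {L E : Type*} [Field L] [NumberField L] [Field E] [NumberField E] [Algebra L E]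

lemma galois_of_ne_one (h2 : finrank L E = 2) {σ : E ≃ₐ[L] E} (hσ : σ ≠ 1) :
    (∀ τ : E ≃ₐ[L] E, τ = 1 ∨ τ = σ) ∧ IsGalois L E := by
  classical
  have hle : Fintype.card (E ≃ₐ[L] E) ≤ 2 := h2 ▸ AlgEquiv.card_le
  have hge : 1 < Fintype.card (E ≃ₐ[L] E) := Fintype.one_lt_card_iff.mpr ⟨σ, 1, hσ⟩
  refine ⟨fun τ => ?_, IsGalois.of_card_aut_eq_finrank _ _ (by rw [h2, Nat.card_eq_fintype_card]; omega)⟩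
  by_contra! h
  have : 2 < Fintype.card (E ≃ₐ[L] E) :=
    Fintype.two_lt_card_iff.mpr ⟨1, σ, τ, hσ.symm, h.1.symm, h.2.symm⟩
  omega

lemma sigma_sigma (h2 : finrank L E = 2) {σ : E ≃ₐ[L] E} (hσ : σ ≠ 1) (z : E) : σ (σ z) = z := by
  have : σ * σ = 1 := by
    rcases (galois_of_ne_one h2 hσ).1 (σ * σ) with h | h
    · exact h
    · exact absurd (mul_eq_left.mp h) hσ
  exact congrArg (fun τ : E ≃ₐ[L] E => τ z) this

lemma exists_of_fixed (h2 : finrank L E = 2) {σ : E ≃ₐ[L] E} (hσ : σ ≠ 1) {z : E} (hz : σ z = z) :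
    ∃ a : L, algebraMap L E a = z := by
  have := (galois_of_ne_one h2 hσ).2
  have h : z ∈ (⊥ : IntermediateField L E) := by
    rw [IsGalois.mem_bot_iff_fixed]
    intro τ
    rcases (galois_of_ne_one h2 hσ).1 τ with rfl | rfl
    · rfl
    · exact hz
  exact IntermediateField.mem_bot.mp h

lemma sg_sg (h2 : finrank L E = 2) {σ : E ≃ₐ[L] E} (hσ : σ ≠ 1) (z : 𝓞 E) :
    sg σ (sg σ z) = z := by
  apply RingOfIntegers.ext
  exact sigma_sigma h2 hσ z

lemma sg_fixed (h2 : finrank L E = 2) {σ : E ≃ₐ[L] E} (hσ : σ ≠ 1) {z : 𝓞 E} (hz : sg σ z = z) :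
    ∃ a : 𝓞 L, algebraMap (𝓞 L) (𝓞 E) a = z := by
  obtain ⟨a, ha⟩ := exists_of_fixed h2 hσ (z := (z : E)) (congrArg (algebraMap (𝓞 E) E) hz)
  have hdint : IsIntegral ℤ a := by
    rw [← isIntegral_algebraMap_iff (algebraMap L E).injective, ha]
    exact z.2
  refine ⟨⟨a, hdint⟩, ?_⟩
  apply RingOfIntegers.ext
  exact ha

lemma map_sg_sg (h2 : finrank L E = 2) {σ : E ≃ₐ[L] E} (hσ : σ ≠ 1) (I : Ideal (𝓞 E)) :
    (I.map (sg σ)).map (sg σ) = I := by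
  ext x
  rw [← sg_sg h2 hσ x, mem_map_sg, mem_map_sg, sg_sg h2 hσ]

/-- Hilbert's Theorem 90, with integral solutions. -/
lemma hilbert90 (h2 : finrank L E = 2) {σ : E ≃ₐ[L] E} (hσ : σ ≠ 1) (p q : 𝓞 E) (hq : q ≠ 0)
    (h : p * sg σ p = q * sg σ q) : ∃ b : 𝓞 E, b ≠ 0 ∧ p * b = q * sg σ b := by
  have hq' : sg σ q ≠ 0 := (map_ne_zero_iff _ (sg σ).injective).mpr hq
  by_cases h0 : sg σ q + sg σ p = 0
  · -- `p = -q`: take `b = θ - σ θ`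
    obtain ⟨θ, hθ⟩ : ∃ θ : 𝓞 E, sg σ θ ≠ θ := by
      by_contra! hall
      apply hσ
      ext z
      obtain ⟨a, b, hb, rfl⟩ := IsFractionRing.div_surjective (A := 𝓞 E) z
      rw [map_div₀, AlgEquiv.one_apply]
      congr 1
      · exact congrArg (algebraMap (𝓞 E) E) (hall a)
      · exact congrArg (algebraMap (𝓞 E) E) (hall b)
    have hp : p = -q := by
      apply (sg σ).injective
      rw [map_neg]
      exact eq_neg_of_add_eq_zero_right h0
    refine ⟨θ - sg σ θ, sub_ne_zero.mpr hθ.symm, ?_⟩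
    rw [map_sub, sg_sg h2 hσ, hp]
    ring
  · -- `b = (1 + σ (p / q)) q (σ q) = q (σ q + σ p)`
    refine ⟨q * (sg σ q + sg σ p), mul_ne_zero hq h0, ?_⟩
    rw [map_mul, map_add, sg_sg h2 hσ, sg_sg h2 hσ]
    linear_combination q * h

/-- The action of `σ` sends `I` to `(y / x) I`. -/
def Tw (σ : E ≃ₐ[L] E) (I : Ideal (𝓞 E)) (x y : 𝓞 E) : Prop :=
  x ≠ 0 ∧ y ≠ 0 ∧ Ideal.span {x} * I.map (sg σ) = Ideal.span {y} * I

lemma Tw.mul {σ : E ≃ₐ[L] E} {I I' : Ideal (𝓞 E)} {x y x' y' : 𝓞 E} (h : Tw σ I x y)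
    (h' : Tw σ I' x' y') : Tw σ (I * I') (x * x') (y * y') := by
  refine ⟨mul_ne_zero h.1 h'.1, mul_ne_zero h.2.1 h'.2.1, ?_⟩
  rw [Ideal.map_mul, ← Ideal.span_singleton_mul_span_singleton,
    ← Ideal.span_singleton_mul_span_singleton, mul_mul_mul_comm, h.2.2, h'.2.2, mul_mul_mul_comm]

lemma Tw.inv {σ : E ≃ₐ[L] E} {I J : Ideal (𝓞 E)} {x y t : 𝓞 E} (h : Tw σ I x y) (ht : t ≠ 0)
    (hIJ : I * J = Ideal.span {t}) : Tw σ J (y * t) (x * sg σ t) := by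
  refine ⟨mul_ne_zero h.2.1 ht,
    mul_ne_zero h.1 ((map_ne_zero_iff _ (sg σ).injective).mpr ht), ?_⟩
  rw [← Ideal.span_singleton_mul_span_singleton, ← Ideal.span_singleton_mul_span_singleton,
    ← map_sg_span, ← hIJ, Ideal.map_mul]
  calc Ideal.span {y} * (I * J) * J.map (sg σ) = (Ideal.span {y} * I) * J * J.map (sg σ) := by ring
    _ = (Ideal.span {x} * I.map (sg σ)) * J * J.map (sg σ) := by rw [h.2.2]
    _ = _ := by ring

lemma Tw.unit (h2 : finrank L E = 2) {σ : E ≃ₐ[L] E} (hσ : σ ≠ 1) {I : Ideal (𝓞 E)}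
    (hI : I ≠ ⊥) {x y : 𝓞 E} (h : Tw σ I x y) : ∃ u : (𝓞 E)ˣ, y * sg σ y = u * (x * sg σ x) := by
  have h1 : (Ideal.span {x} * I.map (sg σ)).map (sg σ) = (Ideal.span {y} * I).map (sg σ) := by
    rw [h.2.2]
  rw [Ideal.map_mul, Ideal.map_mul, map_sg_sg h2 hσ, map_sg_span, map_sg_span] at h1
  have h3 : Ideal.span {y * sg σ y} * I = Ideal.span {x * sg σ x} * I := by
    rw [← Ideal.span_singleton_mul_span_singleton, ← Ideal.span_singleton_mul_span_singleton,
      mul_assoc, mul_assoc, h1, mul_left_comm, ← h.2.2, mul_left_comm]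
  have h4 := mul_right_cancel₀ hI h3
  rw [Ideal.span_singleton_eq_span_singleton] at h4
  obtain ⟨u, hu⟩ := h4.symm
  exact ⟨u, by rw [← hu, mul_comm]⟩

/-- If `σ I = (y / x) I` with `y / x` of norm one up to norms of units, then `I` is equivalent to an
ideal extended from the base. -/
lemma Tw.mem_range (h2 : finrank L E = 2) {σ : E ≃ₐ[L] E} (hσ : σ ≠ 1)
    (hun : ∀ P : Ideal (𝓞 E), P.IsMaximal → P ≠ ⊥ → ∃ z : 𝓞 E, sg σ z - z ∉ P)
    {j : ClassGroup (𝓞 L) →* ClassGroup (𝓞 E)}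
    (hj : ∀ (I : Ideal (𝓞 L)) (hI : I ≠ ⊥), j (cls I hI) = cls (ext E I) (ext_ne_bot hI))
    {I : Ideal (𝓞 E)} (hI : I ≠ ⊥) {x y : 𝓞 E} (h : Tw σ I x y) (v : (𝓞 E)ˣ)
    (hv : y * sg σ y * (v * sg σ v) = x * sg σ x) : cls I hI ∈ j.range := by
  obtain ⟨b, hb, hpb⟩ := hilbert90 h2 hσ (y * v) x h.1 (by
    rw [map_mul, ← hv]; ring)
  have hb' : sg σ b ≠ 0 := (map_ne_zero_iff _ (sg σ).injective).mpr hb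
  have hinv : Ideal.span {b} * I.map (sg σ) = Ideal.span {sg σ b} * I := by
    have hx : Ideal.span {x} ≠ ⊥ := span_ne_bot h.1
    apply mul_left_cancel₀ hx
    have e : Ideal.span {y * v} = Ideal.span {y} := by
      rw [Ideal.span_singleton_eq_span_singleton]
      exact ⟨v⁻¹, by rw [mul_assoc, Units.mul_inv, mul_one]⟩
    calc Ideal.span {x} * (Ideal.span {b} * I.map (sg σ))
        = Ideal.span {b} * (Ideal.span {x} * I.map (sg σ)) := by ring
      _ = Ideal.span {y * v * b} * I := by
        rw [h.2.2, ← e, ← mul_assoc, Ideal.span_singleton_mul_span_singleton, mul_comm b]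
      _ = _ := by
        rw [hpb, ← mul_assoc, Ideal.span_singleton_mul_span_singleton]
  obtain ⟨J, hJ, hJ'⟩ := exists_ext_of_invariant h2 σ hun (Ideal.span {sg σ b} * I)
    (mul_ne_bot' (span_ne_bot hb') hI) (by
      rw [Ideal.map_mul, map_sg_span, sg_sg h2 hσ, hinv])
  refine ⟨cls J hJ, ?_⟩
  rw [hj, cls_eq_iff]
  exact ⟨1, sg σ b, one_ne_zero, hb', by rw [← hJ', Ideal.span_singleton_one, Ideal.top_mul]⟩

end Ambiguous
end FourthPower

/-! ### The ambiguous class count -/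

namespace FourthPower

set_option linter.unusedSectionVars false

section Counting

open NumberField Module nonZeroDivisors

variable {L E : Type*} [Field L] [NumberField L] [Field E] [NumberField E] [Algebra L E]

/-- The action of `σ` on the units. -/
noncomputable def sgU (σ : E ≃ₐ[L] E) : (𝓞 E)ˣ →* (𝓞 E)ˣ := Units.map (sg σ : 𝓞 E →* 𝓞 E)

@[simp] lemma coe_sgU (σ : E ≃ₐ[L] E) (u : (𝓞 E)ˣ) : ((sgU σ u : (𝓞 E)ˣ) : 𝓞 E) = sg σ u := rfl

/-- The invariant units. -/
noncomputable def Pu (σ : E ≃ₐ[L] E) : Subgroup (𝓞 E)ˣ := (sgU σ).eqLocus (MonoidHom.id _)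

/-- The units of relative norm one. -/
noncomputable def Ku (σ : E ≃ₐ[L] E) : Subgroup (𝓞 E)ˣ := (MonoidHom.id _ * sgU σ).ker

/-- The norms of units. -/
noncomputable def Vu (σ : E ≃ₐ[L] E) : Subgroup (𝓞 E)ˣ := (MonoidHom.id _ * sgU σ).range

/-- The units of the form `σ u / u` with `u` a unit. -/
noncomputable def Bu (σ : E ≃ₐ[L] E) : Subgroup (𝓞 E)ˣ := (sgU σ / MonoidHom.id _).range

/-- The units which are norms of elements of the field. -/
noncomputable def Wu (σ : E ≃ₐ[L] E) : Subgroup (𝓞 E)ˣ where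
  carrier := {u | ∃ z : E, z * σ z = ((u : 𝓞 E) : E)}
  one_mem' := ⟨1, by simp⟩
  mul_mem' := by
    rintro u v ⟨z, hz⟩ ⟨w, hw⟩
    exact ⟨z * w, by rw [map_mul, mul_mul_mul_comm, hz, hw]; simp⟩
  inv_mem' := by
    rintro u ⟨z, hz⟩
    refine ⟨z⁻¹, ?_⟩
    rw [map_inv₀, ← mul_inv, hz]
    have h : ((u : 𝓞 E) : E) * (((u⁻¹ : (𝓞 E)ˣ) : 𝓞 E) : E) = 1 := by
      rw [← map_mul, Units.mul_inv, map_one]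
    exact inv_eq_of_mul_eq_one_right h

lemma finrank_units_add_one (K : Type*) [Field K] [NumberField K] [IsTotallyComplex K] :
    finrank ℤ (Additive (𝓞 K)ˣ) + 1 = InfinitePlace.nrComplexPlaces K := by
  have h1 : 0 < Fintype.card (InfinitePlace K) := Fintype.card_pos
  have h2 := InfinitePlace.card_eq_nrRealPlaces_add_nrComplexPlaces K
  rw [IsTotallyComplex.nrRealPlaces_eq_zero, zero_add] at h2
  rw [Units.finrank_eq, Units.rank, ← h2]
  omega

lemma herbrand_units (h2 : finrank L E = 2) {σ : E ≃ₐ[L] E} (hσ : σ ≠ 1)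
    [IsTotallyComplex L] [IsTotallyComplex E] :
    2 * (Vu σ).relIndex (Pu σ) ≤ (Bu σ).relIndex (Ku σ) ∧ (Vu σ).relIndex (Pu σ) ≠ 0 := by
  classical
  let s : Additive (𝓞 E)ˣ →ₗ[ℤ] Additive (𝓞 E)ˣ := (MonoidHom.toAdditive (sgU σ)).toIntLinearMap
  let φ : Additive (𝓞 L)ˣ →ₗ[ℤ] Additive (𝓞 E)ˣ :=
    (MonoidHom.toAdditive (Units.map (algebraMap (𝓞 L) (𝓞 E) : 𝓞 L →* 𝓞 E))).toIntLinearMap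
  have eP : (LinearMap.ker (s - 1)).toAddSubgroup = Subgroup.toAddSubgroup (Pu σ) := by
    ext x
    exact sub_eq_zero
  have eK : (LinearMap.ker (s + 1)).toAddSubgroup = Subgroup.toAddSubgroup (Ku σ) := by
    ext x
    change s x + x = 0 ↔ x + s x = 0
    rw [add_comm]
  have eV : (LinearMap.range (s + 1)).toAddSubgroup = Subgroup.toAddSubgroup (Vu σ) := by
    ext x
    change (∃ y, s y + y = x) ↔ (∃ y, y + s y = x)
    simp_rw [add_comm]
  have eB : (LinearMap.range (s - 1)).toAddSubgroup = Subgroup.toAddSubgroup (Bu σ) := by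
    ext x
    exact Iff.rfl
  have hL := finrank_units_add_one L
  have hE := finrank_units_add_one E
  have hLE : InfinitePlace.nrComplexPlaces E = 2 * InfinitePlace.nrComplexPlaces L := by
    have h1 := IsTotallyComplex.finrank L
    have h3 := IsTotallyComplex.finrank E
    have h4 := Module.finrank_mul_finrank ℚ L E
    rw [h2] at h4
    omega
  have hφ : Function.Injective φ := by
    intro x y h
    exact Units.map_injective (f := (algebraMap (𝓞 L) (𝓞 E) : 𝓞 L →* 𝓞 E))
      (FaithfulSMul.algebraMap_injective (𝓞 L) (𝓞 E)) h
  have hker : LinearMap.ker (s - 1) = LinearMap.range φ := by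
    ext x
    constructor
    · intro hx
      have hx0 : s x - x = 0 := hx
      have hx1' : s x = x := sub_eq_zero.mp hx0
      have hx1 : sgU σ x.toMul = x.toMul := hx1'
      obtain ⟨a, ha⟩ := sg_fixed h2 hσ (congrArg Units.val hx1)
      obtain ⟨b, hb⟩ := sg_fixed h2 hσ (congrArg Units.val (show sgU σ x.toMul⁻¹ = x.toMul⁻¹ by
        rw [map_inv, hx1]))
      have hab : a * b = 1 := by
        apply FaithfulSMul.algebraMap_injective (𝓞 L) (𝓞 E)
        rw [map_mul, ha, hb, Units.mul_inv, map_one]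
      refine ⟨Additive.ofMul (Units.mk a b hab (by rw [mul_comm, hab])), ?_⟩
      change Units.map _ _ = x.toMul
      exact Units.ext ha
    · rintro ⟨y, rfl⟩
      refine sub_eq_zero.mpr ?_
      change sgU σ (Units.map _ y.toMul) = Units.map _ y.toMul
      exact Units.ext ((sg σ).commutes _)
  have hkr : finrank ℤ (LinearMap.ker (s - 1)) + 1 = InfinitePlace.nrComplexPlaces L := by
    rw [hker, LinearMap.finrank_range_of_inj hφ, hL]
  have htor : ∀ u : (𝓞 E)ˣ, u * u = 1 → u = 1 ∨ u = -1 := by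
    intro u hu
    have : (u : 𝓞 E) * u = 1 := by rw [← Units.val_mul, hu, Units.val_one]
    rcases mul_self_eq_one_iff.mp this with h | h
    · left; exact Units.ext h
    · right; exact Units.ext (by rw [h]; simp)
  have := herbrand s (fun x => by
      change sgU σ (sgU σ x.toMul) = x.toMul
      exact Units.ext (sg_sg h2 hσ _))
    (InfinitePlace.nrComplexPlaces L) (by rw [hE, hLE]) hkr
    (fun x hx => by
      change sgU σ x.toMul = x.toMul
      apply Units.ext
      rw [coe_sgU]
      rcases htor x.toMul hx with h | h <;> rw [h] <;> simp)
    (by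
      have hf : Finite ({1, -1} : Set (𝓞 E)ˣ) := Set.toFinite _
      refine Finite.of_injective (β := ({1, -1} : Set (𝓞 E)ˣ))
        (fun x => ⟨x.1.toMul, ?_⟩) ?_
      · have hx : x.1.toMul * x.1.toMul = 1 := by
          have := x.2
          rw [two_nsmul] at this
          exact this
        rcases htor _ hx with h | h
        · exact Or.inl h
        · exact Or.inr h
      · intro x y h
        exact Subtype.ext (Subtype.mk.inj h))
  rw [eP, eK, eV, eB, Subgroup.relIndex_toAddSubgroup, Subgroup.relIndex_toAddSubgroup] at this
  exact this

lemma card_ker_mul_card_range {G G' : Type*} [CommGroup G] [CommGroup G'] (f : G →* G') :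
    Nat.card f.ker * Nat.card f.range = Nat.card G := by
  rw [← Subgroup.index_ker, Subgroup.card_mul_index]

lemma index_le_card {G X : Type*} [Group G] [Finite X] (H : Subgroup G) (g : G → X)
    (hg : ∀ a b, g a = g b → a⁻¹ * b ∈ H) : H.index ≤ Nat.card X := by
  rw [Subgroup.index]
  refine Nat.card_le_card_of_injective (fun q : G ⧸ H => g q.out) ?_
  intro q q' h
  have := hg _ _ h
  rw [← QuotientGroup.eq, QuotientGroup.out_eq', QuotientGroup.out_eq'] at this
  exact this

lemma Wu_le (h2 : finrank L E = 2) {σ : E ≃ₐ[L] E} (hσ : σ ≠ 1) : Wu σ ≤ Pu σ := by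
  rintro u ⟨z, hz⟩
  apply Units.ext
  apply RingOfIntegers.ext
  change σ ((u : 𝓞 E) : E) = ((u : 𝓞 E) : E)
  rw [← hz, map_mul, sigma_sigma h2 hσ, mul_comm]

lemma Vu_le_Wu (σ : E ≃ₐ[L] E) : Vu σ ≤ Wu σ := by
  rintro _ ⟨v, rfl⟩
  exact ⟨((v : 𝓞 E) : E), by simp; rfl⟩

/-- `[K : B]` is at most the number of classes which become principal. A unit `ε` of norm `1` is
`σ b / b` by Hilbert 90; the ideal `(b)` is invariant, hence extended from an ideal `J`, and the class
of `J` determines `ε` up to `B`. -/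
lemma relIndex_Bu_le (h2 : finrank L E = 2) {σ : E ≃ₐ[L] E} (hσ : σ ≠ 1)
    (hun : ∀ P : Ideal (𝓞 E), P.IsMaximal → P ≠ ⊥ → ∃ z : 𝓞 E, sg σ z - z ∉ P)
    {j : ClassGroup (𝓞 L) →* ClassGroup (𝓞 E)}
    (hj : ∀ (I : Ideal (𝓞 L)) (hI : I ≠ ⊥), j (cls I hI) = cls (ext E I) (ext_ne_bot hI)) :
    (Bu σ).relIndex (Ku σ) ≤ Nat.card j.ker := by
  have h : ∀ ε : Ku σ, ∃ b : 𝓞 E, ∃ J : Ideal (𝓞 L), ∃ hJ : J ≠ ⊥, b ≠ 0 ∧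
      ((ε : (𝓞 E)ˣ) : 𝓞 E) * b = sg σ b ∧ Ideal.span {b} = ext E J := by
    rintro ⟨ε, hε⟩
    have hε' : (ε : 𝓞 E) * sg σ ε = 1 := congrArg Units.val hε
    obtain ⟨b, hb, hεb⟩ := hilbert90 h2 hσ (ε : 𝓞 E) 1 one_ne_zero (by rw [hε', map_one, one_mul])
    rw [one_mul] at hεb
    obtain ⟨J, hJ, hJ'⟩ := exists_ext_of_invariant h2 σ hun (Ideal.span {b}) (span_ne_bot hb) (by
      rw [map_sg_span, ← hεb, Ideal.span_singleton_eq_span_singleton]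
      exact ⟨ε⁻¹, by rw [mul_comm, Units.inv_mul_cancel_left]⟩)
    exact ⟨b, J, hJ, hb, hεb, hJ'⟩
  choose b J hJ hb hεb hbJ using h
  refine index_le_card _ (fun ε => (⟨cls (J ε) (hJ ε), ?_⟩ : j.ker)) ?_
  · rw [MonoidHom.mem_ker, hj, ← cls_span (hb ε)]
    congr 1
    exact (hbJ ε).symm
  · intro ε ε' h
    obtain ⟨l, l', hl, hl', hll⟩ := (cls_eq_iff (hJ ε) (hJ ε')).mp (Subtype.mk.inj h)
    have h3 : ext E (Ideal.span {l} * J ε) = ext E (Ideal.span {l'} * J ε') := by rw [hll]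
    rw [ext, ext, Ideal.map_mul, Ideal.map_mul] at h3
    change ext E _ * ext E _ = ext E _ * ext E _ at h3
    rw [ext_span, ext_span, ← hbJ, ← hbJ, Ideal.span_singleton_mul_span_singleton,
      Ideal.span_singleton_mul_span_singleton, Ideal.span_singleton_eq_span_singleton] at h3
    obtain ⟨w, hw⟩ := h3
    rw [Subgroup.mem_subgroupOf]
    refine ⟨w, ?_⟩
    set m := algebraMap (𝓞 L) (𝓞 E) l with hm
    set m' := algebraMap (𝓞 L) (𝓞 E) l' with hm'
    have hmσ : sg σ m = m := (sg σ).commutes l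
    have hmσ' : sg σ m' = m' := (sg σ).commutes l'
    have hm0' : m' ≠ 0 := (map_ne_zero_iff _ (FaithfulSMul.algebraMap_injective _ _)).mpr hl'
    have hw2 := congrArg (sg σ) hw
    rw [map_mul, map_mul, map_mul, hmσ, hmσ', ← hεb ε, ← hεb ε'] at hw2
    have key : ((ε : (𝓞 E)ˣ) : 𝓞 E) * sg σ w = ((ε' : (𝓞 E)ˣ) : 𝓞 E) * w := by
      have hne : m' * b ε' ≠ 0 := mul_ne_zero hm0' (hb ε')
      apply mul_left_cancel₀ hne
      have e : (w : 𝓞 E) * (m * (ε.1 * b ε) * sg σ w) = w * (m' * (ε'.1 * b ε')) := by rw [hw2]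
      linear_combination e - ε.1 * sg σ w * hw
    change sgU σ w / w = (ε : (𝓞 E)ˣ)⁻¹ * ε'
    rw [div_eq_iff_eq_mul, mul_assoc, eq_inv_mul_iff_mul_eq]
    exact Units.ext key

/-- The classes fixed by `σ`, modulo the classes extended from the base, number at most `[W : V]`. -/
lemma relIndex_ambiguous_le (h2 : finrank L E = 2) {σ : E ≃ₐ[L] E} (hσ : σ ≠ 1)
    (hun : ∀ P : Ideal (𝓞 E), P.IsMaximal → P ≠ ⊥ → ∃ z : 𝓞 E, sg σ z - z ∉ P)
    {j : ClassGroup (𝓞 L) →* ClassGroup (𝓞 E)}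
    (hj : ∀ (I : Ideal (𝓞 L)) (hI : I ≠ ⊥), j (cls I hI) = cls (ext E I) (ext_ne_bot hI))
    {s : ClassGroup (𝓞 E) →* ClassGroup (𝓞 E)}
    (hs : ∀ (I : Ideal (𝓞 E)) (hI : I ≠ ⊥), s (cls I hI) = cls (I.map (sg σ)) (map_sg_ne_bot σ hI))
    (hfin : (Vu σ).relIndex (Wu σ) ≠ 0) :
    j.range.relIndex (s / MonoidHom.id _).ker ≤ (Vu σ).relIndex (Wu σ) := by
  have h : ∀ C : (s / MonoidHom.id _).ker, ∃ I : Ideal (𝓞 E), ∃ hI : I ≠ ⊥, ∃ x y : 𝓞 E,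
      ∃ u : Wu σ, cls I hI = C ∧ Tw σ I x y ∧ y * sg σ y = (u : (𝓞 E)ˣ) * (x * sg σ x) := by
    rintro ⟨C, hC⟩
    obtain ⟨I, hI, rfl⟩ := cls_surjective C
    have hC' : s (cls I hI) = cls I hI := div_eq_one.mp hC
    rw [hs] at hC'
    obtain ⟨x, y, hx, hy, hxy⟩ := (cls_eq_iff _ _).mp hC'
    have hT : Tw σ I x y := ⟨hx, hy, hxy⟩
    obtain ⟨u, hu⟩ := hT.unit h2 hσ hI
    have hx' : ((x : 𝓞 E) : E) ≠ 0 := by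
      simpa using hx
    have hσx' : σ (x : E) ≠ 0 := (map_ne_zero_iff _ σ.injective).mpr hx'
    refine ⟨I, hI, x, y, ⟨u, (y : E) / x, ?_⟩, rfl, hT, hu⟩
    have hu' : (y : E) * σ y = ((u : 𝓞 E) : E) * (x * σ x) := congrArg (algebraMap (𝓞 E) E) hu
    rw [map_div₀]
    field_simp
    rw [hu']
    ring
  choose I hI x y u hC hT hu using h
  have : Finite (Wu σ ⧸ (Vu σ).subgroupOf (Wu σ)) := by
    have : ((Vu σ).subgroupOf (Wu σ)).FiniteIndex := ⟨hfin⟩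
    exact Subgroup.finite_quotient_of_finiteIndex
  refine index_le_card _ (fun C => (QuotientGroup.mk (u C) : Wu σ ⧸ (Vu σ).subgroupOf (Wu σ))) ?_
  intro C C' hCC
  rw [QuotientGroup.eq, Subgroup.mem_subgroupOf] at hCC
  obtain ⟨v, hv⟩ := hCC
  have hv' : ((u C : (𝓞 E)ˣ) : 𝓞 E) * (v * sg σ v) = ((u C' : (𝓞 E)ˣ) : 𝓞 E) := by
    have : (u C : (𝓞 E)ˣ) * (v * sgU σ v) = u C' := by
      rw [show v * sgU σ v = _ from hv]
      simp
    exact congrArg Units.val this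
  rw [Subgroup.mem_subgroupOf]
  obtain ⟨J, hJ, hJC⟩ := cls_surjective ((C : ClassGroup (𝓞 E))⁻¹)
  obtain ⟨t, ht, hIJ⟩ := cls_eq_one (mul_ne_bot' (hI C) hJ) (by
    rw [cls_mul (hI C) hJ, hJC, hC, mul_inv_cancel])
  have hT2 := ((hT C).inv ht hIJ).mul (hT C')
  have := hT2.mem_range h2 hσ hun hj (mul_ne_bot' hJ (hI C')) v⁻¹ (by
    have hvi : (((v⁻¹ : (𝓞 E)ˣ) : 𝓞 E) * sg σ ((v⁻¹ : (𝓞 E)ˣ) : 𝓞 E)) * (v * sg σ v) = 1 := by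
      rw [mul_mul_mul_comm, Units.inv_mul, ← map_mul, Units.inv_mul, map_one, one_mul]
    simp only [map_mul, sg_sg h2 hσ]
    have h3 := hu C
    have h4 := hu C'
    rw [← hv'] at h4
    set w := (((v⁻¹ : (𝓞 E)ˣ) : 𝓞 E) * sg σ ((v⁻¹ : (𝓞 E)ˣ) : 𝓞 E))
    linear_combination (x C * sg σ (x C) * t * sg σ t * w) * h4
      - (x C' * sg σ (x C') * t * sg σ t) * h3
      + (x C * sg σ (x C) * t * sg σ t * ((u C : (𝓞 E)ˣ) : 𝓞 E) * x C' * sg σ (x C')) * hvi)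
  rw [cls_mul hJ (hI C'), hJC, hC] at this
  exact this

/-- The class-group count: the group of invariant units modulo norms of elements has at most half as
many elements as the cokernel of the norm map on class groups. -/
theorem two_mul_relIndex_le (h2 : finrank L E = 2) {σ : E ≃ₐ[L] E} (hσ : σ ≠ 1)
    [IsTotallyComplex L] [IsTotallyComplex E]
    (hun : ∀ P : Ideal (𝓞 E), P.IsMaximal → P ≠ ⊥ → ∃ z : 𝓞 E, sg σ z - z ∉ P)
    {N : ClassGroup (𝓞 E) →* ClassGroup (𝓞 L)}
    (hN : ∀ (I : Ideal (𝓞 E)) (hI : I ≠ ⊥), N (cls I hI) =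
      cls (Ideal.relNorm (𝓞 L) I) (Ideal.relNorm_eq_bot_iff.not.mpr hI)) :
    2 * (Wu σ).relIndex (Pu σ) ≤ N.range.index ∧ (Wu σ).relIndex (Pu σ) ≠ 0 := by
  obtain ⟨j, hj⟩ := exists_extHom L E
  obtain ⟨s, hs⟩ := exists_sgHom σ
  obtain ⟨hH, hH0⟩ := herbrand_units h2 hσ
  have hmul := Subgroup.relIndex_mul_relIndex _ _ _ (Vu_le_Wu σ) (Wu_le h2 hσ)
  have hq : (Vu σ).relIndex (Wu σ) ≠ 0 := fun h => hH0 (by rw [← hmul, h, zero_mul])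
  have hw : (Wu σ).relIndex (Pu σ) ≠ 0 := fun h => hH0 (by rw [← hmul, h, mul_zero])
  have hB := relIndex_Bu_le h2 hσ hun hj
  have hA := relIndex_ambiguous_le h2 hσ hun hj hs hq
  set D := s / MonoidHom.id (ClassGroup (𝓞 E))
  have hDN : D.range ≤ N.ker := by
    rintro _ ⟨C, rfl⟩
    obtain ⟨I, hI, rfl⟩ := cls_surjective C
    rw [MonoidHom.mem_ker]
    change N (s _ / _) = 1
    rw [map_div, div_eq_one, MonoidHom.id_apply, hs, hN, hN]
    congr 1
    exact Ideal.relNorm_map_algEquiv (sg σ) I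
  -- `|ker D| |im D| = |Cl E| = |ker N| |im N|` and `im D ≤ ker N` give `|im N| ≤ |ker D|`, while
  -- `|ker D| ≤ |im j| [W : V]` and `|ker j| |im j| = |Cl L| = |im N| h`. Hence `|ker j| ≤ h [W : V]`.
  have c1 := card_ker_mul_card_range D
  have c2 := card_ker_mul_card_range N
  have c3 := card_ker_mul_card_range j
  have c4 := Subgroup.card_mul_index N.range
  have c5 : Nat.card D.range ≤ Nat.card N.ker := Subgroup.card_le_of_le hDN
  have c6 : Nat.card D.ker ≤ Nat.card j.range * (Vu σ).relIndex (Wu σ) := by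
    rw [← Subgroup.card_mul_index (j.range.subgroupOf D.ker)]
    refine Nat.mul_le_mul ?_ hA
    exact Nat.card_le_card_of_injective (fun x => (⟨x.1.1, x.2⟩ : j.range))
      (fun x y h => Subtype.ext (Subtype.ext (Subtype.mk.inj h)))
  have c7 : Nat.card N.range ≤ Nat.card D.ker := by
    have hpos : 0 < Nat.card D.range := Nat.card_pos
    by_contra! hlt
    have : Nat.card D.ker * Nat.card D.range < Nat.card N.ker * Nat.card N.range :=
      calc _ < Nat.card N.range * Nat.card D.range := Nat.mul_lt_mul_of_pos_right hlt hpos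
        _ ≤ Nat.card N.range * Nat.card N.ker := Nat.mul_le_mul_left _ c5
        _ = _ := mul_comm _ _
    omega
  have hj0 : 0 < Nat.card j.range := Nat.card_pos
  have c8 : Nat.card j.ker ≤ N.range.index * (Vu σ).relIndex (Wu σ) := by
    refine Nat.le_of_mul_le_mul_right ?_ hj0
    rw [c3, ← c4, mul_comm]
    calc _ ≤ N.range.index * (Nat.card j.range * (Vu σ).relIndex (Wu σ)) :=
          Nat.mul_le_mul_left _ (c7.trans c6)
      _ = _ := by ring
  refine ⟨?_, hw⟩
  refine Nat.le_of_mul_le_mul_right ?_ (Nat.pos_of_ne_zero hq)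
  calc 2 * (Wu σ).relIndex (Pu σ) * (Vu σ).relIndex (Wu σ) = 2 * (Vu σ).relIndex (Pu σ) := by
        rw [← hmul]; ring
    _ ≤ _ := (hH.trans hB).trans c8

end Counting
end FourthPower

/-! ### Euler products -/

namespace FourthPower

section Euler

open Filter Topology Module nonZeroDivisors NumberField IsDedekindDomain
open scoped Classical

/-- The exponent vectors supported on `insert p S` are pairs of an exponent at `p` and an exponent
vector supported on `S`. -/
noncomputable def supportEquiv {ι : Type*} (S : Finset ι) {p : ι} (hp : p ∉ S) :
    ℕ × {v : ι →₀ ℕ // v.support ⊆ S} ≃ {v : ι →₀ ℕ // v.support ⊆ insert p S} where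
  toFun a := ⟨a.2.1 + Finsupp.single p a.1, by
    refine Finsupp.support_add.trans (Finset.union_subset ?_ ?_)
    · exact a.2.2.trans (Finset.subset_insert _ _)
    · exact Finsupp.support_single_subset.trans (by simp)⟩
  invFun v := ⟨v.1 p, v.1.erase p, by
    rw [Finsupp.support_erase]
    exact Finset.subset_insert_iff.mp v.2⟩
  left_inv a := by
    have h : a.2.1 p = 0 := by
      by_contra h
      exact hp (a.2.2 (Finsupp.mem_support_iff.mpr h))
    ext i
    · simp [h]
    · by_cases hi : i = p
      · subst hi; simp [h]
      · simp [Finsupp.erase_ne hi]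
  right_inv v := Subtype.ext (Finsupp.erase_add_single p v.1)

lemma hasSum_mul_prod {α β : Type*} {f : α → ℝ} {g : β → ℝ} {a b : ℝ} (hf : HasSum f a)
    (hg : HasSum g b) : HasSum (fun x : α × β ↦ f x.1 * g x.2) (a * b) :=
  hf.mul hg (summable_mul_of_summable_norm (f := f) (g := g) hf.summable.norm hg.summable.norm)

lemma hasSum_supported {ι : Type*} {x : ι → ℝ} (hx : ∀ i, |x i| < 1) (S : Finset ι) :
    HasSum (fun v : {v : ι →₀ ℕ // v.support ⊆ S} ↦ v.1.prod fun i k ↦ x i ^ k)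
      (∏ i ∈ S, (1 - x i)⁻¹) := by
  induction S using Finset.induction_on with
  | empty =>
    have h := hasSum_single (f := fun v : {v : ι →₀ ℕ // v.support ⊆ ∅} ↦ v.1.prod fun i k ↦ x i ^ k)
      ⟨0, by simp⟩ (fun v hv ↦ (hv (Subtype.ext
        (Finsupp.support_eq_empty.mp (Finset.subset_empty.mp v.2)))).elim)
    rw [Finset.prod_empty]
    rwa [Finsupp.prod_zero_index] at h
  | insert p S hp ih =>
    rw [Finset.prod_insert hp, ← (supportEquiv S hp).hasSum_iff]
    have hg := hasSum_geometric_of_abs_lt_one (hx p)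
    have h := hasSum_mul_prod hg ih
    convert h using 1
    funext a
    change (a.2.1 + Finsupp.single p a.1).prod _ = _
    rw [Finsupp.prod_add_index' (by simp) (by intros; rw [pow_add]), Finsupp.prod_single_index
      (by simp), mul_comm]

/-- The Euler product of a summable completely multiplicative function on exponent vectors. -/
lemma tendsto_euler {ι : Type*} {x : ι → ℝ} (hx : ∀ i, |x i| < 1)
    (hs : Summable fun v : ι →₀ ℕ ↦ v.prod fun i k ↦ x i ^ k) :
    Tendsto (fun S : Finset ι ↦ ∏ i ∈ S, (1 - x i)⁻¹) atTop
      (𝓝 (∑' v : ι →₀ ℕ, v.prod fun i k ↦ x i ^ k)) := by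
  set F : (ι →₀ ℕ) → ℝ := fun v ↦ v.prod fun i k ↦ x i ^ k
  have h1 : ∀ S : Finset ι, ∏ i ∈ S, (1 - x i)⁻¹ =
      ∑' v, Set.indicator {v : ι →₀ ℕ | v.support ⊆ S} F v := fun S ↦ by
    rw [← tsum_subtype]
    exact (hasSum_supported hx S).tsum_eq.symm
  simp_rw [h1]
  refine tendsto_tsum_of_dominated_convergence hs.norm (fun v ↦ ?_) (Eventually.of_forall fun S v ↦
    norm_indicator_le_norm_self _ _)
  refine tendsto_const_nhds.congr' ?_
  filter_upwards [eventually_ge_atTop v.support] with S hS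
  exact (Set.indicator_of_mem (s := {v : ι →₀ ℕ | v.support ⊆ S}) hS F).symm

variable {K : Type*} [Field K] [NumberField K]

/-- A maximal ideal as a nonzero element of the monoid of ideals. -/
noncomputable def pr (p : HeightOneSpectrum (𝓞 K)) : (Ideal (𝓞 K))⁰ :=
  ⟨p.asIdeal, mem_nonZeroDivisors_of_ne_zero p.ne_bot⟩

variable (K) in
/-- Unique factorization of ideals. -/
noncomputable def factEquiv : (HeightOneSpectrum (𝓞 K) →₀ ℕ) ≃ (Ideal (𝓞 K))⁰ :=
  Equiv.ofBijective (fun v ↦ v.prod fun p k ↦ pr p ^ k) (by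
    have hprod : ∀ v : HeightOneSpectrum (𝓞 K) →₀ ℕ,
        ((v.prod fun p k ↦ pr p ^ k : (Ideal (𝓞 K))⁰) : Ideal (𝓞 K)) =
        ((Finsupp.toMultiset v).map HeightOneSpectrum.asIdeal).prod := by
      intro v
      rw [Finsupp.prod, SubmonoidClass.coe_finsetProd, Finsupp.toMultiset_map,
        Finsupp.prod_toMultiset, Finsupp.prod_mapDomain_index (by simp) (by intros; rw [pow_add])]
      rfl
    have hinj : Function.Injective (HeightOneSpectrum.asIdeal (R := 𝓞 K)) :=
      fun p q h ↦ HeightOneSpectrum.ext h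
    constructor
    · intro v w h
      have h' := congrArg Subtype.val h
      simp only [hprod] at h'
      have h2 := congrArg UniqueFactorizationMonoid.normalizedFactors h'
      rw [UniqueFactorizationMonoid.normalizedFactors_prod_of_prime,
        UniqueFactorizationMonoid.normalizedFactors_prod_of_prime] at h2
      · exact (Multiset.toFinsupp (α := HeightOneSpectrum (𝓞 K))).symm.injective (Multiset.map_injective hinj h2)
      all_goals
        intro I hI
        obtain ⟨p, -, rfl⟩ := Multiset.mem_map.mp hI
        exact p.prime
    · intro I
      have hI : (I : Ideal (𝓞 K)) ≠ 0 := nonZeroDivisors.ne_zero I.2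
      obtain ⟨m, hm⟩ : ∃ m : Multiset (HeightOneSpectrum (𝓞 K)), m.map HeightOneSpectrum.asIdeal =
          UniqueFactorizationMonoid.normalizedFactors (I : Ideal (𝓞 K)) := by
        have hlift : CanLift (Ideal (𝓞 K)) (HeightOneSpectrum (𝓞 K)) HeightOneSpectrum.asIdeal
            (fun P ↦ P.IsPrime ∧ P ≠ ⊥) := ⟨fun P h ↦ ⟨⟨P, h.1, h.2⟩, rfl⟩⟩
        refine (Multiset.canLift HeightOneSpectrum.asIdeal _).prf _ fun P hP ↦ ?_
        have hP' := UniqueFactorizationMonoid.prime_of_normalized_factor P hP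
        exact ⟨Ideal.isPrime_of_prime hP', hP'.ne_zero⟩
      refine ⟨Multiset.toFinsupp m, Subtype.ext ?_⟩
      simp only [hprod]
      rw [Multiset.toFinsupp_toMultiset, hm]
      exact Ideal.prod_normalizedFactors_eq_self hI)

lemma factEquiv_apply (v : HeightOneSpectrum (𝓞 K) →₀ ℕ) :
    factEquiv K v = v.prod fun p k ↦ pr p ^ k := rfl

lemma nrm_mul (s : ℝ) (I J : (Ideal (𝓞 K))⁰) : nrm s (I * J) = nrm s I * nrm s J := by
  simp only [nrm, Submonoid.coe_mul, map_mul, Nat.cast_mul]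
  exact Real.mul_rpow (by positivity) (by positivity)

lemma nrm_one (s : ℝ) : nrm s (1 : (Ideal (𝓞 K))⁰) = 1 := by
  simp [nrm]

lemma nrm_lt_one {s : ℝ} (hs : 1 < s) (p : HeightOneSpectrum (𝓞 K)) : nrm s (pr p) < 1 := by
  refine Real.rpow_lt_one_of_one_lt_of_neg ?_ (by linarith)
  refine lt_of_le_of_ne (one_le_absNorm _) fun h ↦ p.isPrime.ne_top ?_
  exact Ideal.absNorm_eq_one_iff.mp (by exact_mod_cast h.symm)

lemma nrm_pos (s : ℝ) (I : (Ideal (𝓞 K))⁰) : 0 < nrm s I :=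
  Real.rpow_pos_of_pos (zero_lt_one.trans_le (one_le_absNorm I)) _

/-- The Euler product for the `L`-function of a character of the class group. -/
theorem tendsto_euler_char (χ : ClassGroup (𝓞 K) →* ℝ) (hχ : ∀ C, |χ C| ≤ 1) {s : ℝ} (hs : 1 < s) :
    Tendsto (fun S : Finset (HeightOneSpectrum (𝓞 K)) ↦
      ∏ p ∈ S, (1 - χ (ClassGroup.mk0 (pr p)) * nrm s (pr p))⁻¹) atTop
      (𝓝 (∑' I, χ (ClassGroup.mk0 I) * nrm s I)) := by
  let f : (Ideal (𝓞 K))⁰ →* ℝ :=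
    { toFun := fun I ↦ χ (ClassGroup.mk0 I) * nrm s I
      map_one' := by rw [map_one, map_one, nrm_one, one_mul]
      map_mul' := fun I J ↦ by rw [map_mul, map_mul, nrm_mul, mul_mul_mul_comm] }
  have hf : ∀ v, f (factEquiv K v) = v.prod fun p k ↦ f (pr p) ^ k := fun v ↦ by
    rw [factEquiv_apply, Finsupp.prod, map_prod]
    simp_rw [map_pow]
    rfl
  have hsum : Summable f := (tsum_char χ hs).1
  have h1 : Summable fun v ↦ f (factEquiv K v) := (factEquiv K).summable_iff.mpr hsum
  have h2 : ∑' v, f (factEquiv K v) = ∑' I, f I := (factEquiv K).tsum_eq f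
  simp_rw [hf] at h1 h2
  have := tendsto_euler (fun p ↦ ?_) h1
  · rw [h2] at this
    exact this
  · change |χ _ * nrm s _| < 1
    rw [abs_mul, abs_of_nonneg (nrm_nonneg s _)]
    calc _ ≤ 1 * nrm s (pr p) := mul_le_mul_of_nonneg_right (hχ _) (nrm_nonneg s _)
      _ < 1 := by rw [one_mul]; exact nrm_lt_one hs p

end Euler
end FourthPower

/-! ### The norm index inequality for class groups -/

namespace FourthPower

section Characters

/-- A quotient of exponent two and order greater than two carries two real characters which are
nontrivial with nontrivial product. -/
lemma exists_real_characters {G : Type*} [CommGroup G] [Finite G] (H : Subgroup G)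
    (h2 : ∀ g : G, g * g ∈ H) (h3 : 2 < H.index) :
    ∃ χ₁ χ₂ : G →* ℝ, (∀ g ∈ H, χ₁ g = 1 ∧ χ₂ g = 1) ∧ (∀ g, χ₁ g * χ₁ g = 1 ∧ χ₂ g * χ₂ g = 1) ∧
      χ₁ ≠ 1 ∧ χ₂ ≠ 1 ∧ χ₁ * χ₂ ≠ 1 := by
  have hprim : IsPrimitiveRoot (-1 : ℝ) 2 := by
    constructor
    · norm_num
    · intro l hl
      exact even_iff_two_dvd.mp ((neg_one_pow_eq_one_iff_even (by norm_num)).mp hl)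
  have hER : HasEnoughRootsOfUnity ℝ 2 := ⟨⟨_, hprim⟩, rootsOfUnity.isCyclic ℝ 2⟩
  have hsq : ∀ q : G ⧸ H, q ^ 2 = 1 := by
    intro q
    obtain ⟨g, rfl⟩ := QuotientGroup.mk_surjective q
    rw [← QuotientGroup.mk_pow, QuotientGroup.eq_one_iff, pow_two]
    exact h2 g
  have hexp : Monoid.exponent (G ⧸ H) ∣ 2 := Monoid.exponent_dvd_of_forall_pow_eq_one hsq
  have hER' : HasEnoughRootsOfUnity ℝ (Monoid.exponent (G ⧸ H)) :=
    HasEnoughRootsOfUnity.of_dvd ℝ hexp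
  have hcard := CommGroup.card_monoidHom_of_hasEnoughRootsOfUnity (G ⧸ H) ℝ
  have hfin : Finite (G ⧸ H →* ℝˣ) := Nat.finite_of_card_ne_zero (by
    rw [hcard]; exact Nat.card_pos.ne')
  have hlt : 2 < Nat.card (G ⧸ H →* ℝˣ) := by rw [hcard]; exact h3
  have hall : ∀ φ : G ⧸ H →* ℝˣ, φ * φ = 1 := fun φ ↦ by
    refine MonoidHom.ext fun q ↦ ?_
    rw [MonoidHom.mul_apply, ← map_mul, ← pow_two, hsq, map_one, MonoidHom.one_apply]
  classical
  have := Fintype.ofFinite (G ⧸ H →* ℝˣ)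
  rw [Nat.card_eq_fintype_card] at hlt
  obtain ⟨a, b, c, hab, hac, hbc⟩ := Fintype.two_lt_card_iff.mp hlt
  have key : ∃ φ₁ φ₂ : G ⧸ H →* ℝˣ, φ₁ ≠ 1 ∧ φ₂ ≠ 1 ∧ φ₁ ≠ φ₂ := by
    by_cases ha : a = 1
    · subst ha; exact ⟨b, c, hab.symm, hac.symm, hbc⟩
    · by_cases hb : b = 1
      · subst hb; exact ⟨a, c, ha, hbc.symm, hac⟩
      · exact ⟨a, b, ha, hb, hab⟩
  obtain ⟨φ₁, φ₂, h1, h2', h12⟩ := key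
  let T : (G ⧸ H →* ℝˣ) → (G →* ℝ) := fun φ ↦
    (Units.coeHom ℝ).comp (φ.comp (QuotientGroup.mk' H))
  have hT : ∀ φ g, T φ g = ((φ (QuotientGroup.mk g) : ℝˣ) : ℝ) := fun _ _ ↦ rfl
  have hT1 : ∀ φ, T φ = 1 → φ = 1 := by
    intro φ h
    refine MonoidHom.ext fun q ↦ ?_
    obtain ⟨g, rfl⟩ := QuotientGroup.mk_surjective q
    refine Units.ext ?_
    rw [← hT, h]
    simp
  refine ⟨T φ₁, T φ₂, fun g hg ↦ ?_, fun g ↦ ?_, fun h ↦ h1 (hT1 _ h), fun h ↦ h2' (hT1 _ h),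
    fun h ↦ h12 ?_⟩
  · rw [hT, hT, (QuotientGroup.eq_one_iff g).mpr hg]
    simp
  · rw [hT, hT, ← Units.val_mul, ← Units.val_mul, ← MonoidHom.mul_apply, ← MonoidHom.mul_apply,
      hall, hall]
    simp
  · have h' : T (φ₁ * φ₂) = 1 := by
      rw [← h]
      ext g
      simp [hT]
    have := hT1 _ h'
    rw [← hall φ₂] at this
    exact mul_right_cancel this

/-- The local factor at a prime with norm `x⁻¹` of the product of the zeta function with the
`L`-functions of two quadratic characters and of their product. -/
noncomputable def locFactor (x a b : ℝ) : ℝ :=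
  (1 - x)⁻¹ * (1 - a * x)⁻¹ * (1 - b * x)⁻¹ * (1 - a * b * x)⁻¹

lemma locFactor_one (x : ℝ) : locFactor x 1 1 = (1 - x)⁻¹ ^ 4 := by
  simp only [locFactor]; ring_nf

lemma sq_le_locFactor {x a b : ℝ} (hx : 0 < x) (hx1 : x < 1) (ha : a * a = 1) (hb : b * b = 1) :
    (1 - x ^ 2)⁻¹ ^ 2 ≤ locFactor x a b := by
  have h1 : 0 < 1 - x := by linarith
  have h2 : 0 < 1 + x := by linarith
  have h3 : 0 < (1 - x) * (1 + x) := by positivity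
  have e : 1 - x ^ 2 = (1 - x) * (1 + x) := by ring
  rcases mul_self_eq_one_iff.mp ha with rfl | rfl <;> rcases mul_self_eq_one_iff.mp hb with rfl | rfl
  · rw [locFactor_one, e, mul_inv, mul_pow, show 4 = 2 + 2 from rfl, pow_add]
    refine mul_le_mul_of_nonneg_left ?_ (by positivity)
    refine pow_le_pow_left₀ (by positivity) (inv_anti₀ h1 (by linarith)) _
  all_goals
    apply le_of_eq
    simp only [locFactor, e, one_mul, neg_mul, mul_neg, sub_neg_eq_add, neg_neg, mul_inv]
    ring

lemma one_le_locFactor {x a b : ℝ} (hx : 0 < x) (hx1 : x < 1) (ha : a * a = 1) (hb : b * b = 1) :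
    1 ≤ locFactor x a b := by
  refine le_trans ?_ (sq_le_locFactor hx hx1 ha hb)
  have h : 0 < 1 - x ^ 2 := by nlinarith
  exact one_le_pow₀ ((one_le_inv₀ h).mpr (by nlinarith))

end Characters
end FourthPower

namespace FourthPower

section IndexBound

open Filter Topology Module nonZeroDivisors NumberField IsDedekindDomain
open scoped Classical

variable {L E : Type*} [Field L] [NumberField L] [Field E] [NumberField E] [Algebra L E]

variable (L) in
/-- The prime of the base field below a prime. -/
noncomputable def down (P : HeightOneSpectrum (𝓞 E)) : HeightOneSpectrum (𝓞 L) :=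
  ⟨below L P.asIdeal, Ideal.IsPrime.under (𝓞 L) P.asIdeal, Ideal.under_ne_bot (𝓞 L) P.ne_bot⟩

lemma nrm_of_absNorm_eq {K K' : Type*} [Field K] [NumberField K] [Field K'] [NumberField K'] (s : ℝ)
    {I : (Ideal (𝓞 K))⁰} {J : (Ideal (𝓞 K'))⁰} (k : ℕ)
    (h : Ideal.absNorm (I : Ideal (𝓞 K)) = Ideal.absNorm (J : Ideal (𝓞 K')) ^ k) :
    nrm s I = nrm s J ^ k := by
  rw [nrm, nrm, h, Nat.cast_pow, ← Real.rpow_natCast, ← Real.rpow_natCast, ← Real.rpow_mul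
    (by positivity), ← Real.rpow_mul (by positivity), mul_comm]

lemma nrm_congr {K K' : Type*} [Field K] [NumberField K] [Field K'] [NumberField K'] (s : ℝ)
    {I : (Ideal (𝓞 K))⁰} {J : (Ideal (𝓞 K'))⁰}
    (h : Ideal.absNorm (I : Ideal (𝓞 K)) = Ideal.absNorm (J : Ideal (𝓞 K'))) :
    nrm s I = nrm s J := by
  rw [nrm, nrm, h]

/-- The primes above `p` contribute at most the local factor at `p`. With `x = |N p| ^ (-s)`, a split
`p` is a norm, so its local factor is `(1 - x)⁻⁴`, matched by two primes above it; above an inert `p`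
there is one prime, contributing `(1 - x²)⁻²`. -/
lemma prod_fibre_le (h2 : finrank L E = 2) (σ : E ≃ₐ[L] E)
    (hun : ∀ P : Ideal (𝓞 E), P.IsMaximal → P ≠ ⊥ → ∃ z : 𝓞 E, sg σ z - z ∉ P)
    {χ₁ χ₂ : ClassGroup (𝓞 L) →* ℝ}
    (hχ : ∀ (P : Ideal (𝓞 E)) (hP : P ≠ ⊥),
      χ₁ (cls (Ideal.relNorm (𝓞 L) P) (Ideal.relNorm_eq_bot_iff.not.mpr hP)) = 1 ∧
      χ₂ (cls (Ideal.relNorm (𝓞 L) P) (Ideal.relNorm_eq_bot_iff.not.mpr hP)) = 1)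
    (hsq : ∀ C, χ₁ C * χ₁ C = 1 ∧ χ₂ C * χ₂ C = 1) {s : ℝ} (hs : 1 < s)
    (T : Finset (HeightOneSpectrum (𝓞 E))) (p : HeightOneSpectrum (𝓞 L)) :
    ∏ P ∈ T with down L P = p, (1 - nrm s (pr P))⁻¹ ^ 2 ≤
      locFactor (nrm s (pr p)) (χ₁ (ClassGroup.mk0 (pr p))) (χ₂ (ClassGroup.mk0 (pr p))) := by
  have hx := nrm_pos s (pr p)
  have hx1 := nrm_lt_one hs p
  by_cases hne : ∃ P : HeightOneSpectrum (𝓞 E), down L P = p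
  swap
  · rw [Finset.filter_eq_empty_iff.mpr (fun P _ h ↦ hne ⟨P, h⟩), Finset.prod_empty]
    exact one_le_locFactor hx hx1 (hsq _).1 (hsq _).2
  obtain ⟨P, rfl⟩ := hne
  have hone : ∀ Q : HeightOneSpectrum (𝓞 E), 1 ≤ (1 - nrm s (pr Q))⁻¹ ^ 2 := fun Q ↦ by
    have h1 := nrm_pos s (pr Q)
    have h2 := nrm_lt_one hs Q
    exact one_le_pow₀ ((one_le_inv₀ (by linarith)).mpr (by linarith))
  have hPm : P.asIdeal.IsMaximal := P.isMaximal
  have hdiv : ∀ Q : HeightOneSpectrum (𝓞 E), down L Q = down L P →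
      ext E (below L P.asIdeal) ≤ Q.asIdeal := by
    intro Q hQ
    rw [ext, Ideal.map_le_iff_le_comap]
    exact (congrArg HeightOneSpectrum.asIdeal hQ).ge
  rcases splitting h2 σ P.ne_bot (hun _ hPm P.ne_bot) with ⟨hne, hrel, habs, hext⟩ |
    ⟨heq, habs, hext⟩
  · have hσP : (P.asIdeal.map (sg σ)) ≠ ⊥ := map_sg_ne_bot σ P.ne_bot
    have hσPp : (P.asIdeal.map (sg σ)).IsPrime := Ideal.map_isPrime_of_equiv (sg σ)
    let P' : HeightOneSpectrum (𝓞 E) := ⟨P.asIdeal.map (sg σ), hσPp, hσP⟩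
    have hsub : (T.filter fun Q ↦ down L Q = down L P) ⊆ {P, P'} := by
      intro Q hQ
      have h := hdiv Q (Finset.mem_filter.mp hQ).2
      rw [hext, Q.isPrime.mul_le] at h
      rw [Finset.mem_insert, Finset.mem_singleton]
      rcases h with h | h
      · left
        exact HeightOneSpectrum.ext (P.isMaximal.eq_of_le Q.isPrime.ne_top h).symm
      · right
        exact HeightOneSpectrum.ext (P'.isMaximal.eq_of_le Q.isPrime.ne_top h).symm
    have hy : nrm s (pr P) = nrm s (pr (down L P)) := nrm_congr s habs
    have habs' : Ideal.absNorm (P.asIdeal.map (sg σ)) = Ideal.absNorm (below L P.asIdeal) :=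
      (absNorm_map_sg σ P.asIdeal).trans habs
    have hy' : nrm s (pr P') = nrm s (pr (down L P)) := nrm_congr s habs'
    have hc : ClassGroup.mk0 (pr (down L P)) = cls (Ideal.relNorm (𝓞 L) P.asIdeal)
        (Ideal.relNorm_eq_bot_iff.not.mpr P.ne_bot) := by
      rw [mk0_eq_cls]
      congr 1
      exact hrel.symm
    rw [hc, (hχ _ P.ne_bot).1, (hχ _ P.ne_bot).2, locFactor_one]
    calc _ ≤ ∏ Q ∈ {P, P'}, (1 - nrm s (pr Q))⁻¹ ^ 2 := by
          exact Finset.prod_le_prod_of_subset_of_one_le hsub (fun Q _ ↦ zero_le_one.trans (hone Q))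
            fun Q _ _ ↦ hone Q
      _ = _ := by
          rw [Finset.prod_pair (fun h ↦ hne (congrArg HeightOneSpectrum.asIdeal h).symm), hy, hy',
            ← pow_add]
  · have hsub : (T.filter fun Q ↦ down L Q = down L P) ⊆ {P} := by
      intro Q hQ
      have h := hdiv Q (Finset.mem_filter.mp hQ).2
      rw [hext] at h
      rw [Finset.mem_singleton]
      exact HeightOneSpectrum.ext (P.isMaximal.eq_of_le Q.isPrime.ne_top h).symm
    have hy : nrm s (pr P) = nrm s (pr (down L P)) ^ 2 := nrm_of_absNorm_eq s 2 habs
    refine le_trans ?_ (sq_le_locFactor hx hx1 (hsq _).1 (hsq _).2)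
    rw [← hy]
    refine (Finset.prod_le_prod_of_subset_of_one_le hsub (fun Q _ ↦ zero_le_one.trans (hone Q))
      fun Q _ _ ↦ hone Q).trans_eq (Finset.prod_singleton _ _)

/-- In an unramified quadratic extension, the norms of ideal classes have index at most `2`. Otherwise
there are quadratic characters `χ₁`, `χ₂` with `χ₁`, `χ₂`, `χ₁ χ₂` nontrivial and all trivial on norms,
and comparing Euler products gives `ζ_E² ≤ ζ_L L(χ₁) L(χ₂) L(χ₁ χ₂)`. The left side has a double pole
at `1` and the right side at most a simple one. -/
theorem index_range_norm_le (h2 : finrank L E = 2) (σ : E ≃ₐ[L] E)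
    (hun : ∀ P : Ideal (𝓞 E), P.IsMaximal → P ≠ ⊥ → ∃ z : 𝓞 E, sg σ z - z ∉ P)
    {N : ClassGroup (𝓞 E) →* ClassGroup (𝓞 L)}
    (hN : ∀ (I : Ideal (𝓞 E)) (hI : I ≠ ⊥), N (cls I hI) =
      cls (Ideal.relNorm (𝓞 L) I) (Ideal.relNorm_eq_bot_iff.not.mpr hI)) :
    N.range.index ≤ 2 := by
  by_contra! hlt
  have hsqH : ∀ C : ClassGroup (𝓞 L), C * C ∈ N.range := by
    intro C
    obtain ⟨I, hI, rfl⟩ := cls_surjective C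
    refine ⟨cls (ext E I) (ext_ne_bot hI), ?_⟩
    rw [hN, ← cls_mul hI hI]
    congr 1
    rw [ext, Ideal.relNorm_algebraMap, ← IsFractionRing.finrank_eq (𝓞 L) L (𝓞 E) E, h2, pow_two]
  obtain ⟨χ₁, χ₂, hχ, hsq, h1, h2', h12⟩ := exists_real_characters N.range hsqH hlt
  have hsq12 : ∀ C, (χ₁ * χ₂) C * (χ₁ * χ₂) C = 1 := fun C ↦ by
    rw [MonoidHom.mul_apply, mul_mul_mul_comm, (hsq C).1, (hsq C).2, one_mul]
  have habs : ∀ {χ : ClassGroup (𝓞 L) →* ℝ}, (∀ C, χ C * χ C = 1) → ∀ C, |χ C| ≤ 1 := fun h C ↦ by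
    rcases mul_self_eq_one_iff.mp (h C) with h | h <;> rw [h] <;> simp
  have hχ' : ∀ (P : Ideal (𝓞 E)) (hP : P ≠ ⊥),
      χ₁ (cls (Ideal.relNorm (𝓞 L) P) (Ideal.relNorm_eq_bot_iff.not.mpr hP)) = 1 ∧
      χ₂ (cls (Ideal.relNorm (𝓞 L) P) (Ideal.relNorm_eq_bot_iff.not.mpr hP)) = 1 := fun P hP ↦
    hχ _ ⟨_, hN P hP⟩
  let LL : (ClassGroup (𝓞 L) →* ℝ) → ℝ → ℝ := fun χ s ↦ ∑' I, χ (ClassGroup.mk0 I) * nrm s I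
  have main : ∀ s : ℝ, 1 < s → (∑' I, nrm (K := E) s I) ^ 2 ≤
      (∑' I, nrm (K := L) s I) * LL χ₁ s * LL χ₂ s * LL (χ₁ * χ₂) s := by
    intro s hs
    have tL := tendsto_euler_char (1 : ClassGroup (𝓞 L) →* ℝ) (fun C ↦ by simp) hs
    have tE := tendsto_euler_char (1 : ClassGroup (𝓞 E) →* ℝ) (fun C ↦ by simp) hs
    have t1 := tendsto_euler_char χ₁ (habs fun C ↦ (hsq C).1) hs
    have t2 := tendsto_euler_char χ₂ (habs fun C ↦ (hsq C).2) hs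
    have t12 := tendsto_euler_char (χ₁ * χ₂) (habs hsq12) hs
    simp only [MonoidHom.one_apply, one_mul] at tL tE
    have t := ((tL.mul t1).mul t2).mul t12
    simp_rw [← Finset.prod_mul_distrib] at t
    have tE2 := tE.pow 2
    simp_rw [← Finset.prod_pow] at tE2
    refine le_of_tendsto tE2 (Eventually.of_forall fun T ↦ ?_)
    have hloc : ∀ p : HeightOneSpectrum (𝓞 L), 1 ≤ locFactor (nrm s (pr p))
        (χ₁ (ClassGroup.mk0 (pr p))) (χ₂ (ClassGroup.mk0 (pr p))) := fun p ↦
      one_le_locFactor (nrm_pos s _) (nrm_lt_one hs p) (hsq _).1 (hsq _).2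
    calc _ = ∏ p ∈ T.image (down L), ∏ P ∈ T with down L P = p, (1 - nrm s (pr P))⁻¹ ^ 2 :=
          (Finset.prod_fiberwise_of_maps_to (fun P hP ↦ Finset.mem_image_of_mem _ hP) _).symm
      _ ≤ ∏ p ∈ T.image (down L), locFactor (nrm s (pr p))
          (χ₁ (ClassGroup.mk0 (pr p))) (χ₂ (ClassGroup.mk0 (pr p))) :=
        Finset.prod_le_prod (fun p _ ↦ Finset.prod_nonneg fun P _ ↦ by positivity)
          fun p _ ↦ prod_fibre_le h2 σ hun hχ' hsq hs T p
      _ ≤ _ := Monotone.ge_of_tendsto (fun S S' h ↦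
          Finset.prod_le_prod_of_subset_of_one_le h
            (fun Q _ ↦ zero_le_one.trans (hloc Q)) fun Q _ _ ↦ hloc Q) t _
  obtain ⟨B₁, hB₁⟩ := exists_char_bound h1
  obtain ⟨B₂, hB₂⟩ := exists_char_bound h2'
  obtain ⟨B₃, hB₃⟩ := exists_char_bound h12
  have hE := (tendsto_tsum_nrm E).pow 2
  have hL := tendsto_tsum_nrm L
  have hs0 : Tendsto (fun s : ℝ ↦ s - 1) (𝓝[>] 1) (𝓝 0) := by
    have : Tendsto (fun s : ℝ ↦ s - 1) (𝓝 1) (𝓝 (1 - 1)) := tendsto_id.sub_const 1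
    rw [sub_self] at this
    exact this.mono_left nhdsWithin_le_nhds
  have hR := (hs0.mul hL).mul_const (B₁ * B₂ * B₃)
  rw [zero_mul, zero_mul] at hR
  have hle := le_of_tendsto_of_tendsto hE hR (by
    filter_upwards [hB₁, hB₂, hB₃, self_mem_nhdsWithin] with s h1 h2 h3 hs
    have hs : 1 < s := hs
    have hm := main s hs
    have hZ : 0 ≤ ∑' I, nrm (K := L) s I := tsum_nonneg fun I ↦ nrm_nonneg s I
    have hLL : LL χ₁ s * LL χ₂ s * LL (χ₁ * χ₂) s ≤ B₁ * B₂ * B₃ := by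
      refine (le_abs_self _).trans ?_
      rw [abs_mul, abs_mul]
      have b1 := (abs_nonneg _).trans h1
      have b2 := (abs_nonneg _).trans h2
      exact mul_le_mul (mul_le_mul h1 h2 (abs_nonneg _) b1) h3 (abs_nonneg _) (mul_nonneg b1 b2)
    calc _ = (s - 1) ^ 2 * (∑' I, nrm (K := E) s I) ^ 2 := mul_pow _ _ _
      _ ≤ (s - 1) ^ 2 * ((∑' I, nrm (K := L) s I) * (B₁ * B₂ * B₃)) := by
        refine mul_le_mul_of_nonneg_left (hm.trans ?_) (sq_nonneg _)
        rw [mul_assoc, mul_assoc, ← mul_assoc (LL χ₁ s)]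
        exact mul_le_mul_of_nonneg_left hLL hZ
      _ = _ := by ring)
  have := dedekindZeta_residue_pos E
  nlinarith

end IndexBound
end FourthPower

/-! ### The element `-1` is a norm -/

namespace FourthPower

section MinusOne

open NumberField Module

/-- In a quadratic extension of totally complex number fields without ramified primes, `-1` is a norm:
at most half of the class group can be lost, which forces every invariant unit to be a norm. -/
theorem neg_one_isNorm {L E : Type*} [Field L] [NumberField L] [Field E] [NumberField E] [Algebra L E]
    (h2 : finrank L E = 2) {σ : E ≃ₐ[L] E} (hσ : σ ≠ 1)
    [IsTotallyComplex L] [IsTotallyComplex E]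
    (hun : ∀ P : Ideal (𝓞 E), P.IsMaximal → P ≠ ⊥ → ∃ z : 𝓞 E, sg σ z - z ∉ P) :
    ∃ z : E, z * σ z = -1 := by
  obtain ⟨N, hN⟩ := exists_normHom L E
  obtain ⟨h, h0⟩ := two_mul_relIndex_le h2 hσ hun hN
  have hc := index_range_norm_le h2 σ hun hN
  have h1 : (Wu σ).relIndex (Pu σ) = 1 := by omega
  have hle := Subgroup.relIndex_eq_one.mp h1
  have hmem : (-1 : (𝓞 E)ˣ) ∈ Pu σ := Units.ext (by
    change sg σ ((-1 : (𝓞 E)ˣ) : 𝓞 E) = _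
    simp)
  obtain ⟨z, hz⟩ := hle hmem
  exact ⟨z, by rw [hz]; simp⟩

end MinusOne
end FourthPower

/-! ### Sums of three squares -/

namespace FourthPower

section ThreeSquares

universe u

open NumberField Module

/-- The field obtained from `K` by adjoining a square root of a nonsquare. -/
lemma exists_quadratic {K : Type u} [Field K] [NumberField K] {a : K} (ha : ∀ r : K, r * r ≠ a) :
    ∃ (L : Type u) (_ : Field L) (_ : NumberField L) (_ : Algebra K L) (s : L) (σ : L ≃ₐ[K] L),
      s * s = algebraMap K L a ∧ finrank K L = 2 ∧ σ s = -s ∧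
      (∀ z : L, ∃ x y : K, z = algebraMap K L x + algebraMap K L y * s) ∧
      (∀ x y x' y' : K, algebraMap K L x + algebraMap K L y * s =
        algebraMap K L x' + algebraMap K L y' * s → x = x' ∧ y = y') := by
  have hF : Fact (∀ r : K, r ^ 2 ≠ a + 0 * r) := ⟨fun r h ↦ ha r (by rw [← pow_two, h]; ring)⟩
  let L := QuadraticAlgebra K a 0
  let s : L := QuadraticAlgebra.omega
  have hs : s * s = algebraMap K L a := by
    ext <;> simp [s, L]
  have hfin : finrank K L = 2 := QuadraticAlgebra.finrank_eq_two a 0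
  have hch : CharZero L := charZero_of_injective_algebraMap (algebraMap K L).injective
  have hfd : FiniteDimensional K L := Module.finite_of_finrank_pos (by rw [hfin]; norm_num)
  have hNF : NumberField L := NumberField.of_module_finite K L
  let τ : L →ₐ[K] L := QuadraticAlgebra.lift ⟨-s, by
    rw [neg_mul_neg, hs, zero_smul, add_zero, Algebra.algebraMap_eq_smul_one]⟩
  have hτ : τ s = -s := by
    simp [τ, s, QuadraticAlgebra.lift]
  refine ⟨L, inferInstance, hNF, inferInstance, s,
    AlgEquiv.ofBijective τ (Algebra.IsAlgebraic.algHom_bijective τ), hs, hfin, hτ, ?_, ?_⟩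
  · intro z
    refine ⟨z.re, z.im, ?_⟩
    ext <;> simp [s, L]
  · intro x y x' y' h
    constructor
    · simpa [s, L] using congrArg QuadraticAlgebra.re h
    · simpa [s, L] using congrArg QuadraticAlgebra.im h

end ThreeSquares
end FourthPower

namespace FourthPower

section ThreeSquares

universe u

open NumberField Module

lemma isIntegral_of_mul_self_eq_one_or {E : Type*} [Field E] {i : E} (hi : i * i = -1) :
    IsIntegral ℤ i := by
  refine IsIntegral.of_pow (n := 2) (by norm_num) ?_
  rw [pow_two, hi]
  exact isIntegral_one.neg

lemma isIntegral_of_sq_sub_self {E : Type*} [Field E] {θ : E} (h : IsIntegral ℤ (θ ^ 2 - θ)) :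
    IsIntegral ℤ θ := by
  refine IsIntegral.of_aeval_monic (p := (Polynomial.X ^ 2 - Polynomial.X : Polynomial ℤ)) ?_ ?_ ?_
  · monicity!
  · have : (Polynomial.X ^ 2 - Polynomial.X : Polynomial ℤ).natDegree = 2 := by compute_degree!
    rw [this]; norm_num
  · simpa using h

/-- If `σ` negates square roots `i` of `-1` and `t` of `1 + 4a`, then no prime `P` is ramified:
otherwise `P` contains `(σ i - i)² = -4`, and also `(σ θ - θ)² = t² = 1 + 4a`, where the element
`θ = (1 + t) / 2` is integral. -/
lemma exists_sg_sub_notMem {L E : Type*} [Field L] [NumberField L] [Field E] [NumberField E]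
    [Algebra L E] (σ : E ≃ₐ[L] E) {i t : E} (hi : i * i = -1) (hσi : σ i = -i) (a : 𝓞 E)
    (ht : t * t = 1 + 4 * (a : E)) (hσt : σ t = -t)
    (P : Ideal (𝓞 E)) (hP : P.IsMaximal) : ∃ z : 𝓞 E, sg σ z - z ∉ P := by
  by_contra! h
  let i' : 𝓞 E := ⟨i, isIntegral_of_mul_self_eq_one_or hi⟩
  let θ : E := (1 + t) / 2
  have hθ : IsIntegral ℤ θ := by
    refine isIntegral_of_sq_sub_self ?_
    have : θ ^ 2 - θ = (a : E) := by
      simp only [θ]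
      linear_combination (1 / 4 : E) * ht
    rw [this]
    exact a.2
  let θ' : 𝓞 E := ⟨θ, hθ⟩
  have h1 : (4 : 𝓞 E) ∈ P := by
    have := P.mul_mem_left (-(sg σ i' - i')) (h i')
    convert this using 1
    ext
    change (4 : E) = -(σ i - i) * (σ i - i)
    rw [hσi]
    linear_combination 4 * hi
  have h2 : 1 + 4 * a ∈ P := by
    have := P.mul_mem_left ((sg σ θ' - θ')) (h θ')
    convert this using 1
    ext
    change (1 : E) + 4 * (a : E) = (σ θ - θ) * (σ θ - θ)
    have : σ θ - θ = -t := by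
      simp only [θ, map_div₀, map_add, map_one, hσt, map_ofNat]
      ring
    rw [this, ← ht]; ring
  refine hP.ne_top ((Ideal.eq_top_iff_one _).mpr ?_)
  have := P.sub_mem h2 (P.mul_mem_right a h1)
  simpa using this

lemma isTotallyComplex_of_sq {K L : Type*} [Field K] [NumberField K] [Field L] [NumberField L]
    [Algebra K L] {c : K} (hpos : ∀ ρ : K →+* ℝ, 0 < ρ c) {s : L}
    (hs : s * s = algebraMap K L (-c)) : IsTotallyComplex L := by
  constructor
  intro v
  by_contra hv
  rw [InfinitePlace.not_isComplex_iff_isReal] at hv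
  let f : L →+* ℝ := InfinitePlace.embedding_of_isReal hv
  have h1 := hpos (f.comp (algebraMap K L))
  have h2 := congrArg f hs
  rw [map_mul, map_neg, map_neg] at h2
  simp only [RingHom.comp_apply] at h1
  nlinarith [mul_self_nonneg (f s)]

/-- An element `1 + 4a`, with `a` integral, which is positive at all real places is a sum of three
squares. -/
theorem three_squares {K : Type u} [Field K] [NumberField K] (ρ₀ : K →+* ℝ) (a : 𝓞 K)
    (hpos : ∀ ρ : K →+* ℝ, 0 < ρ (1 + 4 * (a : K))) :
    ∃ x y z : K, 1 + 4 * (a : K) = x ^ 2 + y ^ 2 + z ^ 2 := by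
  obtain ⟨c, hcdef⟩ : ∃ c : K, c = 1 + 4 * (a : K) := ⟨_, rfl⟩
  rw [← hcdef]
  rw [← hcdef] at hpos
  by_cases hc : ∃ r : K, r * r = c
  · obtain ⟨r, hr⟩ := hc
    exact ⟨r, 0, 0, by rw [← hr]; ring⟩
  push Not at hc
  have hc0 : c ≠ 0 := by
    rintro rfl
    exact hc 0 (by simp)
  have hm1 : ∀ x y : K, x * x + y * y ≠ -1 := by
    intro x y h
    have := congrArg ρ₀ h
    simp only [map_add, map_mul, map_neg, map_one] at this
    nlinarith [mul_self_nonneg (ρ₀ x), mul_self_nonneg (ρ₀ y)]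
  have h1 : ∀ r : K, r * r ≠ -c := by
    intro r hr
    have := congrArg ρ₀ hr
    rw [map_mul, map_neg] at this
    nlinarith [hpos ρ₀, mul_self_nonneg (ρ₀ r)]
  -- `L = K(√-c)` and `E = L(i)`; the latter also contains `√c = i√-c`.
  obtain ⟨L, _, _, _, s, -, hs, -, -, hrepL, huniqL⟩ := exists_quadratic h1
  have huniq0 : ∀ x y x' : K, algebraMap K L x + algebraMap K L y * s = algebraMap K L x' →
      x = x' ∧ y = 0 := by
    intro x y x' h
    exact huniqL x y x' 0 (by rw [h]; simp)
  have h2 : ∀ r : L, r * r ≠ -1 := by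
    intro r hr
    obtain ⟨x, y, rfl⟩ := hrepL r
    have h3 := huniq0 (x * x - c * (y * y)) (2 * (x * y)) (-1) (by
      simp only [map_sub, map_mul, map_neg, map_one, map_ofNat] at hs ⊢
      linear_combination hr - (algebraMap K L y) ^ 2 * hs)
    have h4 : x * y = 0 := by simpa using h3.2
    rcases mul_eq_zero.mp h4 with rfl | rfl
    · have h5 : c * (y * y) = 1 := by linear_combination -h3.1
      have hy : y ≠ 0 := by rintro rfl; simp at h5
      exact hc y⁻¹ (by field_simp; linear_combination -h5)
    · exact hm1 x 0 (by simpa using h3.1)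
  obtain ⟨E, _, _, _, i, σ, hi, hfin, hσi, hrepE, huniqE⟩ := exists_quadratic h2
  rw [map_neg, map_one] at hi
  have hL : IsTotallyComplex L := isTotallyComplex_of_sq hpos hs
  have hE : IsTotallyComplex E := isTotallyComplex_of_algebra L E
  have hi0 : i ≠ 0 := by rintro rfl; simp at hi
  have hσ1 : σ ≠ 1 := by
    rintro rfl
    have : i = -i := hσi
    exact hi0 (self_eq_neg.mp this)
  have hun : ∀ P : Ideal (𝓞 E), P.IsMaximal → P ≠ ⊥ → ∃ z : 𝓞 E, sg σ z - z ∉ P := by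
    intro P hP _
    refine exists_sg_sub_notMem σ (t := i * algebraMap L E s) hi hσi
      (algebraMap (𝓞 L) (𝓞 E) (algebraMap (𝓞 K) (𝓞 L) a)) ?_ ?_ P hP
    · change _ = 1 + 4 * algebraMap L E (algebraMap K L (a : K))
      have : algebraMap L E s * algebraMap L E s =
          -(1 + 4 * algebraMap L E (algebraMap K L (a : K))) := by
        rw [← map_mul, hs, hcdef]
        simp only [map_neg, map_add, map_one, map_mul, map_ofNat]
      linear_combination (i * i) * this - (1 + 4 * algebraMap L E (algebraMap K L (a : K))) * hi
    · rw [map_mul, hσi, AlgEquiv.commutes]; ring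
  obtain ⟨z, hz⟩ := neg_one_isNorm hfin hσ1 hun
  obtain ⟨x, y, rfl⟩ := hrepE z
  have hxy : x * x + y * y = -1 := by
    apply (algebraMap L E).injective
    simp only [map_add, map_mul, AlgEquiv.commutes, hσi, map_neg, map_one] at hz ⊢
    linear_combination hz + (algebraMap L E y) ^ 2 * hi
  -- With `x = x0 + x1 √-c` and `y = y0 + y1 √-c`, the equation `x² + y² = -1` says that
  -- `x0² + y0² - c (x1² + y1²) = -1` and that `(x0, y0)` is orthogonal to `(x1, y1)`.
  obtain ⟨x0, x1, rfl⟩ := hrepL x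
  obtain ⟨y0, y1, rfl⟩ := hrepL y
  have h6 := huniq0 (x0 * x0 + y0 * y0 - c * (x1 * x1 + y1 * y1)) (2 * (x0 * x1 + y0 * y1)) (-1) (by
      simp only [map_sub, map_add, map_mul, map_neg, map_one, map_ofNat] at hs ⊢
      linear_combination hxy - ((algebraMap K L x1) ^ 2 + (algebraMap K L y1) ^ 2) * hs)
  obtain ⟨h7, h8⟩ := h6
  have h8 : x0 * x1 + y0 * y1 = 0 := by simpa using h8
  have hq : x1 * x1 + y1 * y1 ≠ 0 := by
    intro h
    exact hm1 x0 y0 (by rw [h] at h7; linear_combination h7)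
  set q := x1 * x1 + y1 * y1 with hqdef
  -- `(x0, y0)` is the multiple of `(-y1, x1)` with this factor
  refine ⟨(y0 * x1 - x0 * y1) / q, x1 / q, y1 / q, ?_⟩
  have h9 : (x0 * x0 + y0 * y0) * q = (y0 * x1 - x0 * y1) ^ 2 := by
    rw [hqdef]; linear_combination (x0 * x1 + y0 * y1) * h8
  field_simp
  linear_combination -q * h7 + h9 + hqdef

end ThreeSquares
end FourthPower

/-! ### Sums of four squares -/

namespace FourthPower

section FourSquares

set_option linter.unusedSectionVars false

/-- Being a sum of four squares. -/
def IsFourSq {K : Type*} [CommRing K] (x : K) : Prop :=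
  ∃ a b c d : K, x = a ^ 2 + b ^ 2 + c ^ 2 + d ^ 2

lemma IsFourSq.mul {K : Type*} [CommRing K] {x y : K} (hx : IsFourSq x) (hy : IsFourSq y) :
    IsFourSq (x * y) := by
  obtain ⟨a, b, c, d, rfl⟩ := hx
  obtain ⟨x, y, z, w, rfl⟩ := hy
  exact ⟨_, _, _, _, (euler_four_squares a b c d x y z w).symm⟩

lemma IsFourSq.sq {K : Type*} [CommRing K] (x : K) : IsFourSq (x ^ 2) :=
  ⟨x, 0, 0, 0, by ring⟩

lemma IsFourSq.inv {K : Type*} [Field K] {x : K} (hx : IsFourSq x) : IsFourSq x⁻¹ := by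
  by_cases h : x = 0
  · subst h; simpa using IsFourSq.sq (0 : K)
  · have := hx.mul (IsFourSq.sq x⁻¹)
    have e : x * x⁻¹ ^ 2 = x⁻¹ := by field_simp
    rwa [e] at this

/-- The quaternary form `x² + xy + y² + 2z²` only takes values that are sums of four squares. -/
lemma isFourSq_form {K : Type*} [Field K] [CharZero K] (x y z : K) :
    IsFourSq (x ^ 2 + x * y + y ^ 2 + 2 * z ^ 2) :=
  ⟨x + y / 2, y / 2, y / 2 + z, y / 2 - z, by ring⟩

lemma two_dvd_sub_pow {R : Type*} [CommRing R] (x y : R) (a : ℕ) :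
    (2 : R) ∣ (x - y) ^ 2 ^ a - (x ^ 2 ^ a - y ^ 2 ^ a) := by
  induction a with
  | zero => simp
  | succ n ih =>
    obtain ⟨c, hc⟩ := ih
    have hc' : (x - y) ^ 2 ^ n = x ^ 2 ^ n - y ^ 2 ^ n + 2 * c := by linear_combination hc
    rw [pow_succ, pow_mul, pow_mul, pow_mul, hc']
    refine ⟨y ^ 2 ^ n * y ^ 2 ^ n - x ^ 2 ^ n * y ^ 2 ^ n +
      (x ^ 2 ^ n - y ^ 2 ^ n) * (2 * c) + 2 * c ^ 2, ?_⟩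
    ring

section SemiLocal

variable {R : Type*} [CommRing R] (h2 : ∀ a : R, IsUnit (1 + 2 * a))

include h2 in
/-- Hensel's lemma for `y² + ry + (r² - u)`, whose derivative at any point is a unit: each Newton
step squares the value, up to a unit. -/
lemma exists_newton {r u : R} (hr : IsUnit r) (k : ℕ) :
    ∃ y : R, (r ^ 2 - u) ^ 2 ^ k ∣ y ^ 2 + r * y + (r ^ 2 - u) := by
  induction k with
  | zero => exact ⟨0, by simp⟩
  | succ k ih =>
    obtain ⟨y, hy⟩ := ih
    have hd : IsUnit (2 * y + r) := by
      obtain ⟨v, rfl⟩ := hr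
      have := (h2 (y * ↑v⁻¹)).mul v.isUnit
      convert this using 1
      linear_combination (-2 * y) * v.inv_mul
    obtain ⟨w, hw⟩ := hd.exists_right_inv
    refine ⟨y - w * (y ^ 2 + r * y + (r ^ 2 - u)), ?_⟩
    rw [pow_succ (2 : ℕ) k, pow_mul]
    have e : (y - w * (y ^ 2 + r * y + (r ^ 2 - u))) ^ 2 +
        r * (y - w * (y ^ 2 + r * y + (r ^ 2 - u))) + (r ^ 2 - u) =
        w ^ 2 * (y ^ 2 + r * y + (r ^ 2 - u)) ^ 2 := by
      linear_combination (-(y ^ 2 + r * y + (r ^ 2 - u))) * hw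
    rw [e]
    exact (pow_dvd_pow_of_dvd hy 2).mul_left _

include h2 in
/-- Units are represented modulo `4` by the form `x² + xy + y²`. -/
lemma exists_form_eq_unit [Finite (R ⧸ Ideal.span {(2 : R)})] {u : R} (hu : IsUnit u) :
    ∃ x y v : R, x ^ 2 + x * y + y ^ 2 = u + 4 * v := by
  obtain ⟨m, hm, hum⟩ : ∃ m : ℕ, 0 < m ∧ (2 : R) ∣ u ^ m - 1 := by
    let U : (R ⧸ Ideal.span {(2 : R)})ˣ := 
      Units.map (Ideal.Quotient.mk (Ideal.span {(2 : R)})).toMonoidHom hu.unit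
    refine ⟨Nat.card (R ⧸ Ideal.span {(2 : R)})ˣ, Nat.card_pos, ?_⟩
    have h1 := congrArg Units.val (pow_card_eq_one' (x := U))
    rw [← Ideal.mem_span_singleton, ← Ideal.Quotient.eq, map_pow, map_one]
    rwa [Units.val_pow_eq_pow_val, Units.val_one] at h1
  obtain ⟨a, b, hb, rfl⟩ := Nat.exists_eq_two_pow_mul_odd hm.ne'
  obtain ⟨c, rfl⟩ := hb
  -- `u ^ (c + 1)` is a square root of `u` in the reduction, up to nilpotents
  have hν : (2 : R) ∣ ((u ^ (c + 1)) ^ 2 - u) ^ 2 ^ a := by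
    have h3 := two_dvd_sub_pow ((u ^ (c + 1)) ^ 2) u a
    have h4 : (2 : R) ∣ ((u ^ (c + 1)) ^ 2) ^ 2 ^ a - u ^ 2 ^ a := by
      have := hum.mul_left (u ^ 2 ^ a)
      convert this using 1
      rw [mul_sub, mul_one, ← pow_mul, ← pow_mul, ← pow_add]
      congr 2
      ring
    simpa using dvd_add h3 h4
  obtain ⟨y, hy⟩ := exists_newton h2 (u := u) (hu.pow (c + 1)) (a + 1)
  rw [pow_succ (2 : ℕ) a, pow_mul] at hy
  obtain ⟨v, hv⟩ := (pow_dvd_pow_of_dvd hν 2).trans hy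
  exact ⟨u ^ (c + 1), y, v, by linear_combination hv⟩

variable {K : Type*} [Field K] [CharZero K] [Algebra R K]

/-- The product of `d` with some sum of four squares is of the form `1 + 4a` with `a` in `R`. -/
def FourSqMod (R : Type*) [CommRing R] [Algebra R K] (d : K) : Prop :=
  ∃ n : K, IsFourSq n ∧ ∃ a : R, d * n = 1 + 4 * algebraMap R K a

lemma FourSqMod.mul {d e : K} (hd : FourSqMod R d) (he : FourSqMod R e) : FourSqMod R (d * e) := by
  obtain ⟨n, hn, a, ha⟩ := hd
  obtain ⟨m, hm, b, hb⟩ := he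
  refine ⟨n * m, hn.mul hm, a + b + 4 * (a * b), ?_⟩
  have : d * e * (n * m) = (d * n) * (e * m) := by ring
  rw [this, ha, hb]
  simp only [map_add, map_mul, map_ofNat]
  ring

lemma IsFourSq.fourSqMod {d : K} (hd : IsFourSq d) (h0 : d ≠ 0) : FourSqMod R d :=
  ⟨d⁻¹, hd.inv, 0, by simp [h0]⟩

include h2 in
lemma fourSqMod_unit [Finite (R ⧸ Ideal.span {(2 : R)})] (u : Rˣ) :
    FourSqMod R (algebraMap R K u) := by
  obtain ⟨x, y, v, h⟩ := exists_form_eq_unit h2 (u⁻¹).isUnit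
  refine ⟨_, isFourSq_form (algebraMap R K x) (algebraMap R K y) 0, u * v, ?_⟩
  have h' := congrArg (algebraMap R K) h
  have hu : algebraMap R K u * algebraMap R K (u⁻¹ : Rˣ) = 1 := by
    rw [← map_mul, Units.mul_inv, map_one]
  simp only [map_add, map_mul, map_pow, map_ofNat] at h' ⊢
  linear_combination (algebraMap R K u) * h' + hu

variable [IsDomain R] [IsPrincipalIdealRing R] [IsFractionRing R K]

include h2 in
lemma prime_dvd_two {r : R} (hr : Prime r) : r ∣ 2 := by
  by_contra h
  obtain ⟨a, b, hab⟩ := (hr.irreducible.coprime_iff_not_dvd).mpr h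
  apply hr.not_isUnit
  apply isUnit_of_mul_isUnit_right (x := a)
  convert h2 (-b) using 1
  linear_combination hab

lemma isUnit_of_forall_prime {p t : R} (hp : Prime p) (h : ∀ r : R, Prime r → ¬ r ∣ t) :
    IsUnit t := by
  by_contra ht
  have h0 : t ≠ 0 := by
    rintro rfl
    exact h p hp (dvd_zero p)
  obtain ⟨r, hr, hrt⟩ := WfDvdMonoid.exists_irreducible_factor ht h0
  exact h r hr.prime hrt

include h2 in
lemma fourSqMod_prime_of [Finite (R ⧸ Ideal.span {(2 : R)})] {p t : R} (hp : Prime p)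
    (ht : IsUnit t) (h : IsFourSq (algebraMap R K (p * t))) : FourSqMod R (algebraMap R K p) := by
  obtain ⟨t, rfl⟩ := ht
  have h0 : algebraMap R K (p * t) ≠ 0 := by
    rw [Ne, IsFractionRing.to_map_eq_zero_iff]
    exact mul_ne_zero hp.ne_zero t.ne_zero
  have := (h.fourSqMod (R := R) h0).mul (fourSqMod_unit (K := K) h2 t⁻¹)
  rwa [← map_mul, mul_assoc, Units.mul_inv, mul_one] at this

include h2 in
/-- Write `2 = p ^ e w` with `w` prime to `p`. Modulo squares, `2` is `w` or `pw` according to the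
parity of `e`, so the form `x² + xy + y² + 2z²` becomes `x² + xy + y² + w` or `x² + xy + y² + pw`
after fixing `z`; suitable `x, y` make its value `p` times a unit. -/
lemma fourSqMod_prime [Finite (R ⧸ Ideal.span {(2 : R)})] {p : R} (hp : Prime p) :
    FourSqMod R (algebraMap R K p) := by
  have hinj : Function.Injective (algebraMap R K) := IsFractionRing.injective R K
  have h20 : (2 : R) ≠ 0 := by
    intro h
    have := congrArg (algebraMap R K) h
    rw [map_ofNat, map_zero] at this
    exact two_ne_zero this
  have hr1 : ∀ r : R, Prime r → ¬ r ∣ 1 := fun r hr h ↦ hr.not_isUnit (isUnit_of_dvd_one h)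
  obtain ⟨e, w, hw, he⟩ := WfDvdMonoid.max_power_factor h20 hp.irreducible
  have hcop : IsCoprime p w := (hp.irreducible.coprime_iff_not_dvd).mpr hw
  have hrpw : ∀ r : R, Prime r → r ∣ p ∨ r ∣ w := by
    intro r hr
    have := prime_dvd_two h2 hr
    rw [he] at this
    exact (hr.dvd_or_dvd this).imp_left hr.dvd_of_dvd_pow
  have hpK : algebraMap R K p ≠ 0 := by
    rw [Ne, IsFractionRing.to_map_eq_zero_iff]
    exact hp.ne_zero
  have heK := congrArg (algebraMap R K) he
  simp only [map_mul, map_pow, map_ofNat] at heK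
  rcases Nat.even_or_odd' e with ⟨k, rfl | rfl⟩
  · obtain ⟨α, β, hαβ⟩ := hcop.pow_left (m := 2)
    obtain ⟨u, hu⟩ : ∃ u, u = 1 + w * (β * (p - w - 1)) := ⟨_, rfl⟩
    have hu' : u = p - w - α * p ^ 2 * (p - w - 1) := by
      linear_combination hu + (p - w - 1) * hαβ
    have huu : IsUnit u := by
      refine isUnit_of_forall_prime hp fun r hr hru ↦ ?_
      have hrw : r ∣ w := by
        rcases hrpw r hr with h | h
        · have h1 : r ∣ p * (1 - α * p * (p - w - 1)) - u := dvd_sub (h.mul_right _) hru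
          convert h1 using 1
          linear_combination hu'
        · exact h
      refine hr1 r hr ?_
      have h1 : r ∣ u - w * (β * (p - w - 1)) := dvd_sub hru (hrw.mul_right _)
      rwa [hu, add_sub_cancel_right] at h1
    obtain ⟨x, y, v, hxy⟩ := exists_form_eq_unit h2 huu
    obtain ⟨q, hq⟩ := prime_dvd_two h2 hp
    have hpt : x ^ 2 + x * y + y ^ 2 + w =
        p * (1 - α * p * (p - w - 1) + p * q ^ 2 * v) := by
      linear_combination hxy + hu' + v * (2 + p * q) * hq
    refine fourSqMod_prime_of h2 hp (t := 1 - α * p * (p - w - 1) + p * q ^ 2 * v) ?_ ?_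
    · refine isUnit_of_forall_prime hp fun r hr hrt ↦ hr1 r hr ?_
      rcases hrpw r hr with h | h
      · have h1 := dvd_sub hrt (h.mul_right (q ^ 2 * v - α * (p - w - 1)))
        convert h1 using 1
        ring
      · have h3 : r ∣ w * (1 + β * (p - w - 1)) + 2 * (2 * v) :=
          dvd_add (h.mul_right _) ((prime_dvd_two h2 hr).mul_right _)
        have h1 := dvd_sub (hrt.mul_left p) h3
        convert h1 using 1
        linear_combination hpt - hxy - hu
    · rw [← hpt]
      have := isFourSq_form (algebraMap R K x) (algebraMap R K y) ((algebraMap R K p ^ k)⁻¹)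
      convert this using 1
      have : 2 * ((algebraMap R K p ^ k)⁻¹) ^ 2 = algebraMap R K w := by
        rw [heK]; field_simp; ring
      rw [this]
      simp only [map_add, map_mul, map_pow]
  · obtain ⟨α, β, hαβ⟩ := hcop
    refine fourSqMod_prime_of h2 hp (t := α ^ 2 * p + w) ?_ ?_
    · refine isUnit_of_forall_prime hp fun r hr hrt ↦ hr1 r hr ?_
      rw [← hαβ]
      rcases hrpw r hr with h | h
      · have h1 : r ∣ w := (dvd_add_right (h.mul_left _)).mp hrt
        exact dvd_add (h.mul_left _) (h1.mul_left _)
      · have h1 : r ∣ α ^ 2 * p := (dvd_add_left h).mp hrt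
        refine dvd_add ?_ (h.mul_left _)
        rcases hr.dvd_or_dvd h1 with h3 | h3
        · exact (hr.dvd_of_dvd_pow h3).mul_right _
        · exact h3.mul_left _
    · have := isFourSq_form (algebraMap R K (α * p)) 0 ((algebraMap R K p ^ k)⁻¹)
      convert this using 1
      have : 2 * ((algebraMap R K p ^ k)⁻¹) ^ 2 = algebraMap R K (p * w) := by
        rw [heK, map_mul]; field_simp; ring
      rw [this]
      simp only [map_add, map_mul, map_pow]
      ring

include h2 in
/-- The dyadic part of the four-square theorem. -/
lemma fourSqMod_of_ne_zero [Finite (R ⧸ Ideal.span {(2 : R)})] {d : K} (hd : d ≠ 0) :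
    FourSqMod R d := by
  have key : ∀ a : R, a ≠ 0 → FourSqMod R (algebraMap R K a) := by
    intro a
    induction a using UniqueFactorizationMonoid.induction_on_prime with
    | h₁ => intro h; exact absurd rfl h
    | h₂ x hx => intro _; obtain ⟨u, rfl⟩ := hx; exact fourSqMod_unit h2 u
    | h₃ a p ha hp ih =>
      intro _
      rw [map_mul]
      exact (fourSqMod_prime h2 hp).mul (ih ha)
  obtain ⟨a, b, hb, rfl⟩ := IsFractionRing.div_surjective (A := R) d
  have hb0 : algebraMap R K b ≠ 0 := by
    rw [Ne, IsFractionRing.to_map_eq_zero_iff]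
    exact nonZeroDivisors.ne_zero hb
  have ha0 : algebraMap R K a ≠ 0 := fun h ↦ hd (by rw [h, zero_div])
  have h1 := (key a (by rintro rfl; simp at ha0)).mul
    ((key b (nonZeroDivisors.ne_zero hb)).mul
      ((IsFourSq.sq (algebraMap R K b)⁻¹).fourSqMod (R := R) (pow_ne_zero 2 (inv_ne_zero hb0))))
  convert h1 using 1
  field_simp

end SemiLocal

end FourSquares
end FourthPower

namespace FourthPower

section FourSquaresNumberField

universe u

open NumberField

/-- A Dedekind domain in which every `1 + 2a` is a unit and the quotient by `2` is finite has only
finitely many maximal ideals, so it is principal. -/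
lemma isPrincipalIdealRing_of_two {R : Type*} [CommRing R] [IsDedekindDomain R]
    (h2 : ∀ a : R, IsUnit (1 + 2 * a)) [Finite (R ⧸ Ideal.span {(2 : R)})] :
    IsPrincipalIdealRing R := by
  apply IsPrincipalIdealRing.of_finite_maximals
  have hmem : ∀ I : Ideal R, I.IsMaximal → Ideal.span {(2 : R)} ≤ I := by
    intro I hI
    rw [Ideal.span_singleton_le_iff_mem]
    by_contra h
    obtain ⟨y, i, hi, hy⟩ := hI.exists_inv h
    refine hI.ne_top (Ideal.eq_top_of_isUnit_mem I hi ?_)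
    convert h2 (-y) using 1
    linear_combination hy
  have : Finite (Ideal (R ⧸ Ideal.span {(2 : R)})) :=
    Finite.of_injective (fun I ↦ (I : Set (R ⧸ Ideal.span {(2 : R)}))) SetLike.coe_injective
  refine Set.Finite.of_finite_image
    (f := fun I ↦ I.map (Ideal.Quotient.mk (Ideal.span {(2 : R)}))) (Set.toFinite _) ?_
  intro I hI J hJ hIJ
  have e : ∀ I : Ideal R, I.IsMaximal → (I.map (Ideal.Quotient.mk (Ideal.span {(2 : R)}))).comap
      (Ideal.Quotient.mk (Ideal.span {(2 : R)})) = I := by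
    intro I hI
    rw [Ideal.comap_map_of_surjective _ Ideal.Quotient.mk_surjective, ← RingHom.ker_eq_comap_bot,
      Ideal.mk_ker]
    exact sup_eq_left.mpr (hmem I hI)
  rw [← e I hI, ← e J hJ]
  exact congrArg _ hIJ

/-- The elements that are invertible modulo `2`. -/
def primeToTwo (A : Type*) [CommRing A] : Submonoid A where
  carrier := {b | ∃ c e : A, b * c = 1 + 2 * e}
  one_mem' := ⟨1, 0, by ring⟩
  mul_mem' := by
    rintro a b ⟨c, e, h⟩ ⟨c', e', h'⟩
    exact ⟨c * c', e + e' + 2 * (e * e'), by linear_combination (b * c') * h + (1 + 2 * e) * h'⟩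

section Local

variable {A R : Type*} [CommRing A] [CommRing R] [Algebra A R] [IsLocalization (primeToTwo A) R]

lemma isUnit_one_add_two_mul (A : Type*) {R : Type*} [CommRing A] [CommRing R] [Algebra A R]
    [IsLocalization (primeToTwo A) R] (a : R) : IsUnit (1 + 2 * a) := by
  obtain ⟨x, s, rfl⟩ := IsLocalization.exists_mk'_eq (primeToTwo A) a
  have hs : (s : A) + 2 * x ∈ primeToTwo A := by
    obtain ⟨c, e, h⟩ := s.2
    exact ⟨c, e + x * c, by linear_combination h⟩
  have h1 := IsLocalization.map_units R (⟨_, hs⟩ : primeToTwo A)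
  have h2 : algebraMap A R s * (1 + 2 * IsLocalization.mk' R x s) = algebraMap A R (s + 2 * x) := by
    have := IsLocalization.mk'_spec R x s
    rw [map_add, map_mul, map_ofNat]
    linear_combination 2 * this
  rw [← h2] at h1
  exact isUnit_of_mul_isUnit_right h1

lemma finite_quotient_two (A : Type*) {R : Type*} [CommRing A] [CommRing R] [Algebra A R]
    [IsLocalization (primeToTwo A) R] [Finite (A ⧸ Ideal.span {(2 : A)})] :
    Finite (R ⧸ Ideal.span {(2 : R)}) := by
  refine Finite.of_surjective (Ideal.quotientMap (I := Ideal.span {(2 : A)})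
    (Ideal.span {(2 : R)}) (algebraMap A R) ?_) ?_
  · rw [Ideal.span_singleton_le_iff_mem, Ideal.mem_comap, map_ofNat]
    exact Ideal.mem_span_singleton_self _
  · intro y
    obtain ⟨y, rfl⟩ := Ideal.Quotient.mk_surjective y
    obtain ⟨x, s, rfl⟩ := IsLocalization.exists_mk'_eq (primeToTwo A) y
    obtain ⟨c, e, h⟩ := s.2
    refine ⟨Ideal.Quotient.mk _ (x * c), ?_⟩
    rw [Ideal.quotientMap_mk, Ideal.Quotient.eq, Ideal.mem_span_singleton]
    refine ⟨IsLocalization.mk' R x s * algebraMap A R e, ?_⟩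
    have h1 := IsLocalization.mk'_spec R x s
    have h2 := congrArg (algebraMap A R) h
    simp only [map_mul, map_add, map_one, map_ofNat] at h2 ⊢
    linear_combination (-algebraMap A R c) * h1 + IsLocalization.mk' R x s * h2

end Local

/-- An element of a number field which is positive at all real places is a sum of four squares. -/
theorem isFourSq_of_pos {K : Type u} [Field K] [NumberField K] (ρ₀ : K →+* ℝ) {d : K}
    (hpos : ∀ ρ : K →+* ℝ, 0 < ρ d) : IsFourSq d := by
  have hd : d ≠ 0 := by
    rintro rfl
    simpa using hpos ρ₀
  have hA0 : (0 : 𝓞 K) ∉ primeToTwo (𝓞 K) := by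
    rintro ⟨c, e, h⟩
    have h1 : (2 : 𝓞 K) ∣ 1 := ⟨-e, by linear_combination -h⟩
    obtain ⟨z, hz⟩ := h1
    have hz' : (z : K) = algebraMap ℚ K (1 / 2) := by
      have := congrArg (fun t : 𝓞 K ↦ (t : K)) hz
      simp only [map_one, map_mul, map_ofNat] at this
      rw [map_div₀, map_one, map_ofNat, eq_div_iff two_ne_zero, this]
      ring
    have hi : IsIntegral ℤ (1 / 2 : ℚ) := by
      rw [← isIntegral_algebraMap_iff (algebraMap ℚ K).injective, ← hz']
      exact z.2
    obtain ⟨y, hy⟩ := IsIntegrallyClosed.isIntegral_iff.mp hi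
    have hy' : (y : ℚ) * 2 = 1 := by
      rw [eq_intCast] at hy
      rw [hy]; norm_num
    have : y * 2 = 1 := by exact_mod_cast hy'
    omega
  have hS : primeToTwo (𝓞 K) ≤ nonZeroDivisors (𝓞 K) := le_nonZeroDivisors_of_noZeroDivisors hA0
  let R := Localization.subalgebra.ofField K (primeToTwo (𝓞 K)) hS
  have : IsLocalization (primeToTwo (𝓞 K)) R := inferInstance
  have : IsDedekindDomain R := IsLocalization.isDedekindDomain (𝓞 K) hS R
  have : Finite (𝓞 K ⧸ Ideal.span {(2 : 𝓞 K)}) :=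
    Ring.HasFiniteQuotients.finiteQuotient (by simp)
  have : Finite (R ⧸ Ideal.span {(2 : R)}) := finite_quotient_two (𝓞 K)
  have h2 : ∀ a : R, IsUnit (1 + 2 * a) := isUnit_one_add_two_mul (𝓞 K)
  have : IsPrincipalIdealRing R := isPrincipalIdealRing_of_two h2
  obtain ⟨n, hn, a, ha⟩ := fourSqMod_of_ne_zero (R := R) h2 hd
  obtain ⟨x, s, rfl⟩ := IsLocalization.exists_mk'_eq (primeToTwo (𝓞 K)) a
  obtain ⟨c, e, h⟩ := s.2
  -- clearing the odd denominator `s` by a factor congruent to `1` modulo `4`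
  have h4 : ∃ c' e' : 𝓞 K, s * c' = 1 + 4 * e' :=
    ⟨c * (1 - 2 * e), -e ^ 2, by linear_combination (1 - 2 * e) * h⟩
  obtain ⟨c', e', h'⟩ := h4
  set m : K := algebraMap (𝓞 K) K (s * c') with hm
  have hsK : algebraMap R K (IsLocalization.mk' R x s) * algebraMap (𝓞 K) K s =
      algebraMap (𝓞 K) K x := by
    have := congrArg (algebraMap R K) (IsLocalization.mk'_spec R x s)
    rwa [map_mul] at this
  have hx1 : d * (n * m ^ 2) = 1 + 4 * (((2 * e' + 4 * e' ^ 2 + x * c' * (s * c')) : 𝓞 K) : K) := by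
    have hm1 : m = 1 + 4 * algebraMap (𝓞 K) K e' := by
      rw [hm, h']; simp only [map_add, map_mul, map_one, map_ofNat]
    have hm2 : m = algebraMap (𝓞 K) K s * algebraMap (𝓞 K) K c' := by rw [hm, map_mul]
    simp only [map_add, map_mul, map_ofNat, map_pow, ← hsK]
    rw [← hm2, ← mul_assoc, ha]
    set y := algebraMap R K (IsLocalization.mk' R x s)
    linear_combination (1 + m + 4 * algebraMap (𝓞 K) K e') * hm1 + 4 * y * m * hm2
  have hm0 : m ≠ 0 := by
    rw [hm, RingOfIntegers.coe_ne_zero_iff]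
    intro h0
    refine hA0 ⟨0, 2 * e', ?_⟩
    linear_combination h' - h0
  have hn0 : n ≠ 0 := by
    rintro rfl
    obtain ⟨f, hf⟩ := isUnit_iff_exists_inv.mp (h2 (2 * IsLocalization.mk' R x s))
    have h7 := congrArg (algebraMap R K) hf
    simp only [map_add, map_mul, map_ofNat, map_one] at h7
    have h8 : (1 : K) = 0 := by
      linear_combination -h7 - algebraMap R K f * ha
    exact one_ne_zero h8
  have hnm : ∀ ρ : K →+* ℝ, 0 < ρ (n * m ^ 2) := by
    intro ρ
    have h1 : ρ (n * m ^ 2) ≠ 0 := by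
      rw [Ne, map_eq_zero]
      exact mul_ne_zero hn0 (pow_ne_zero 2 hm0)
    refine lt_of_le_of_ne ?_ h1.symm
    obtain ⟨p, q, r, t, rfl⟩ := hn
    simp only [map_mul, map_add, map_pow]
    positivity
  obtain ⟨p, q, r, hpqr⟩ := three_squares ρ₀ (2 * e' + 4 * e' ^ 2 + x * c' * (s * c')) (by
    intro ρ
    rw [← hx1, map_mul]
    exact mul_pos (hpos ρ) (hnm ρ))
  have h5 : IsFourSq (d * (n * m ^ 2)) := ⟨p, q, r, 0, by rw [hx1, hpqr]; ring⟩
  have h6 := h5.mul (hn.mul (IsFourSq.sq m)).inv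
  rwa [mul_assoc, mul_inv_cancel₀ (mul_ne_zero hn0 (pow_ne_zero 2 hm0)), mul_one] at h6

end FourSquaresNumberField
end FourthPower

/-! ### Trace forms and total positivity -/

namespace FourthPower

section TotallyPositive

universe u

open NumberField InfinitePlace

variable {K : Type u} [Field K] [NumberField K]

lemma continuous_embedding (φ : K →ₐ[ℚ] ℂ) :
    Continuous (fun x : WithAbs (mk φ.toRingHom).1 ↦ φ x.ofAbs) := by
  have : Isometry ((φ.toRingHom).comp (WithAbs.equiv (mk φ.toRingHom).1).toRingHom) :=
    AddMonoidHomClass.isometry_of_norm _ fun x ↦ rfl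
  exact this.continuous

open Classical in
/-- If the form `z ↦ Tr(tz²)` is nonnegative on `K`, then so is its extension to each archimedean
completion, by weak approximation. -/
lemma sum_place_nonneg {t : K} (h : ∀ z : K, 0 ≤ Algebra.trace ℚ K (t * z ^ 2))
    (w : InfinitePlace K) (k : K) :
    0 ≤ ∑ φ : K →ₐ[ℚ] ℂ, if mk φ.toRingHom = w then (φ (t * k ^ 2)).re else 0 := by
  let G : ((v : InfinitePlace K) → WithAbs v.1) → ℝ := fun x ↦
    ∑ φ : K →ₐ[ℚ] ℂ, (φ t * (φ (x (mk φ.toRingHom)).ofAbs) ^ 2).re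
  have hG : Continuous G := by
    refine continuous_finsetSum _ fun φ _ ↦ Complex.continuous_re.comp ?_
    exact continuous_const.mul
      (((continuous_embedding φ).comp (continuous_apply (mk φ.toRingHom))).pow 2)
  have hG0 : ∀ x, 0 ≤ G x := by
    intro x
    refine (denseRange_algebraMap_pi K).induction_on (p := fun x ↦ 0 ≤ G x) x
      (isClosed_le continuous_const hG) fun z ↦ ?_
    have h1 := congrArg Complex.re
      (trace_eq_sum_embeddings (K := ℚ) (L := K) (E := ℂ) (x := t * z ^ 2))
    rw [Complex.re_sum] at h1
    have h2 : G (algebraMap K _ z) = ∑ φ : K →ₐ[ℚ] ℂ, (φ (t * z ^ 2)).re := by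
      refine Finset.sum_congr rfl fun φ _ ↦ ?_
      rw [map_mul, map_pow]
      rfl
    rw [h2, ← h1]
    simpa using h z
  have h3 := hG0 (Pi.single w (WithAbs.toAbs w.1 k))
  refine h3.trans_eq (Finset.sum_congr rfl fun φ _ ↦ ?_)
  split_ifs with hw
  · subst hw
    rw [Pi.single_eq_same, map_mul, map_pow]
  · rw [Pi.single_eq_of_ne hw]
    simp

lemma re_conjugate_aux {φ ψ : K →ₐ[ℚ] ℂ} (h : mk φ.toRingHom = mk ψ.toRingHom) (k : K) :
    (φ k).re = (ψ k).re := by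
  rcases mk_eq_iff.mp h with h | h
  · exact congrArg Complex.re (DFunLike.congr_fun h k)
  · have := congrArg Complex.re (DFunLike.congr_fun h k)
    exact this

lemma re_nonneg_of_trace {t : K} (h : ∀ z : K, 0 ≤ Algebra.trace ℚ K (t * z ^ 2))
    (φ : K →+* ℂ) (k : K) : 0 ≤ (φ (t * k ^ 2)).re := by
  classical
  let φ' : K →ₐ[ℚ] ℂ := φ.toRatAlgHom
  have h1 := sum_place_nonneg h (mk φ) k
  by_contra hlt
  push Not at hlt
  refine h1.not_gt ?_
  have hle : ∀ ψ : K →ₐ[ℚ] ℂ, (if mk ψ.toRingHom = mk φ then (ψ (t * k ^ 2)).re else 0) ≤ 0 := by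
    intro ψ
    split_ifs with hw
    · rw [re_conjugate_aux (ψ := φ') hw]
      exact hlt.le
    · exact le_rfl
  refine Finset.sum_neg' (fun ψ _ ↦ hle ψ) ⟨φ', Finset.mem_univ _, ?_⟩
  have hφ' : mk φ'.toRingHom = mk φ := rfl
  rw [if_pos hφ']
  exact hlt

/-- The form `c ↦ Re(mc²)` is indefinite on `ℂ`, hence on every rational plane `ℚ + ℚz` spanning
`ℂ`. -/
lemma exists_re_neg {m z : ℂ} (hm : m ≠ 0) (hz : z.im ≠ 0)
    (h : ∀ p q : ℚ, 0 ≤ (m * ((p : ℂ) + q * z) ^ 2).re) : False := by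
  have h1 : ∀ y : ℝ × ℝ, 0 ≤ (m * ((y.1 : ℂ) + y.2 * z) ^ 2).re := by
    intro y
    have hd : DenseRange (Prod.map ((↑) : ℚ → ℝ) ((↑) : ℚ → ℝ)) :=
      Rat.denseRange_cast.prodMap Rat.denseRange_cast
    refine hd.induction_on (p := fun y : ℝ × ℝ ↦ 0 ≤ (m * ((y.1 : ℂ) + y.2 * z) ^ 2).re) y
      (isClosed_le continuous_const (by fun_prop)) fun x ↦ ?_
    simpa using h x.1 x.2
  obtain ⟨c, hc⟩ := IsAlgClosed.exists_pow_nat_eq (-(starRingEnd ℂ) m) (n := 2) (by norm_num)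
  have h2 := h1 (c.re - c.im / z.im * z.re, c.im / z.im)
  have h3 : ((c.re - c.im / z.im * z.re : ℝ) : ℂ) + ((c.im / z.im : ℝ) : ℂ) * z = c := by
    apply Complex.ext
    · simp
    · simp [hz]
  simp only at h2
  rw [h3, hc, mul_neg, Complex.mul_conj, Complex.neg_re, Complex.ofReal_re] at h2
  have := Complex.normSq_pos.mpr hm
  linarith

/-- If `Tr(μz²)` and `Tr(μθz²)` are positive definite on `K`, then `K` has only real places, and
`θ` is positive at all of them. -/
lemma exists_real_and_pos_of_trace {μ θ : K} (hμ : ∀ z : K, z ≠ 0 → 0 < Algebra.trace ℚ K (μ * z ^ 2))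
    (hθ : ∀ z : K, z ≠ 0 → 0 < Algebra.trace ℚ K (μ * θ * z ^ 2)) :
    Nonempty (K →+* ℝ) ∧ ∀ ρ : K →+* ℝ, 0 < ρ θ := by
  have hμ' : ∀ z : K, 0 ≤ Algebra.trace ℚ K (μ * z ^ 2) := by
    intro z
    by_cases hz : z = 0
    · subst hz; simp
    · exact (hμ z hz).le
  have hθ' : ∀ z : K, 0 ≤ Algebra.trace ℚ K (μ * θ * z ^ 2) := by
    intro z
    by_cases hz : z = 0
    · subst hz; simp
    · exact (hθ z hz).le
  have hμ0 : μ ≠ 0 := by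
    rintro rfl
    simpa using hμ 1 one_ne_zero
  have hθ0 : θ ≠ 0 := by
    rintro rfl
    simpa using hθ 1 one_ne_zero
  constructor
  · obtain ⟨w⟩ : Nonempty (InfinitePlace K) := inferInstance
    by_cases hw : w.IsReal
    · exact ⟨embedding_of_isReal hw⟩
    exfalso
    obtain ⟨k, hk⟩ : ∃ k : K, (w.embedding k).im ≠ 0 := by
      by_contra! hk
      refine hw (isReal_iff.mpr (ComplexEmbedding.isReal_iff.mpr (RingHom.ext fun x ↦ ?_)))
      exact Complex.conj_eq_iff_im.mpr (hk x)
    refine exists_re_neg (m := w.embedding μ) (z := w.embedding k) (by simpa using hμ0) hk ?_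
    intro p q
    have h1 := re_nonneg_of_trace hμ' w.embedding (algebraMap ℚ K p + algebraMap ℚ K q * k)
    simpa using h1
  · intro ρ
    have h1 := re_nonneg_of_trace hμ' (Complex.ofRealHom.comp ρ) 1
    have h2 := re_nonneg_of_trace hθ' (Complex.ofRealHom.comp ρ) 1
    simp only [one_pow, mul_one, RingHom.comp_apply, Complex.ofRealHom_eq_coe, Complex.ofReal_re,
      map_mul, Complex.re_ofReal_mul] at h1 h2
    have h3 : ρ μ ≠ 0 := by simpa using hμ0
    have h4 : ρ θ ≠ 0 := by simpa using hθ0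
    have h5 := lt_of_le_of_ne h1 h3.symm
    exact lt_of_le_of_ne (nonneg_of_mul_nonneg_right h2 h5) h4.symm

end TotallyPositive
end FourthPower

/-! ### Symmetric elements of a division algebra with positive involution -/

namespace FourthPower

section SymmetricElements

universe u

open NumberField InfinitePlace Polynomial

variable {D : Type u} [DivisionRing D] [Algebra ℚ D]

lemma algTraceQ_add (x y : D) : algTraceQ D (x + y) = algTraceQ D x + algTraceQ D y := by
  unfold algTraceQ
  rw [← map_add]
  congr 1
  ext z
  simp [add_mul]

lemma st_zero {st : D → D} (hst : IsInvolutionQ D st) : st 0 = 0 := by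
  simpa using hst.2.2.2 0

lemma st_one {st : D → D} (hst : IsInvolutionQ D st) : st 1 = 1 := by
  simpa using hst.2.2.2 1

lemma st_sum {st : D → D} (hst : IsInvolutionQ D st) {ι : Type*} (s : Finset ι) (f : ι → D) :
    st (∑ i ∈ s, f i) = ∑ i ∈ s, st (f i) :=
  map_sum (⟨⟨st, st_zero hst⟩, hst.1⟩ : D →+ D) f s

lemma st_pow {st : D → D} (hst : IsInvolutionQ D st) {d : D} (hd : st d = d) (n : ℕ) :
    st (d ^ n) = d ^ n := by
  induction n with
  | zero => simpa using st_one hst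
  | succ n ih => rw [pow_succ, hst.2.1, ih, hd, ← pow_succ, ← pow_succ']

lemma st_aeval {st : D → D} (hst : IsInvolutionQ D st) {d : D} (hd : st d = d) (p : ℚ[X]) :
    st (aeval d p) = aeval d p := by
  induction p using Polynomial.induction_on' with
  | add p q hp hq => rw [map_add, hst.1, hp, hq]
  | monomial n r =>
    rw [aeval_monomial, hst.2.1, st_pow hst hd, hst.2.2.2, Algebra.commutes]

/-- A symmetric element of `D` lies in the image of a number field consisting of symmetric
elements. -/
lemma exists_numberField [FiniteDimensional ℚ D] {st : D → D} (hst : IsInvolutionQ D st) {d : D}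
    (hd : st d = d) :
    ∃ (K : Type) (_ : Field K) (_ : NumberField K) (φ : K →+* D) (θ : K), φ θ = d ∧
      ∀ k, st (φ k) = φ k := by
  have hdint : IsIntegral ℚ d := Algebra.IsIntegral.isIntegral d
  have : Fact (Irreducible (minpoly ℚ d)) := ⟨minpoly.irreducible hdint⟩
  let φ : AdjoinRoot (minpoly ℚ d) →+* D :=
    Ideal.Quotient.lift (Ideal.span {minpoly ℚ d}) (aeval d : ℚ[X] →ₐ[ℚ] D).toRingHom (by
      intro a ha
      obtain ⟨b, rfl⟩ := Ideal.mem_span_singleton.mp ha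
      change aeval d (minpoly ℚ d * b) = 0
      rw [map_mul, minpoly.aeval, zero_mul])
  refine ⟨AdjoinRoot (minpoly ℚ d), inferInstance, inferInstance, φ,
    AdjoinRoot.root (minpoly ℚ d), ?_, ?_⟩
  · change aeval d X = d
    exact aeval_X d
  · intro k
    obtain ⟨p, rfl⟩ := Ideal.Quotient.mk_surjective k
    exact st_aeval hst hd p

/-- A symmetric element `d` for which `x ↦ x* d x` is positive definite is a sum of four squares of
commuting symmetric elements. -/
theorem exists_four_squares [FiniteDimensional ℚ D] {st : D → D} (hst : IsPositiveInvolutionQ D st)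
    {d : D} (hd : st d = d) (hpos : ∀ x : D, x ≠ 0 → 0 < algTraceQ D (st x * d * x)) :
    ∃ (K : Type) (_ : Field K) (φ : K →+* D) (a b c e : K), (∀ k, st (φ k) = φ k) ∧
      d = φ (a ^ 2 + b ^ 2 + c ^ 2 + e ^ 2) := by
  obtain ⟨K, _, _, φ, θ, hθ, hφ⟩ := exists_numberField hst.1 hd
  let ℓ₀ : K →+ ℚ :=
    { toFun := fun k ↦ algTraceQ D (φ k)
      map_zero' := by simp [algTraceQ]
      map_add' := fun x y ↦ by rw [map_add, algTraceQ_add] }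
  let ℓ : Module.Dual ℚ K := ℓ₀.toRatLinearMap
  let μ : K := ((Algebra.traceForm ℚ K).toDual (traceForm_nondegenerate ℚ K)).symm ℓ
  have hμ : ∀ k, Algebra.trace ℚ K (μ * k) = algTraceQ D (φ k) := fun k ↦
    LinearMap.BilinForm.apply_toDual_symm_apply (hB := traceForm_nondegenerate ℚ K) ℓ k
  have h1 : ∀ z : K, z ≠ 0 → 0 < Algebra.trace ℚ K (μ * z ^ 2) := by
    intro z hz
    rw [hμ, pow_two, map_mul]
    have := hst.2 (φ z) (by simpa using hz)
    rwa [hφ] at this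
  have h2 : ∀ z : K, z ≠ 0 → 0 < Algebra.trace ℚ K (μ * θ * z ^ 2) := by
    intro z hz
    have e : μ * θ * z ^ 2 = μ * (z * θ * z) := by ring
    rw [e, hμ, map_mul, map_mul, hθ]
    have := hpos (φ z) (by simpa using hz)
    rwa [hφ] at this
  obtain ⟨⟨ρ₀⟩, hρ⟩ := exists_real_and_pos_of_trace h1 h2
  obtain ⟨a, b, c, e, h⟩ := isFourSq_of_pos ρ₀ hρ
  exact ⟨K, inferInstance, φ, a, b, c, e, hφ, by rw [← h, hθ]⟩

end SymmetricElements
end FourthPower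

/-! ### Hermitian forms -/

namespace FourthPower

section HermitianForms

variable {D : Type*} [DivisionRing D] [Algebra ℚ D] {V : Type*} [AddCommGroup V]
  [Module Dᵐᵒᵖ V] {st : D → D} {ψ : V → V → D}

/-- The matrix of left multiplication by a Hamilton quaternion with coordinates `a, b, c, e`; up
to the factor `a² + b² + c² + e²` it is orthogonal. -/
def quatMatrix {K : Type*} [Field K] (a b c e : K) : Fin 4 → Fin 4 → K :=
  ![![a, -b, -c, -e], ![b, a, -e, c], ![c, e, a, -b], ![e, -c, b, a]]

lemma sum_quatMatrix {K : Type*} [Field K] (a b c e : K) (j l : Fin 4) :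
    ∑ k, quatMatrix a b c e k j * quatMatrix a b c e k l =
      if j = l then a ^ 2 + b ^ 2 + c ^ 2 + e ^ 2 else 0 := by
  fin_cases j <;> fin_cases l <;> simp [Fin.sum_univ_four, quatMatrix] <;> ring

lemma psi_zero_right (h : IsHermitianForm D V st ψ) (v : V) : ψ v 0 = 0 := by
  have := h.2.1 v 0 0
  simpa using this

lemma psi_sum_right (h : IsHermitianForm D V st ψ) {ι : Type*} (s : Finset ι) (v : V) (w : ι → V) :
    ψ v (∑ i ∈ s, w i) = ∑ i ∈ s, ψ v (w i) := by
  classical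
  induction s using Finset.induction_on with
  | empty => simpa using psi_zero_right h v
  | insert a s ha ih => rw [Finset.sum_insert ha, Finset.sum_insert ha, h.2.1, ih]

lemma psi_self_ne_zero (h : IsPosDefHermitianForm D V st ψ) {v : V} (hv : v ≠ 0) : ψ v v ≠ 0 := by
  intro h0
  have := h.2 v hv
  rw [h0] at this
  simp [algTraceQ] at this

/-- If `d` is a value of a positive definite Hermitian form, then `⟨d, d, d, d⟩` is isometric to
`⟨1, 1, 1, 1⟩`. The matrix `w` is the inverse change of basis `M / d`, for `M` a symmetric-entry
matrix with `Mᵀ M = d`. -/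
lemma exists_orthogonal_matrix [FiniteDimensional ℚ D] (hst : IsPositiveInvolutionQ D st)
    (h : IsPosDefHermitianForm D V st ψ) {v : V} (hv : v ≠ 0) :
    ∃ w : Fin 4 → Fin 4 → D, (∀ k j, st (w k j) = w k j) ∧
      ∀ j l, ∑ k, w k j * w k l = if j = l then (ψ v v)⁻¹ else 0 := by
  have hpos : ∀ x : D, x ≠ 0 → 0 < algTraceQ D (st x * ψ v v * x) := by
    intro x hx
    have := h.2 (op x • v) (smul_ne_zero (by simpa using hx) hv)
    rwa [h.1.2.2.2.1, h.1.2.2.1] at this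
  obtain ⟨K, _, φ, a, b, c, e, hφ, hd⟩ := exists_four_squares hst (h.1.2.2.2.2 v v).symm hpos
  have hne : a ^ 2 + b ^ 2 + c ^ 2 + e ^ 2 ≠ 0 := by
    intro h0
    rw [h0, map_zero] at hd
    exact psi_self_ne_zero h hv hd
  refine ⟨fun k j ↦ φ (quatMatrix a b c e k j / (a ^ 2 + b ^ 2 + c ^ 2 + e ^ 2)),
    fun k j ↦ hφ _, fun j l ↦ ?_⟩
  simp only [← map_mul, ← map_sum, div_mul_div_comm, ← Finset.sum_div, sum_quatMatrix]
  rw [hd]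
  split_ifs
  · rw [← map_inv₀]
    congr 1
    field_simp
  · simp

/-- The part of `x` orthogonal to the orthogonal family `v`. -/
def residual (ψ : V → V → D) {k : ℕ} (v : Fin k → V) (x : V) : V :=
  x - ∑ i, op ((ψ (v i) (v i))⁻¹ * ψ (v i) x) • v i

lemma psi_residual (h : IsPosDefHermitianForm D V st ψ) {k : ℕ} {v : Fin k → V}
    (hv : ∀ i, v i ≠ 0) (ho : ∀ i j, i ≠ j → ψ (v i) (v j) = 0) (x : V) (j : Fin k) :
    ψ (v j) (residual ψ v x) = 0 := by
  have h1 : ψ (v j) (∑ i, op ((ψ (v i) (v i))⁻¹ * ψ (v i) x) • v i) = ψ (v j) x := by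
    rw [psi_sum_right h.1, Finset.sum_eq_single j]
    · rw [h.1.2.2.2.1, mul_inv_cancel_left₀ (psi_self_ne_zero h (hv j))]
    · intro i _ hij
      rw [h.1.2.2.2.1, ho j i hij.symm, zero_mul]
    · simp
  have h2 := h.1.2.1 (v j) (residual ψ v x) (∑ i, op ((ψ (v i) (v i))⁻¹ * ψ (v i) x) • v i)
  rw [h1, residual, sub_add_cancel] at h2
  rw [residual]
  exact left_eq_add.mp (h2.trans (add_comm _ _))

lemma orthogonal_linearIndependent (h : IsPosDefHermitianForm D V st ψ) {k : ℕ} {v : Fin k → V}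
    (hv : ∀ i, v i ≠ 0) (ho : ∀ i j, i ≠ j → ψ (v i) (v j) = 0) :
    LinearIndependent Dᵐᵒᵖ v := by
  rw [Fintype.linearIndependent_iff]
  intro g hg j
  have h1 : ψ (v j) (∑ i, g i • v i) = ψ (v j) (v j) * unop (g j) := by
    rw [psi_sum_right h.1, Finset.sum_eq_single j]
    · rw [← h.1.2.2.2.1, op_unop]
    · intro i _ hij
      have := h.1.2.2.2.1 (unop (g i)) (v j) (v i)
      rw [op_unop] at this
      rw [this, ho j i hij.symm, zero_mul]
    · simp
  rw [hg, psi_zero_right h.1] at h1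
  have := (mul_eq_zero.mp h1.symm).resolve_left (psi_self_ne_zero h (hv j))
  simpa using this

/-- Gram–Schmidt step: adjoining a nonzero residual keeps the family orthogonal. -/
lemma exists_extend (hst : IsInvolutionQ D st) (h : IsPosDefHermitianForm D V st ψ) {k : ℕ}
    {v : Fin k → V} (hv : ∀ i, v i ≠ 0) (ho : ∀ i j, i ≠ j → ψ (v i) (v j) = 0) {x : V}
    (hx : residual ψ v x ≠ 0) :
    ∃ v' : Fin (k + 1) → V, (∀ i, v' i ≠ 0) ∧ ∀ i j, i ≠ j → ψ (v' i) (v' j) = 0 := by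
  refine ⟨Fin.cons (residual ψ v x) v, ?_, ?_⟩
  · intro i
    refine Fin.cases ?_ (fun i ↦ ?_) i
    · simpa using hx
    · simpa using hv i
  · intro i j
    refine Fin.cases ?_ (fun i ↦ ?_) i <;> refine Fin.cases ?_ (fun j ↦ ?_) j
    · intro hne
      exact absurd rfl hne
    · intro _
      rw [Fin.cons_zero, Fin.cons_succ, h.1.2.2.2.2 (v j), psi_residual h hv ho, st_zero hst]
    · intro _
      rw [Fin.cons_zero, Fin.cons_succ, psi_residual h hv ho]
    · intro hne
      rw [Fin.cons_succ, Fin.cons_succ]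
      exact ho i j fun hij ↦ hne (by rw [hij])

/-- Gram–Schmidt: an orthogonal basis exists, completeness being expressed by the vanishing of all
residuals. -/
lemma exists_orthogonal_basis [Module.Finite Dᵐᵒᵖ V] (hst : IsInvolutionQ D st)
    (h : IsPosDefHermitianForm D V st ψ) :
    ∃ v : Fin (Module.finrank Dᵐᵒᵖ V) → V, (∀ i, v i ≠ 0) ∧ ∀ x, residual ψ v x = 0 := by
  have key : ∀ k ≤ Module.finrank Dᵐᵒᵖ V, ∃ v : Fin k → V, (∀ i, v i ≠ 0) ∧
      ∀ i j, i ≠ j → ψ (v i) (v j) = 0 := by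
    intro k
    induction k with
    | zero => exact fun _ ↦ ⟨Fin.elim0, fun i ↦ i.elim0, fun i ↦ i.elim0⟩
    | succ k ih =>
      intro hk
      obtain ⟨v, hv, ho⟩ := ih (by omega)
      by_cases hx : ∃ x, residual ψ v x ≠ 0
      · obtain ⟨x, hx⟩ := hx
        exact exists_extend hst h hv ho hx
      · push Not at hx
        have hspan : Submodule.span Dᵐᵒᵖ (Set.range v) = ⊤ := by
          rw [eq_top_iff]
          intro x _
          rw [sub_eq_zero.mp (hx x)]
          exact Submodule.sum_mem _ fun i _ ↦
            Submodule.smul_mem _ _ (Submodule.subset_span ⟨i, rfl⟩)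
        have := finrank_le_of_span_eq_top hspan
        rw [Fintype.card_fin] at this
        omega
  obtain ⟨v, hv, ho⟩ := key _ le_rfl
  refine ⟨v, hv, fun x ↦ ?_⟩
  by_contra hx
  obtain ⟨v', hv', ho'⟩ := exists_extend hst h hv ho hx
  have := (orthogonal_linearIndependent h hv' ho').fintype_card_le_finrank
  rw [Fintype.card_fin] at this
  omega

/-- Parseval's identity. -/
lemma psi_eq_sum (h : IsPosDefHermitianForm D V st ψ) {n : ℕ} {v : Fin n → V}
    (hc : ∀ x, residual ψ v x = 0) (x y : V) :
    ψ x y = ∑ i, st (ψ (v i) x) * ((ψ (v i) (v i))⁻¹ * ψ (v i) y) := by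
  conv_lhs => rw [sub_eq_zero.mp (hc y), psi_sum_right h.1]
  refine Finset.sum_congr rfl fun i _ ↦ ?_
  rw [h.1.2.2.2.1, h.1.2.2.2.2 (v i) x]

/-- The isomorphism of right `D`-modules `x ↦ op x`. -/
def opEquiv (D : Type*) [DivisionRing D] : D ≃ₗ[Dᵐᵒᵖ] Dᵐᵒᵖ where
  toFun := op
  invFun := unop
  map_add' _ _ := rfl
  map_smul' _ _ := rfl
  left_inv _ := rfl
  right_inv _ := rfl

/-- The orthogonal sum of four copies of a positive definite form is isometric to the standard
form `∑ x* y`. -/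
lemma exists_isometry_standard [FiniteDimensional ℚ D] [Module.Finite Dᵐᵒᵖ V]
    (hst : IsPositiveInvolutionQ D st) (h : IsPosDefHermitianForm D V st ψ) :
    ∃ g : (Fin 4 → V) ≃ₗ[Dᵐᵒᵖ] (Fin 4 → Fin (Module.finrank Dᵐᵒᵖ V) → D),
      ∀ x y, ∑ k, ∑ i, st (g x k i) * g y k i = ∑ j, ψ (x j) (y j) := by
  obtain ⟨v, hv, hc⟩ := exists_orthogonal_basis hst.1 h
  choose w hw hww using fun i ↦ exists_orthogonal_matrix hst h (hv i)
  let g : (Fin 4 → V) →ₗ[Dᵐᵒᵖ] (Fin 4 → Fin (Module.finrank Dᵐᵒᵖ V) → D) :=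
    { toFun := fun x k i ↦ ∑ j, w i k j * ψ (v i) (x j)
      map_add' := fun x y ↦ by
        ext k i
        simp only [Pi.add_apply, h.1.2.1, mul_add, Finset.sum_add_distrib]
      map_smul' := fun a x ↦ by
        ext k i
        have := h.1.2.2.2.1 (unop a)
        simp only [op_unop] at this
        simp only [Pi.smul_apply, this, RingHom.id_apply, smul_eq_mul_unop, Finset.sum_mul,
          mul_assoc] }
  have hg : ∀ x y, ∑ k, ∑ i, st (g x k i) * g y k i = ∑ j, ψ (x j) (y j) := by
    intro x y
    rw [Finset.sum_comm]
    have e : ∀ i, ∑ k, st (g x k i) * g y k i =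
        ∑ j, st (ψ (v i) (x j)) * ((ψ (v i) (v i))⁻¹ * ψ (v i) (y j)) := by
      intro i
      change ∑ k, st (∑ j, w i k j * ψ (v i) (x j)) * (∑ l, w i k l * ψ (v i) (y l)) = _
      simp only [st_sum hst.1, hst.1.2.1, hw, Finset.sum_mul_sum]
      rw [Finset.sum_comm]
      refine Finset.sum_congr rfl fun j _ ↦ ?_
      rw [Finset.sum_comm]
      have e2 : ∀ l, ∑ k, st (ψ (v i) (x j)) * w i k j * (w i k l * ψ (v i) (y l)) =
          st (ψ (v i) (x j)) * ((if j = l then (ψ (v i) (v i))⁻¹ else 0) * ψ (v i) (y l)) := by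
        intro l
        rw [← hww i j l, Finset.sum_mul, Finset.mul_sum]
        exact Finset.sum_congr rfl fun k _ ↦ by simp only [mul_assoc]
      simp [e2]
    simp only [e]
    rw [Finset.sum_comm]
    exact Finset.sum_congr rfl fun j _ ↦ (psi_eq_sum h hc _ _).symm
  -- An isometry out of a nondegenerate space is injective; the dimensions agree.
  have hinj : Function.Injective g := by
    rw [injective_iff_map_eq_zero]
    intro x hx
    ext j
    by_contra hj
    have h0 := hg x (Pi.single j (x j))
    rw [hx] at h0
    simp only [Pi.zero_apply, st_zero hst.1, zero_mul, Finset.sum_const_zero] at h0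
    rw [Finset.sum_eq_single j, Pi.single_eq_same] at h0
    · exact psi_self_ne_zero h hj h0.symm
    · intro b _ hb
      rw [Pi.single_eq_of_ne hb, psi_zero_right h.1]
    · simp
  have : Module.Finite Dᵐᵒᵖ D := Module.Finite.equiv (opEquiv D).symm
  have h1 : Module.finrank Dᵐᵒᵖ D = 1 := by
    rw [(opEquiv D).finrank_eq, Module.finrank_self]
  have hdim : Module.finrank Dᵐᵒᵖ (Fin 4 → V) =
      Module.finrank Dᵐᵒᵖ (Fin 4 → Fin (Module.finrank Dᵐᵒᵖ V) → D) := by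
    simp [Module.finrank_pi_fintype, h1]
  exact ⟨LinearEquiv.ofInjectiveOfFinrankEq g hinj hdim, hg⟩

/-- The fourth powers of any two positive definite forms on `V` are isometric. -/
theorem fourth_power_isometric [FiniteDimensional ℚ D] [Module.Finite Dᵐᵒᵖ V]
    (hst : IsPositiveInvolutionQ D st) {ψ₁ ψ₂ : V → V → D} (h₁ : IsPosDefHermitianForm D V st ψ₁)
    (h₂ : IsPosDefHermitianForm D V st ψ₂) :
    ∃ f : (Fin 4 → V) ≃ₗ[Dᵐᵒᵖ] (Fin 4 → V),
      ∀ x y : Fin 4 → V, ∑ i, ψ₂ (f x i) (f y i) = ∑ i, ψ₁ (x i) (y i) := by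
  obtain ⟨g₁, hg₁⟩ := exists_isometry_standard hst h₁
  obtain ⟨g₂, hg₂⟩ := exists_isometry_standard hst h₂
  refine ⟨g₁.trans g₂.symm, fun x y ↦ ?_⟩
  rw [← hg₁, ← hg₂]
  simp

end HermitianForms
end FourthPower

/-- **Albert type II case of the fourth-power Hermitian form theorem**:
`D` is a totally indefinite quaternion division algebra over a totally real number
field `F`, with a positive involution fixing `F` pointwise. -/
theorem fourth_power_hermitian_form_type_II
    (F : Type*) [Field F] [NumberField F]
    (htotreal : ∀ (σ : F →+* ℂ) (x : F), (σ x).im = 0)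
    (D : Type*) [DivisionRing D] [CharZero D] [Algebra F D]
    [FiniteDimensional F D] [FiniteDimensional ℚ D]
    (hquat : Module.finrank F D = 4)
    (hcentral : Subalgebra.center F D = ⊥)
    (hindef : ∀ σ : F →+* ℝ,
      letI : Algebra F ℝ := σ.toAlgebra
      Nonempty ((ℝ ⊗[F] D) ≃ₐ[ℝ] Matrix (Fin 2) (Fin 2) ℝ))
    (st : D → D) (hst : IsPositiveInvolutionQ D st)
    (hstF : ∀ c : F, st (algebraMap F D c) = algebraMap F D c)
    (V : Type*) [AddCommGroup V] [Module Dᵐᵒᵖ V] [Nontrivial V] [Module.Finite Dᵐᵒᵖ V]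
    (ψ₁ ψ₂ : V → V → D)
    (h₁ : IsPosDefHermitianForm D V st ψ₁)
    (h₂ : IsPosDefHermitianForm D V st ψ₂) :
    ∃ f : (Fin 4 → V) ≃ₗ[Dᵐᵒᵖ] (Fin 4 → V),
      ∀ x y : Fin 4 → V, ∑ i, ψ₂ (f x i) (f y i) = ∑ i, ψ₁ (x i) (y i) := by
  exact FourthPower.fourth_power_isometric hst h₁ h₂
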